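/- Suppose the lattice operator H is stable and admits a lattice Green's function 𝒢, and let (G_n) be kernels with the properties of the Green's-function expansion (smooth on ℝ^d∖{0}, the stated homogeneity, and the finite-difference approximation bounds |D_{ρ⃗}𝒢(ℓ) − ∑_{n≤q} D_{ρ⃗}G_n(ℓ)| ≤ C_{j,q}⟨ℓ⟩^{−2q−d−j}). Let p, α ∈ ℕ₀, c > 0, and let u ∈ 𝓗¹ satisfy |H[u](ℓ)| ≤ c⟨ℓ⟩^{−d−p}(log⟨ℓ⟩)^α for all ℓ ∈ Λ. Then there exist symmetric tensors a^{(i,n,k)} ∈ (ℝ^d)^{⊗i} such that the remainder w̃ := u − ∑_{k=1}^{N} ∑_{n=0}^{⌊(p−1)/2⌋} ∑_{i=0}^{p−1−2n} a^{(i,n,k)} : ∇^i (G_n e_k) |_Λ (with the continuum terms set to 0 at ℓ = 0) satisfies, for each j ∈ {1,2}, |D^j w̃(ℓ)| ≤ C⟨ℓ⟩^{2−d−p−j}(log⟨ℓ⟩)^{α+1} for all ℓ ∈ Λ. For j ≥ 3 the same bound holds provided additionally |D^m H[u](ℓ)| ≤ c⟨ℓ⟩^{−d−p−m}(log⟨ℓ⟩)^α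 for m = 1,…,j−2. -/

import Mathlib

noncomputable section

open scoped BigOperators
open MeasureTheory Filter Topology

namespace Defect

abbrev Vec (n : ℕ) : Type := Fin n → ℝ

/-- Euclidean norm of a vector in `ℝ^n`. -/
def enorm {n : ℕ} (v : Vec n) : ℝ := Real.sqrt (∑ i, (v i) ^ 2)

/-- `⟨x⟩ := |x| + 2`. -/
def ang {n : ℕ} (v : Vec n) : ℝ := enorm v + 2

def dotV {n : ℕ} (x y : Vec n) : ℝ := ∑ i, x i * y i

/-- Matrix-vector product for a plain `Fin N → Fin N → ℝ` matrix. -/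
def mulV {N : ℕ} (M : Fin N → Fin N → ℝ) (v : Vec N) : Vec N := fun i => ∑ j, M i j * v j

/-- Euclidean (Frobenius) norm of an `N × N` array. -/
def mnorm {N : ℕ} (M : Fin N → Fin N → ℝ) : ℝ := Real.sqrt (∑ i, ∑ j, (M i j) ^ 2)

/-- The lattice point `A z` for `z ∈ ℤ^d`. -/
def latticePt (d : ℕ) (A : Matrix (Fin d) (Fin d) ℝ) (z : Fin d → ℤ) : Vec d :=
  fun i => ∑ j, A i j * (z j : ℝ)

/-- The Bravais lattice `Λ = A ℤ^d`. -/
def Lattice (d : ℕ) (A : Matrix (Fin d) (Fin d) ℝ) : Set (Vec d) :=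
  Set.range (latticePt d A)

/-- First-order finite difference `D_ρ u (ℓ) = u(ℓ+ρ) - u(ℓ)`. -/
def D1 {d : ℕ} {M : Type} [AddCommGroup M] (ρ : Vec d) (u : Vec d → M) (ℓ : Vec d) : M :=
  u (ℓ + ρ) - u ℓ

/-- Iterated finite difference `D_{ρ₁} ⋯ D_{ρ_j} u (ℓ)` (closed form). -/
def Dmulti {d : ℕ} {M : Type} [AddCommGroup M] [Module ℝ M] {j : ℕ}
    (ρs : Fin j → Vec d) (u : Vec d → M) (ℓ : Vec d) : M :=
  ∑ S : Finset (Fin j), ((-1 : ℝ) ^ (j - S.card)) • u (ℓ + ∑ i ∈ S, ρs i)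

/-- `|Du(ℓ)|²`, the squared Euclidean norm of the stencil of first differences. -/
def Dnorm1Sq {d N : ℕ} (R : Finset (Vec d)) (u : Vec d → Vec N) (ℓ : Vec d) : ℝ :=
  ∑ ρ ∈ R, (enorm (D1 ρ u ℓ)) ^ 2

/-- `|D^j u(ℓ)|`, the Euclidean norm of the array `(D_{ρ⃗} u(ℓ))_{ρ⃗ ∈ R^j}`. -/
def DnormJ {d N : ℕ} (R : Finset (Vec d)) (j : ℕ) (u : Vec d → Vec N) (ℓ : Vec d) : ℝ :=
  Real.sqrt (∑ ρs : Fin j → {x // x ∈ R},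
    (enorm (Dmulti (fun i => (ρs i : Vec d)) u ℓ)) ^ 2)

/-- The linearized lattice operator
`H[u](ℓ) = ∑_{σ,ρ∈R} (C_{σρ} D_ρ u(ℓ-σ) - C_{σρ} D_ρ u(ℓ))`. -/
def Hop (d N : ℕ) (R : Finset (Vec d)) (C : Vec d → Vec d → Fin N → Fin N → ℝ)
    (u : Vec d → Vec N) (ℓ : Vec d) : Vec N :=
  ∑ σ ∈ R, ∑ ρ ∈ R, (mulV (C σ ρ) (D1 ρ u (ℓ - σ)) - mulV (C σ ρ) (D1 ρ u ℓ))

/-- `u ∈ 𝓗¹`. -/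
def InH1 {d N : ℕ} (A : Matrix (Fin d) (Fin d) ℝ) (R : Finset (Vec d))
    (u : Vec d → Vec N) : Prop :=
  Summable fun z : Fin d → ℤ => Dnorm1Sq R u (latticePt d A z)

/-- `u ∈ 𝓗ᶜ` : the stencil `Du` has bounded support on the lattice. -/
def InHc {d N : ℕ} (A : Matrix (Fin d) (Fin d) ℝ) (R : Finset (Vec d))
    (u : Vec d → Vec N) : Prop :=
  ∃ rad : ℝ, ∀ z : Fin d → ℤ, rad ≤ enorm (latticePt d A z) →
    ∀ ρ ∈ R, D1 ρ u (latticePt d A z) = 0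

/-- Stability of the lattice operator `H`. -/
def IsStable (d N : ℕ) (A : Matrix (Fin d) (Fin d) ℝ) (R : Finset (Vec d))
    (C : Vec d → Vec d → Fin N → Fin N → ℝ) : Prop :=
  ∃ c₀ : ℝ, 0 < c₀ ∧ ∀ u : Vec d → Vec N, InHc A R u →
    c₀ * (∑' z : Fin d → ℤ, Dnorm1Sq R u (latticePt d A z)) ≤
      ∑' z : Fin d → ℤ, ∑ σ ∈ R, ∑ ρ ∈ R,
        dotV (D1 σ u (latticePt d A z)) (mulV (C σ ρ) (D1 ρ u (latticePt d A z)))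

/-- `k`-th column of a matrix-valued function. -/
def col {d N : ℕ} (G : Vec d → Fin N → Fin N → ℝ) (k : Fin N) : Vec d → Vec N :=
  fun x i => G x i k

/-- `|D^j 𝒢(ℓ)|` for matrix-valued `𝒢`. -/
def DnormJmat {d N : ℕ} (R : Finset (Vec d)) (j : ℕ)
    (G : Vec d → Fin N → Fin N → ℝ) (ℓ : Vec d) : ℝ :=
  Real.sqrt (∑ k : Fin N, (DnormJ R j (col G k) ℓ) ^ 2)

/-- `𝒢` is a lattice Green's function for `H`. -/
def IsLatticeGreen (d N : ℕ) (A : Matrix (Fin d) (Fin d) ℝ) (R : Finset (Vec d))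
    (C : Vec d → Vec d → Fin N → Fin N → ℝ) (G : Vec d → Fin N → Fin N → ℝ) : Prop :=
  (∀ (k : Fin N) (z : Fin d → ℤ),
      Hop d N R C (col G k) (latticePt d A z) =
        if latticePt d A z = 0 then Pi.single k 1 else 0) ∧
  (∀ j : ℕ, 1 ≤ j → ∃ cj : ℝ, ∀ z : Fin d → ℤ,
      DnormJmat R j G (latticePt d A z) ≤
        cj * ang (latticePt d A z) ^ ((2 : ℝ) - d - j))

/-- A symmetric array `b ∈ (ℝ^{Fin d})^{⊙ i}`. -/
def SymArr {d i : ℕ} (b : (Fin i → Fin d) → ℝ) : Prop :=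
  ∀ (π : Equiv.Perm (Fin i)) (σv : Fin i → Fin d), b (σv ∘ π) = b σv

/-- `b : D_𝒮^i f`, a multipole term built from the basis `s`. -/
def multipole (d N : ℕ) (s : Fin d → Vec d) (i : ℕ) (b : (Fin i → Fin d) → ℝ)
    (f : Vec d → Vec N) : Vec d → Vec N :=
  fun ℓ => ∑ σv : Fin i → Fin d, b σv • Dmulti (fun m => s (σv m)) f ℓ

/-- Iterated partial derivative `∂_{j₁} ⋯ ∂_{j_i} f (x)`. -/
def pderivMulti {d : ℕ} (i : ℕ) (js : Fin i → Fin d) (f : Vec d → ℝ) (x : Vec d) : ℝ :=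
  iteratedFDeriv ℝ i f x (fun m => Pi.single (js m) (1 : ℝ))

/-- `a : ∇^i f (x)` for a tensor `a ∈ (ℝ^d)^{⊗ i}`. -/
def aContract {d : ℕ} (i : ℕ) (a : (Fin i → Fin d) → ℝ) (f : Vec d → ℝ) (x : Vec d) : ℝ :=
  ∑ js : Fin i → Fin d, a js * pderivMulti i js f x

/-- Elementary tensor `σ⃗^⊗` as an array. -/
def tensorPow {d k : ℕ} (σs : Fin k → Vec d) : (Fin k → Fin d) → ℝ :=
  fun js => ∏ m, σs m (js m)

/-- Symmetric tensor product `σ⃗^⊙`. -/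
def symTensor {d k : ℕ} (σs : Fin k → Vec d) : (Fin k → Fin d) → ℝ :=
  fun js => ((k.factorial : ℝ))⁻¹ * ∑ π : Equiv.Perm (Fin k), tensorPow (σs ∘ π) js

/-- A symmetric tensor (array invariant under index permutations). -/
def SymTensor {d k : ℕ} (T : (Fin k → Fin d) → ℝ) : Prop :=
  ∀ (π : Equiv.Perm (Fin k)) (js : Fin k → Fin d), T (js ∘ π) = T js

/-- `∂V/∂g_ρ (gs)` as a vector in `ℝ^N`. -/
def gradV {d N : ℕ} (R : Finset (Vec d)) (V : ({x // x ∈ R} → Vec N) → ℝ)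
    (ρ : {x // x ∈ R}) (gs : {x // x ∈ R} → Vec N) : Vec N :=
  fun i => fderiv ℝ V gs (Pi.single ρ (Pi.single i 1))

/-- The finite-difference stencil `Du(ℓ) = (D_ρ u(ℓ))_{ρ ∈ R}`. -/
def Dstencil {d N : ℕ} (R : Finset (Vec d)) (u : Vec d → Vec N) (ℓ : Vec d) :
    {x // x ∈ R} → Vec N :=
  fun ρ => D1 (ρ : Vec d) u ℓ

/-- `C_{σρ} = ∂²V/∂g_σ ∂g_ρ (0)`. -/
def CofV {d N : ℕ} (R : Finset (Vec d)) (V : ({x // x ∈ R} → Vec N) → ℝ)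
    (σ ρ : Vec d) (i j : Fin N) : ℝ :=
  if hσ : σ ∈ R then
    if hρ : ρ ∈ R then
      iteratedFDeriv ℝ 2 V 0
        ![Pi.single ⟨σ, hσ⟩ (Pi.single i 1), Pi.single ⟨ρ, hρ⟩ (Pi.single j 1)]
    else 0
  else 0

/-- Summand of the first variation `δE(u)[v]` at a site. -/
def deltaEsite {d N : ℕ} (R : Finset (Vec d)) (V : ({x // x ∈ R} → Vec N) → ℝ)
    (u v : Vec d → Vec N) (ℓ : Vec d) : ℝ :=
  ∑ ρ ∈ R.attach, dotV (gradV R V ρ (Dstencil R u ℓ)) (D1 (ρ : Vec d) v ℓ)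

/-- The pointwise atomistic force `δE(u)(ℓ)`. -/
def deltaEpt {d N : ℕ} (R : Finset (Vec d)) (V : ({x // x ∈ R} → Vec N) → ℝ)
    (u : Vec d → Vec N) (ℓ : Vec d) : Vec N :=
  ∑ ρ ∈ R.attach,
    (gradV R V ρ (Dstencil R u (ℓ - (ρ : Vec d))) - gradV R V ρ (Dstencil R u ℓ))

/-- Point symmetry of the site potential. -/
def PointSym {d N : ℕ} (R : Finset (Vec d)) (hRsym : ∀ ρ ∈ R, -ρ ∈ R)
    (V : ({x // x ∈ R} → Vec N) → ℝ) : Prop :=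
  ∀ gs : {x // x ∈ R} → Vec N,
    V (fun ρ => -(gs ⟨-(ρ : Vec d), hRsym _ ρ.2⟩)) = V gs

/-- The Cauchy–Born elasticity tensor `ℂ_{iajb}`. -/
def CB {d N : ℕ} (A : Matrix (Fin d) (Fin d) ℝ) (R : Finset (Vec d))
    (C : Vec d → Vec d → Fin N → Fin N → ℝ)
    (i : Fin N) (a : Fin d) (j : Fin N) (b : Fin d) : ℝ :=
  (|A.det|)⁻¹ * ∑ ρ ∈ R, ∑ σ ∈ R, C ρ σ i j * ρ a * σ b

/-- Positive homogeneity of degree `deg` (away from the origin). -/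
def PosHomMat {d N : ℕ} (f : Vec d → Fin N → Fin N → ℝ) (deg : ℝ) : Prop :=
  ∀ t : ℝ, 0 < t → ∀ x : Vec d, x ≠ 0 → ∀ i k, f (t • x) i k = t ^ deg * f x i k

/-- The defining properties of the continuum kernel family `(G_n)`. -/
def KernelFamily (d N : ℕ) (A : Matrix (Fin d) (Fin d) ℝ) (R : Finset (Vec d))
    (G : Vec d → Fin N → Fin N → ℝ) (Gn : ℕ → Vec d → Fin N → Fin N → ℝ) : Prop :=
  (∀ n : ℕ, ContDiffOn ℝ (⊤ : ℕ∞) (Gn n) {x : Vec d | x ≠ 0}) ∧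
  (∀ n : ℕ, 1 ≤ n ∨ 3 ≤ d →
      PosHomMat (Gn n) ((2 : ℝ) - 2 * n - d)) ∧
  (d = 2 → ∃ (M : Fin N → Fin N → ℝ) (φ : Vec d → Fin N → Fin N → ℝ),
      ContDiffOn ℝ (⊤ : ℕ∞) φ {x : Vec d | x ≠ 0} ∧ PosHomMat φ 0 ∧
      ∀ x : Vec d, x ≠ 0 → ∀ i k,
        Gn 0 x i k = M i k * Real.log (enorm x) + φ x i k) ∧
  (∀ j p : ℕ, ∃ Cjp : ℝ, ∀ (ρs : Fin j → {x // x ∈ R}) (z : Fin d → ℤ),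
      (∀ S : Finset (Fin j), latticePt d A z + ∑ i ∈ S, (ρs i : Vec d) ≠ 0) →
      mnorm (Dmulti (fun m => (ρs m : Vec d))
          (fun x i k => G x i k - ∑ n ∈ Finset.range (p + 1), Gn n x i k)
          (latticePt d A z)) ≤
        Cjp * ang (latticePt d A z) ^ (-(2 : ℝ) * p - d - j))

/-- Iterated finite differences along a list of steps. -/
def dl {X M : Type} [AddCommGroup X] [AddCommGroup M] : List X → (X → M) → X → M
  | [], f => f
  | ρ :: l, f => dl l (fun x => f (x + ρ) - f x)

section dlbasic
variable {X Y M M' : Type} [AddCommGroup X] [AddCommGroup Y] [AddCommGroup M] [AddCommGroup M']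

theorem dl_nil (f : X → M) : dl [] f = f := rfl
theorem dl_cons' (ρ : X) (l : List X) (f : X → M) :
    dl (ρ :: l) f = dl l (fun x => f (x + ρ) - f x) := rfl

theorem dl_sub (l : List X) (f g : X → M) (x : X) :
    dl l (fun y => f y - g y) x = dl l f x - dl l g x := by
  induction l generalizing f g with
  | nil => rfl
  | cons ρ l ih =>
    simp only [dl_cons']
    rw [← ih]
    congr 1; funext y; abel

theorem dl_add (l : List X) (f g : X → M) (x : X) :
    dl l (fun y => f y + g y) x = dl l f x + dl l g x := by
  induction l generalizing f g with
  | nil => rfl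
  | cons ρ l ih =>
    simp only [dl_cons']
    rw [← ih]
    congr 1; funext y; abel

theorem dl_map (T : M →+ M') (l : List X) (f : X → M) (x : X) :
    dl l (fun y => T (f y)) x = T (dl l f x) := by
  induction l generalizing f with
  | nil => rfl
  | cons ρ l ih =>
    simp only [dl_cons']
    rw [← ih]
    congr 1; funext y; simp

theorem dl_zero (l : List X) (x : X) : dl l (fun _ => (0 : M)) x = 0 := by
  simpa using dl_map (0 : M →+ M) l (fun _ => 0) x

theorem dl_sum {ι : Type*} (s : Finset ι) (l : List X) (f : ι → X → M) (x : X) :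
    dl l (fun y => ∑ i ∈ s, f i y) x = ∑ i ∈ s, dl l (f i) x := by
  classical
  induction s using Finset.induction_on with
  | empty => simpa using dl_zero l x
  | insert a s ha ih =>
    simp only [Finset.sum_insert ha]
    rw [dl_add, ih]

theorem dl_shift (l : List X) (f : X → M) (a x : X) :
    dl l (fun y => f (y + a)) x = dl l f (x + a) := by
  induction l generalizing f with
  | nil => rfl
  | cons ρ l ih =>
    simp only [dl_cons']
    rw [← ih]
    congr 1; funext y
    rw [add_right_comm]

theorem dl_cons (ρ : X) (l : List X) (f : X → M) (x : X) :
    dl (ρ :: l) f x = dl l f (x + ρ) - dl l f x := by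
  rw [dl_cons', dl_sub, dl_shift]

theorem dl_append (l l' : List X) (f : X → M) : dl (l ++ l') f = dl l' (dl l f) := by
  induction l generalizing f with
  | nil => rfl
  | cons ρ l ih => simp only [List.cons_append, dl_cons', ih]

theorem dl_comp (φ : X →+ Y) (l : List X) (f : Y → M) (x : X) :
    dl (l.map φ) f (φ x) = dl l (fun z => f (φ z)) x := by
  induction l generalizing f with
  | nil => rfl
  | cons ρ l ih =>
    simp only [List.map_cons, dl_cons', ih, map_add]

/-- stencil of a list of steps -/
def st : List X → Set X
  | [] => {0}
  | ρ :: l => st l ∪ (fun y => y + ρ) '' st l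

theorem dl_congr (l : List X) (f g : X → M) (x : X) (h : ∀ y ∈ st l, f (x + y) = g (x + y)) :
    dl l f x = dl l g x := by
  induction l generalizing f g with
  | nil => simpa [st, dl] using h
  | cons ρ l ih =>
    simp only [dl_cons']
    apply ih
    intro y hy
    have h1 := h y (Or.inl hy)
    have h2 := h (y + ρ) (Or.inr ⟨y, hy, rfl⟩)
    rw [h1, add_assoc, h2]

theorem st_norm (ν : X → ℝ) (hν0 : ν 0 = 0) (hνn : ∀ x, 0 ≤ ν x)
    (hν : ∀ x y, ν (x + y) ≤ ν x + ν y) (l : List X) :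
    ∀ y ∈ st l, ν y ≤ (l.map ν).sum := by
  induction l with
  | nil => simp [st, hν0]
  | cons ρ l ih =>
    rintro y (hy | ⟨y, hy, rfl⟩)
    · have := ih y hy
      have := hνn ρ
      simp; linarith
    · have := ih y hy
      have := hν y ρ
      simp; linarith

end dlbasic

theorem sum_finset_fin_succ {M : Type} [AddCommGroup M] (j : ℕ) (F : Finset (Fin (j+1)) → M) :
    ∑ S, F S = ∑ S : Finset (Fin j), F (S.map (Fin.succEmb j)) +
      ∑ S : Finset (Fin j), F (insert 0 (S.map (Fin.succEmb j))) := by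
  have huniv : (Finset.univ : Finset (Finset (Fin (j+1)))) =
      (insert 0 ((Finset.univ : Finset (Fin j)).map (Fin.succEmb j))).powerset := by
    ext S
    simp only [Finset.mem_univ, Finset.mem_powerset, true_iff]
    intro x _
    refine Fin.cases ?_ (fun y => ?_) x <;> simp
  have h2 : ((Finset.univ : Finset (Fin j)).map (Fin.succEmb j)).powerset =
      (Finset.univ : Finset (Finset (Fin j))).map (Finset.mapEmbedding (Fin.succEmb j)).toEmbedding := by
    ext S
    simp only [Finset.mem_powerset, Finset.mem_map, Finset.subset_map_iff]
    constructor
    · rintro ⟨u, _, rfl⟩; exact ⟨u, Finset.mem_univ _, rfl⟩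
    · rintro ⟨u, _, rfl⟩; exact ⟨u, Finset.subset_univ _, rfl⟩
  rw [huniv, Finset.sum_powerset_insert (by simp [Fin.succ_ne_zero]), h2]
  simp [Finset.mapEmbedding_apply]

theorem Dmulti_eq_dl {d : ℕ} {M : Type} [AddCommGroup M] [Module ℝ M] {j : ℕ}
    (ρs : Fin j → Vec d) (u : Vec d → M) (ℓ : Vec d) :
    Dmulti ρs u ℓ = dl (List.ofFn ρs) u ℓ := by
  induction j generalizing u ℓ with
  | zero =>
    simp only [Dmulti, List.ofFn_zero, dl]
    rw [Fintype.sum_unique]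
    have : (default : Finset (Fin 0)) = ∅ := rfl
    simp [this]
  | succ j ih =>
    rw [List.ofFn_succ, dl_cons, ← ih, ← ih]
    unfold Dmulti
    rw [sum_finset_fin_succ, ← sub_eq_zero, ← Finset.sum_sub_distrib,
      ← Finset.sum_add_distrib, ← Finset.sum_sub_distrib]
    apply Finset.sum_eq_zero
    intro S _
    have h0 : (0 : Fin (j+1)) ∉ S.map (Fin.succEmb j) := by
      simp [Fin.succ_ne_zero]
    have hc : S.card ≤ j := by simpa using Finset.card_le_univ S
    rw [Finset.card_insert_of_notMem h0, Finset.sum_insert h0, Finset.card_map, Finset.sum_map]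
    simp only [Fin.coe_succEmb]
    have e1 : j + 1 - S.card = (j - S.card) + 1 := by omega
    have e2 : j + 1 - (S.card + 1) = (j - S.card) := by omega
    rw [e1, e2, pow_succ, add_assoc]
    module

/-- abstract bracket on a group of growth `d` -/
structure Brk (X : Type) [AddCommGroup X] (d : ℕ) (b : X → ℝ) : Prop where
  two_le : ∀ x, 2 ≤ b x
  neg : ∀ x, b (-x) = b x
  add_le : ∀ x y, b (x + y) ≤ b x + b y
  count : ∃ K : ℝ, 0 < K ∧ ∀ r : ℝ, 0 ≤ r → ∀ F : Finset X, (∀ x ∈ F, b x ≤ r) →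
    (F.card : ℝ) ≤ K * r ^ d

theorem shell_sum {X : Type} (F : Finset X) (g : X → ℝ) (w : X → ℕ) (M : ℕ) (a c : ℕ → ℝ)
    (ha : ∀ k, 0 ≤ a k)
    (hM : ∀ x ∈ F, w x < M) (hg : ∀ x ∈ F, g x ≤ a (w x))
    (hc : ∀ k, ∀ F' ⊆ F, (∀ x ∈ F', w x = k) → (F'.card : ℝ) ≤ c k) :
    ∑ x ∈ F, g x ≤ ∑ k ∈ Finset.range M, a k * c k := by
  classical
  rw [← Finset.sum_fiberwise_of_maps_to (s := F) (t := Finset.range M) (g := w)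
    (fun x hx => Finset.mem_range.2 (hM x hx))]
  apply Finset.sum_le_sum
  intro k _
  have h1 : ∑ x ∈ F with w x = k, g x ≤ ∑ x ∈ F with w x = k, a k := by
    apply Finset.sum_le_sum
    intro x hx
    rw [Finset.mem_filter] at hx
    rw [← hx.2]; exact hg x hx.1
  refine h1.trans ?_
  rw [Finset.sum_const, nsmul_eq_mul, mul_comm]
  apply mul_le_mul_of_nonneg_left _ (ha k)
  apply hc k _ (Finset.filter_subset _ _)
  intro x hx
  exact (Finset.mem_filter.1 hx).2

theorem log_ratio (α : ℕ) (ε : ℝ) (hε : 0 < ε) : ∃ C : ℝ, 0 < C ∧ ∀ r x : ℝ, 2 ≤ r → r ≤ x →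
    Real.log x ^ α ≤ C * (x / r) ^ ε * Real.log r ^ α := by
  have hl2 : 0 < Real.log 2 := Real.log_pos (by norm_num)
  set δ : ℝ := ε / (α + 1) with hδ
  have hδ0 : 0 < δ := by positivity
  refine ⟨(1 + 1 / (δ * Real.log 2)) ^ α, by positivity, fun r x hr hx => ?_⟩
  have hr0 : 0 < r := by linarith
  have ht : 1 ≤ x / r := by rw [le_div_iff₀ hr0]; linarith
  have hlr : Real.log 2 ≤ Real.log r := Real.log_le_log (by norm_num) hr
  have htd : 1 ≤ (x / r) ^ δ := Real.one_le_rpow ht hδ0.le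
  have h1 : Real.log x ≤ (1 + 1 / (δ * Real.log 2)) * (x / r) ^ δ * Real.log r := by
    have e : Real.log x = Real.log r + Real.log (x / r) := by
      rw [Real.log_div (by linarith) (by linarith)]; ring
    have h2 := Real.log_le_rpow_div (x := x / r) (by linarith) hδ0
    have h3 : (x / r) ^ δ / δ ≤ (1 / (δ * Real.log 2)) * (x / r) ^ δ * Real.log r := by
      have : (1 / (δ * Real.log 2)) * (x / r) ^ δ * Real.log r
        = (x / r) ^ δ / δ * (Real.log r / Real.log 2) := by field_simp
      rw [this]
      apply le_mul_of_one_le_right (by positivity)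
      rw [le_div_iff₀ hl2]; linarith
    have h4 : Real.log r ≤ (x / r) ^ δ * Real.log r :=
      le_mul_of_one_le_left (by linarith) htd
    rw [e]; nlinarith
  have hx0 : 0 ≤ Real.log x := Real.log_nonneg (by linarith)
  calc Real.log x ^ α ≤ ((1 + 1 / (δ * Real.log 2)) * (x / r) ^ δ * Real.log r) ^ α :=
        pow_le_pow_left₀ hx0 h1 α
    _ = (1 + 1 / (δ * Real.log 2)) ^ α * ((x / r) ^ δ) ^ α * Real.log r ^ α := by
        rw [mul_pow, mul_pow]
    _ ≤ _ := by
        have hlr0 : 0 ≤ Real.log r := by linarith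
        gcongr
        rw [← Real.rpow_natCast, ← Real.rpow_mul (by positivity)]
        apply Real.rpow_le_rpow_of_exponent_le ht
        rw [hδ, div_mul_eq_mul_div, div_le_iff₀ (by positivity)]
        nlinarith

theorem comparable (K : ℝ) (hK : 1 ≤ K) (a : ℝ) (α : ℕ) : ∃ C : ℝ, 0 < C ∧ ∀ x y : ℝ, 2 ≤ x → 2 ≤ y →
    x ≤ K * y → y ≤ K * x →
    x ^ a * Real.log x ^ α ≤ C * (y ^ a * Real.log y ^ α) := by
  have hl2 : 0 < Real.log 2 := Real.log_pos (by norm_num)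
  have hlK : 0 ≤ Real.log K := Real.log_nonneg hK
  refine ⟨K ^ |a| * (1 + Real.log K / Real.log 2) ^ α, by positivity, fun x y hx hy hxy hyx => ?_⟩
  have hx0 : 0 < x := by linarith
  have hy0 : 0 < y := by linarith
  have h1 : x ^ a ≤ K ^ |a| * y ^ a := by
    rcases le_total 0 a with h | h
    · rw [abs_of_nonneg h, ← Real.mul_rpow (by linarith) hy0.le]
      exact Real.rpow_le_rpow hx0.le hxy h
    · rw [abs_of_nonpos h]
      have : y / K ≤ x := by rw [div_le_iff₀ (by linarith)]; linarith
      calc x ^ a ≤ (y / K) ^ a := Real.rpow_le_rpow_of_nonpos (by positivity) this h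
        _ = K ^ (-a) * y ^ a := by
          rw [Real.div_rpow hy0.le (by linarith), Real.rpow_neg (by linarith)]; field_simp
  have hly : Real.log 2 ≤ Real.log y := Real.log_le_log (by norm_num) hy
  have h2 : Real.log x ≤ (1 + Real.log K / Real.log 2) * Real.log y := by
    have : Real.log x ≤ Real.log K + Real.log y := by
      rw [← Real.log_mul (by linarith) (by linarith)]
      exact Real.log_le_log hx0 hxy
    have h3 : Real.log K ≤ Real.log K / Real.log 2 * Real.log y := by
      rw [div_mul_eq_mul_div, le_div_iff₀ hl2]
      exact mul_le_mul_of_nonneg_left hly hlK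
    linarith
  have h3 := pow_le_pow_left₀ (Real.log_nonneg (by linarith)) h2 α
  calc x ^ a * Real.log x ^ α ≤ (K ^ |a| * y ^ a) * ((1 + Real.log K / Real.log 2) * Real.log y) ^ α := by
        apply mul_le_mul h1 h3 (pow_nonneg (Real.log_nonneg (by linarith)) _) (by positivity)
    _ = _ := by rw [mul_pow]; ring

namespace Brk
variable {X : Type} [AddCommGroup X] {d : ℕ} {b : X → ℝ}

theorem pos (hb : Brk X d b) (x : X) : 0 < b x := by linarith [hb.two_le x]

theorem tail0 (hb : Brk X d b) (s : ℝ) (hs : 0 < s) : ∃ C : ℝ, 0 < C ∧ ∀ r : ℝ, 0 < r →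
    ∀ F : Finset X, (∀ x ∈ F, r ≤ b x) → ∑ x ∈ F, b x ^ (-(d : ℝ) - s) ≤ C * r ^ (-s) := by
  obtain ⟨K, hK, hcount⟩ := hb.count
  set q : ℝ := (2 : ℝ) ^ (-s) with hq
  have hq0 : 0 < q := by positivity
  have hq1 : q < 1 := Real.rpow_lt_one_of_one_lt_of_neg (by norm_num) (by linarith)
  refine ⟨K * 2 ^ d * (1 - q)⁻¹, by have : 0 < 1 - q := by linarith
                                    positivity, fun r hr F hF => ?_⟩
  have hw : ∀ x : X, ∃ n : ℕ, r ≤ b x → (2 : ℝ) ^ n ≤ b x / r ∧ b x / r < 2 ^ (n + 1) := by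
    intro x
    by_cases h : r ≤ b x
    · obtain ⟨n, h1, h2⟩ := exists_nat_pow_near (x := b x / r) (y := 2)
        (by rw [le_div_iff₀ hr]; linarith) (by norm_num)
      exact ⟨n, fun _ => ⟨h1, h2⟩⟩
    · exact ⟨0, fun h' => absurd h' h⟩
  choose w hw using hw
  have key := shell_sum F (fun x => b x ^ (-(d : ℝ) - s)) w (F.sup w + 1)
    (fun k => (r * 2 ^ k) ^ (-(d : ℝ) - s)) (fun k => K * (r * 2 ^ (k + 1)) ^ d)
    (fun k => by positivity)
    (fun x hx => Nat.lt_succ_of_le (Finset.le_sup hx))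
    (fun x hx => by
      have h1 := (hw x (hF x hx)).1
      rw [le_div_iff₀ hr] at h1
      apply Real.rpow_le_rpow_of_nonpos (by positivity) (by linarith)
      have : (0 : ℝ) ≤ d := by positivity
      linarith)
    (fun k F' hF' hk => by
      apply hcount _ (by positivity)
      intro x hx
      have h1 := (hw x (hF x (hF' hx))).2
      rw [div_lt_iff₀ hr, hk x hx] at h1
      linarith)
  refine key.trans ?_
  have e : ∀ k : ℕ, (r * 2 ^ k) ^ (-(d : ℝ) - s) * (K * (r * 2 ^ (k + 1)) ^ d) =
      K * 2 ^ d * r ^ (-s) * q ^ k := by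
    intro k
    have h0 : (0 : ℝ) < r * 2 ^ k := by positivity
    have h2 : (r * 2 ^ (k + 1)) ^ d = 2 ^ d * (r * 2 ^ k) ^ d := by
      rw [← mul_pow]; congr 1; ring
    have h3 : (r * 2 ^ k) ^ (-(d : ℝ) - s) * (r * 2 ^ k) ^ d = (r * 2 ^ k) ^ (-s) := by
      rw [← Real.rpow_natCast (r * 2 ^ k) d, ← Real.rpow_add h0]; congr 1; ring
    have h4 : (r * 2 ^ k) ^ (-s) = r ^ (-s) * q ^ k := by
      rw [Real.mul_rpow hr.le (by positivity), hq, ← Real.rpow_natCast, ← Real.rpow_natCast,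
        ← Real.rpow_mul (by norm_num), ← Real.rpow_mul (by norm_num), mul_comm (k : ℝ)]
    rw [h2]
    calc _ = K * 2 ^ d * ((r * 2 ^ k) ^ (-(d : ℝ) - s) * (r * 2 ^ k) ^ d) := by ring
      _ = _ := by rw [h3, h4]; ring
  rw [Finset.sum_congr rfl (fun k _ => e k), ← Finset.mul_sum]
  have h5 : ∑ k ∈ Finset.range (F.sup w + 1), q ^ k ≤ (1 - q)⁻¹ := by
    rw [← tsum_geometric_of_lt_one hq0.le hq1]
    exact (summable_geometric_of_lt_one hq0.le hq1).sum_le_tsum _ (fun _ _ => by positivity)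
  calc _ ≤ K * 2 ^ d * r ^ (-s) * (1 - q)⁻¹ := by gcongr
    _ = _ := by ring

theorem tail (hb : Brk X d b) (s : ℝ) (hs : 0 < s) (α : ℕ) : ∃ C : ℝ, 0 < C ∧ ∀ r : ℝ, 2 ≤ r →
    ∀ F : Finset X, (∀ x ∈ F, r ≤ b x) →
    ∑ x ∈ F, b x ^ (-(d : ℝ) - s) * Real.log (b x) ^ α ≤ C * (r ^ (-s) * Real.log r ^ α) := by
  obtain ⟨C, hC, h1⟩ := hb.tail0 (s / 2) (by linarith)
  obtain ⟨C', hC', h2⟩ := log_ratio α (s / 2) (by linarith)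
  refine ⟨C' * C, by positivity, fun r hr F hF => ?_⟩
  have hr0 : 0 < r := by linarith
  have hlr : 0 ≤ Real.log r := Real.log_nonneg (by linarith)
  have h3 : ∀ x ∈ F, b x ^ (-(d : ℝ) - s) * Real.log (b x) ^ α ≤
      C' * r ^ (-(s / 2)) * Real.log r ^ α * b x ^ (-(d : ℝ) - s / 2) := by
    intro x hx
    have hbx := hb.pos x
    have := h2 r (b x) hr (hF x hx)
    calc _ ≤ b x ^ (-(d : ℝ) - s) * (C' * (b x / r) ^ (s / 2) * Real.log r ^ α) := by gcongr
      _ = C' * r ^ (-(s / 2)) * Real.log r ^ α * (b x ^ (-(d : ℝ) - s) * b x ^ (s / 2)) := by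
        rw [Real.div_rpow hbx.le hr0.le, Real.rpow_neg hr0.le]; field_simp
      _ = _ := by rw [← Real.rpow_add hbx]; congr 2; ring
  refine (Finset.sum_le_sum h3).trans ?_
  rw [← Finset.mul_sum]
  calc _ ≤ C' * r ^ (-(s / 2)) * Real.log r ^ α * (C * r ^ (-(s / 2))) := by
        gcongr; exact h1 r hr0 F hF
    _ = C' * C * ((r ^ (-(s / 2)) * r ^ (-(s / 2))) * Real.log r ^ α) := by ring
    _ = _ := by rw [← Real.rpow_add hr0]; congr 4; ring

theorem low_idx (r y : ℝ) (hy : 0 < y) : ∃ n : ℕ, y ≤ r →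
    (y ≤ r / 2 ^ n ∧ r / 2 ^ (n + 1) < y) := by
  by_cases h : y ≤ r
  · obtain ⟨n, h1, h2⟩ := exists_nat_pow_near (x := r / y) (y := 2)
      (by rw [le_div_iff₀ hy]; linarith) (by norm_num)
    refine ⟨n, fun _ => ⟨?_, ?_⟩⟩
    · rw [le_div_iff₀ hy] at h1
      rw [le_div_iff₀ (by positivity)]; linarith
    · rw [div_lt_iff₀ hy] at h2
      rw [div_lt_iff₀ (by positivity)]; linarith
  · exact ⟨0, fun h' => absurd h' h⟩

theorem low1 (hb : Brk X d b) (hd : 1 ≤ d) : ∃ C : ℝ, 0 < C ∧ ∀ r : ℝ, 0 < r →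
    ∀ F : Finset X, (∀ x ∈ F, b x ≤ r) → ∑ x ∈ F, b x ^ ((1 : ℝ) - d) ≤ C * r := by
  obtain ⟨K, hK, hcount⟩ := hb.count
  refine ⟨K * 2 ^ d, by positivity, fun r hr F hF => ?_⟩
  choose w hw using fun x => low_idx r (b x) (hb.pos x)
  have hd' : (1 : ℝ) ≤ d := by exact_mod_cast hd
  have key := shell_sum F (fun x => b x ^ ((1 : ℝ) - d)) w (F.sup w + 1)
    (fun k => (r / 2 ^ (k + 1)) ^ ((1 : ℝ) - d)) (fun k => K * (r / 2 ^ k) ^ d)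
    (fun k => by positivity)
    (fun x hx => Nat.lt_succ_of_le (Finset.le_sup hx))
    (fun x hx => by
      have h1 := (hw x (hF x hx)).2
      apply Real.rpow_le_rpow_of_nonpos (by positivity) (by linarith)
      linarith)
    (fun k F' hF' hk => by
      apply hcount _ (by positivity)
      intro x hx
      have h1 := (hw x (hF x (hF' hx))).1
      rwa [hk x hx] at h1)
  refine key.trans ?_
  have e : ∀ k : ℕ, (r / 2 ^ (k + 1)) ^ ((1 : ℝ) - d) * (K * (r / 2 ^ k) ^ d) =
      K * 2 ^ d * r * (1 / 2 * (1 / 2) ^ k) := by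
    intro k
    have h0 : (0 : ℝ) < r / 2 ^ (k + 1) := by positivity
    have h2 : (r / 2 ^ k) ^ d = 2 ^ d * (r / 2 ^ (k + 1)) ^ d := by
      rw [← mul_pow]; congr 1; rw [pow_succ]; field_simp
    have h3 : (r / 2 ^ (k + 1)) ^ ((1 : ℝ) - d) * (r / 2 ^ (k + 1)) ^ d = (r / 2 ^ (k + 1)) := by
      rw [← Real.rpow_natCast (r / 2 ^ (k + 1)) d, ← Real.rpow_add h0]; simp
    rw [h2]
    calc _ = K * 2 ^ d * ((r / 2 ^ (k + 1)) ^ ((1 : ℝ) - d) * (r / 2 ^ (k + 1)) ^ d) := by ring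
      _ = _ := by rw [h3, one_div_pow, pow_succ]; field_simp
  rw [Finset.sum_congr rfl (fun k _ => e k), ← Finset.mul_sum, ← Finset.mul_sum]
  have h5 : ∑ k ∈ Finset.range (F.sup w + 1), ((1 : ℝ) / 2) ^ k ≤ 2 := by
    have h6 := (summable_geometric_two).sum_le_tsum (Finset.range (F.sup w + 1))
      (fun _ _ => by positivity)
    rwa [tsum_geometric_two] at h6
  calc _ ≤ K * 2 ^ d * r * (1 / 2 * 2) := by gcongr
    _ = _ := by ring

theorem low0 (hb : Brk X d b) : ∃ C : ℝ, 0 < C ∧ ∀ r : ℝ, 2 ≤ r →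
    ∀ F : Finset X, (∀ x ∈ F, b x ≤ r) → ∑ x ∈ F, b x ^ (-(d : ℝ)) ≤ C * Real.log r := by
  obtain ⟨K, hK, hcount⟩ := hb.count
  have hl2 : 0 < Real.log 2 := Real.log_pos (by norm_num)
  refine ⟨K * 2 ^ d / Real.log 2, by positivity, fun r hr2 F hF => ?_⟩
  have hr : 0 < r := by linarith
  choose w hw using fun x => low_idx r (b x) (hb.pos x)
  have hwb : ∀ x ∈ F, ((w x + 1 : ℕ) : ℝ) ≤ Real.log r / Real.log 2 := by
    intro x hx
    have h1 := (hw x (hF x hx)).1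
    have h2 := hb.two_le x
    have h3 : (2 : ℝ) ^ (w x + 1) ≤ r := by
      have := h2.trans h1
      rw [le_div_iff₀ (by positivity)] at this
      rw [pow_succ]; linarith
    rw [le_div_iff₀ hl2]
    have := Real.log_le_log (by positivity) h3
    rwa [Real.log_pow] at this
  have key := shell_sum F (fun x => b x ^ (-(d : ℝ))) w (⌊Real.log r / Real.log 2⌋₊)
    (fun k => (r / 2 ^ (k + 1)) ^ (-(d : ℝ))) (fun k => K * (r / 2 ^ k) ^ d)
    (fun k => by positivity)
    (fun x hx => Nat.le_floor (hwb x hx))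
    (fun x hx => by
      have h1 := (hw x (hF x hx)).2
      apply Real.rpow_le_rpow_of_nonpos (by positivity) (by linarith)
      simp)
    (fun k F' hF' hk => by
      apply hcount _ (by positivity)
      intro x hx
      have h1 := (hw x (hF x (hF' hx))).1
      rwa [hk x hx] at h1)
  refine key.trans ?_
  have e : ∀ k : ℕ, (r / 2 ^ (k + 1)) ^ (-(d : ℝ)) * (K * (r / 2 ^ k) ^ d) =
      K * 2 ^ d := by
    intro k
    have h0 : (0 : ℝ) < r / 2 ^ (k + 1) := by positivity
    have h2 : (r / 2 ^ k) ^ d = 2 ^ d * (r / 2 ^ (k + 1)) ^ d := by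
      rw [← mul_pow]; congr 1; rw [pow_succ]; field_simp
    have h3 : (r / 2 ^ (k + 1)) ^ (-(d : ℝ)) * (r / 2 ^ (k + 1)) ^ d = 1 := by
      rw [← Real.rpow_natCast (r / 2 ^ (k + 1)) d, ← Real.rpow_add h0]; simp
    rw [h2]
    calc _ = K * 2 ^ d * ((r / 2 ^ (k + 1)) ^ (-(d : ℝ)) * (r / 2 ^ (k + 1)) ^ d) := by ring
      _ = _ := by rw [h3]; ring
  rw [Finset.sum_congr rfl (fun k _ => e k), Finset.sum_const, Finset.card_range, nsmul_eq_mul]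
  have h5 : (⌊Real.log r / Real.log 2⌋₊ : ℝ) ≤ Real.log r / Real.log 2 :=
    Nat.floor_le (div_nonneg (Real.log_nonneg (by linarith)) hl2.le)
  calc _ ≤ Real.log r / Real.log 2 * (K * 2 ^ d) := by gcongr
    _ = _ := by ring

theorem low (hb : Brk X d b) (α : ℕ) : ∃ C : ℝ, 0 < C ∧ ∀ r : ℝ, 2 ≤ r →
    ∀ F : Finset X, (∀ x ∈ F, b x ≤ r) →
    ∑ x ∈ F, b x ^ (-(d : ℝ)) * Real.log (b x) ^ α ≤ C * Real.log r ^ (α + 1) := by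
  obtain ⟨C, hC, h⟩ := hb.low0
  refine ⟨C, hC, fun r hr F hF => ?_⟩
  have hlr : 0 ≤ Real.log r := Real.log_nonneg (by linarith)
  calc _ ≤ ∑ x ∈ F, b x ^ (-(d : ℝ)) * Real.log r ^ α := by
        apply Finset.sum_le_sum
        intro x hx
        have h2 := hb.two_le x
        have := hb.pos x
        have h3 : Real.log (b x) ≤ Real.log r := Real.log_le_log this (hF x hx)
        have h4 : 0 ≤ Real.log (b x) := Real.log_nonneg (by linarith)
        gcongr
    _ = (∑ x ∈ F, b x ^ (-(d : ℝ))) * Real.log r ^ α := by rw [Finset.sum_mul]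
    _ ≤ (C * Real.log r) * Real.log r ^ α := by gcongr; exact h r hr F hF
    _ = _ := by ring

/-- finitely many points in a ball -/
theorem finite (hb : Brk X d b) (r : ℝ) : {x | b x ≤ r}.Finite := by
  obtain ⟨K, hK, hcount⟩ := hb.count
  by_contra h
  have h : {x | b x ≤ r}.Infinite := h
  obtain ⟨n, hn⟩ := exists_nat_gt (K * (max r 0) ^ d)
  obtain ⟨F, hF, hc⟩ := h.exists_subset_card_eq n
  have := hcount (max r 0) (le_max_right _ _) F (fun x hx => (hF hx).trans (le_max_left _ _))
  rw [hc] at this; linarith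

theorem extend (hb : Brk X d b) (F W : X → ℝ) (hW : ∀ x, 0 < W x) (L C : ℝ)
    (h : ∀ x, L ≤ b x → F x ≤ C * W x) : ∃ C' : ℝ, ∀ x, F x ≤ C' * W x := by
  have hf := hb.finite L
  have : (Set.image (fun x => F x / W x) {x | b x ≤ L}).Finite := hf.image _
  obtain ⟨C1, hC1⟩ := this.bddAbove
  refine ⟨max C C1, fun x => ?_⟩
  rcases le_total L (b x) with hx | hx
  · exact (h x hx).trans (mul_le_mul_of_nonneg_right (le_max_left _ _) (hW x).le)
  · have := hC1 ⟨x, hx, rfl⟩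
    simp only at this
    rw [div_le_iff₀ (hW x)] at this
    exact this.trans (mul_le_mul_of_nonneg_right (le_max_right _ _) (hW x).le)

theorem tendsto (hb : Brk X d b) : Tendsto b cofinite atTop := by
  rw [tendsto_atTop]
  intro r
  rw [eventually_cofinite]
  apply (hb.finite r).subset
  intro x hx
  simp only [Set.mem_ofPred_eq, not_le] at hx ⊢
  exact hx.le

end Brk

section calculus
variable {E V : Type} [NormedAddCommGroup E] [NormedSpace ℝ E]
  [NormedAddCommGroup V] [NormedSpace ℝ V]

theorem hasFDerivAt_dl (l : List E) (F : E → V) (F' : E → E →L[ℝ] V) (x : E)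
    (h : ∀ y ∈ st l, HasFDerivAt F (F' (x + y)) (x + y)) :
    HasFDerivAt (dl l F) (dl l F' x) x := by
  induction l generalizing x with
  | nil => simpa [st, dl] using h
  | cons ρ l ih =>
    have h1 := ih x (fun y hy => h y (Or.inl hy))
    have h2 := ih (x + ρ) (fun y hy => by
      have := h (y + ρ) (Or.inr ⟨y, hy, rfl⟩)
      rwa [show x + (y + ρ) = x + ρ + y by abel] at this)
    have h3 := ((hasFDerivAt_comp_add_right ρ).2 h2).fun_sub h1
    rw [dl_cons]
    refine h3.congr_of_eventuallyEq (Eventually.of_forall fun y => ?_)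
    rw [dl_cons]

/-- total length of a list of steps -/
def rad (l : List E) : ℝ := (l.map (fun x => ‖x‖)).sum

theorem rad_nonneg (l : List E) : 0 ≤ rad l := by
  unfold rad
  apply List.sum_nonneg
  simp

theorem rad_cons (ρ : E) (l : List E) : rad (ρ :: l) = ‖ρ‖ + rad l := by simp [rad]

theorem st_rad (l : List E) (y : E) (hy : y ∈ st l) : ‖y‖ ≤ rad l :=
  st_norm (fun x => ‖x‖) norm_zero norm_nonneg norm_add_le l y hy

theorem diff_iter (γ : E → ℝ) (U : Set E) (hU : IsOpen U) (hγ : ContDiffOn ℝ (⊤ : ℕ∞) γ U) (P : ℕ)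
    (x : E) (hx : x ∈ U) : DifferentiableAt ℝ (iteratedFDeriv ℝ P γ) x := by
  have h : ContDiffAt ℝ (⊤ : ℕ∞) γ x := hγ.contDiffAt (hU.mem_nhds hx)
  exact h.differentiableAt_iteratedFDeriv (by exact_mod_cast WithTop.coe_lt_top _)

theorem norm_dl_fderiv_iter (γ : E → ℝ) (P : ℕ) (l : List E) (x : E) :
    ‖dl l (fderiv ℝ (iteratedFDeriv ℝ P γ)) x‖ = ‖dl l (iteratedFDeriv ℝ (P + 1) γ) x‖ := by
  rw [iteratedFDeriv_succ_eq_comp_left]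
  set T := (continuousMultilinearCurryLeftEquiv ℝ (fun _ : Fin (P + 1) => E) ℝ).symm with hT
  have := dl_map (T.toLinearEquiv.toLinearMap.toAddMonoidHom) l (fderiv ℝ (iteratedFDeriv ℝ P γ)) x
  have h2 : dl l (T ∘ fderiv ℝ (iteratedFDeriv ℝ P γ)) x = T (dl l (fderiv ℝ (iteratedFDeriv ℝ P γ)) x) := this
  rw [h2, LinearIsometryEquiv.norm_map]

theorem fd_bound (γ : E → ℝ) (U : Set E) (hU : IsOpen U) (hγ : ContDiffOn ℝ (⊤ : ℕ∞) γ U)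
    (l : List E) : ∀ (P : ℕ) (x : E) (B : ℝ), Metric.closedBall x (rad l) ⊆ U →
    (∀ y ∈ Metric.closedBall x (rad l), ‖iteratedFDeriv ℝ (P + l.length) γ y‖ ≤ B) →
    ‖dl l (iteratedFDeriv ℝ P γ) x‖ ≤ B * (l.map (fun x => ‖x‖)).prod := by
  induction l with
  | nil =>
    intro P x B _ h
    simpa [dl] using h x (by simp [rad])
  | cons ρ l ih =>
    intro P x B hxU h
    rw [dl_cons]
    have hsub : ∀ y ∈ segment ℝ x (x + ρ), Metric.closedBall y (rad l) ⊆
        Metric.closedBall x (rad (ρ :: l)) := by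
      intro y hy
      apply Metric.closedBall_subset_closedBall'
      rw [segment_eq_image'] at hy
      obtain ⟨t, ⟨ht0, ht1⟩, rfl⟩ := hy
      rw [rad_cons, dist_eq_norm]
      have : ‖x + t • (x + ρ - x) - x‖ ≤ ‖ρ‖ := by
        rw [add_sub_cancel_left, add_sub_cancel_left, norm_smul, Real.norm_of_nonneg ht0]
        exact mul_le_of_le_one_left (norm_nonneg _) ht1
      linarith
    have hder : ∀ y ∈ segment ℝ x (x + ρ), HasFDerivWithinAt (dl l (iteratedFDeriv ℝ P γ))
        (dl l (fderiv ℝ (iteratedFDeriv ℝ P γ)) y) (segment ℝ x (x + ρ)) y := by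
      intro y hy
      apply HasFDerivAt.hasFDerivWithinAt
      apply hasFDerivAt_dl
      intro z hz
      apply (diff_iter γ U hU hγ P (y + z) _).hasFDerivAt
      apply hxU
      apply hsub y hy
      rw [Metric.mem_closedBall, dist_eq_norm, add_sub_cancel_left]
      exact st_rad l z hz
    have hbd : ∀ y ∈ segment ℝ x (x + ρ), ‖dl l (fderiv ℝ (iteratedFDeriv ℝ P γ)) y‖ ≤
        B * (l.map (fun x => ‖x‖)).prod := by
      intro y hy
      rw [norm_dl_fderiv_iter]
      apply ih (P + 1) y B ((hsub y hy).trans hxU)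
      intro z hz
      have := h z (hsub y hy hz)
      rwa [List.length_cons, ← add_assoc, add_right_comm] at this
    have := (convex_segment x (x + ρ)).norm_image_sub_le_of_norm_hasFDerivWithin_le hder hbd
      (left_mem_segment _ _ _) (right_mem_segment _ _ _)
    rw [add_sub_cancel_left] at this
    simp only [List.map_cons, List.prod_cons]
    linarith

theorem taylor_seq (P : ℕ) : ∀ (ψ : ℕ → ℝ → ℝ) (B : ℝ),
    (∀ i < P, ∀ t ∈ Set.Icc (0 : ℝ) 1, HasDerivAt (ψ i) (ψ (i + 1) t) t) →
    (∀ t ∈ Set.Icc (0 : ℝ) 1, |ψ P t| ≤ B) → ∀ t ∈ Set.Icc (0 : ℝ) 1,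
    |ψ 0 t - ∑ i ∈ Finset.range P, ψ i 0 * t ^ i / (i.factorial : ℝ)| ≤ B := by
  induction P with
  | zero => intro ψ B _ h t ht; simpa using h t ht
  | succ P ih =>
    intro ψ B hd hB t ht
    have h1 := ih (fun i => ψ (i + 1)) B (fun i hi => hd (i + 1) (by omega)) hB
    have hB0 : 0 ≤ B := (abs_nonneg _).trans (hB t ht)
    set Rm : ℝ → ℝ := fun t => ψ 0 t - ∑ i ∈ Finset.range (P + 1), ψ i 0 * t ^ i / (i.factorial : ℝ)
      with hRm
    have hder : ∀ s ∈ Set.Icc (0 : ℝ) 1, HasDerivWithinAt Rm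
        (ψ 1 s - ∑ i ∈ Finset.range P, ψ (i + 1) 0 * s ^ i / (i.factorial : ℝ))
        (Set.Icc 0 1) s := by
      intro s hs
      apply HasDerivAt.hasDerivWithinAt
      apply (hd 0 (by omega) s hs).fun_sub
      have e : (fun t : ℝ => ∑ i ∈ Finset.range (P + 1), ψ i 0 * t ^ i / (i.factorial : ℝ)) =
          fun t => ∑ i ∈ Finset.range P, ψ (i + 1) 0 * t ^ (i + 1) / ((i + 1).factorial : ℝ) + ψ 0 0 := by
        funext t; rw [Finset.sum_range_succ']; simp
      rw [e]
      apply HasDerivAt.add_const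
      apply HasDerivAt.fun_sum
      intro i _
      have h2 := ((hasDerivAt_pow (i + 1) s).const_mul (ψ (i + 1) 0)).div_const ((i + 1).factorial : ℝ)
      refine h2.congr_deriv ?_
      have : ((i.factorial : ℕ) : ℝ) ≠ 0 := by positivity
      rw [Nat.factorial_succ]; push_cast; field_simp
    have := (convex_Icc (0 : ℝ) 1).norm_image_sub_le_of_norm_hasDerivWithin_le hder
      (fun s hs => h1 s hs) (Set.left_mem_Icc.2 zero_le_one) ht
    have h0 : Rm 0 = 0 := by
      simp only [hRm]
      rw [Finset.sum_range_succ']; simp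
    rw [h0, sub_zero, sub_zero, Real.norm_eq_abs, Real.norm_eq_abs, abs_of_nonneg ht.1] at this
    exact this.trans (mul_le_of_le_one_right hB0 ht.2)

theorem dl_taylor (γ : E → ℝ) (U : Set E) (hU : IsOpen U) (hγ : ContDiffOn ℝ (⊤ : ℕ∞) γ U)
    (l : List E) (P : ℕ) (x v : E) (B : ℝ)
    (hseg : ∀ t ∈ Set.Icc (0 : ℝ) 1, Metric.closedBall (x + t • v) (rad l) ⊆ U)
    (hB : ∀ t ∈ Set.Icc (0 : ℝ) 1, ∀ y ∈ Metric.closedBall (x + t • v) (rad l),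
      ‖iteratedFDeriv ℝ (P + l.length) γ y‖ ≤ B) :
    |dl l γ (x + v) - ∑ i ∈ Finset.range P,
      dl l (fun y => iteratedFDeriv ℝ i γ y (fun _ => v)) x / (i.factorial : ℝ)| ≤
      B * (l.map (fun x => ‖x‖)).prod * ‖v‖ ^ P := by
  have hev : ∀ i y, dl l (fun y => iteratedFDeriv ℝ i γ y (fun _ => v)) y =
      (dl l (iteratedFDeriv ℝ i γ) y) (fun _ => v) := by
    intro i y
    exact dl_map ((ContinuousMultilinearMap.apply ℝ (fun _ : Fin i => E) ℝ (fun _ => v)).toLinearMap.toAddMonoidHom)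
      l (iteratedFDeriv ℝ i γ) y
  have key := taylor_seq P (fun i t => dl l (fun y => iteratedFDeriv ℝ i γ y (fun _ => v)) (x + t • v))
    (B * (l.map (fun x => ‖x‖)).prod * ‖v‖ ^ P) ?_ ?_ 1 (by simp)
  · simpa using key
  · intro i hi t ht
    have hd : HasFDerivAt (dl l (fun y => iteratedFDeriv ℝ i γ y (fun _ => v)))
        (dl l (fun y => (ContinuousMultilinearMap.apply ℝ (fun _ : Fin i => E) ℝ (fun _ => v)).comp
          (fderiv ℝ (iteratedFDeriv ℝ i γ) y)) (x + t • v)) (x + t • v) := by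
      apply hasFDerivAt_dl
      intro z hz
      apply HasFDerivAt.comp (x + t • v + z)
        (ContinuousLinearMap.hasFDerivAt (ContinuousMultilinearMap.apply ℝ (fun _ : Fin i => E) ℝ (fun _ => v)))
      apply (diff_iter γ U hU hγ i (x + t • v + z) _).hasFDerivAt
      apply hseg t ht
      rw [Metric.mem_closedBall, dist_eq_norm, add_sub_cancel_left]
      exact st_rad l z hz
    have hl : HasDerivAt (fun t : ℝ => x + t • v) v t := by
      simpa using ((hasDerivAt_id t).smul_const v).const_add x
    have h2 := hd.comp_hasDerivAt t hl
    refine h2.congr_deriv ?_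
    have h3 := dl_map (ContinuousLinearMap.apply ℝ ℝ v).toLinearMap.toAddMonoidHom l
      (fun y => (ContinuousMultilinearMap.apply ℝ (fun _ : Fin i => E) ℝ (fun _ => v)).comp
          (fderiv ℝ (iteratedFDeriv ℝ i γ) y)) (x + t • v)
    refine Eq.trans h3.symm ?_
    congr 1
  · intro t ht
    simp only [hev]
    have h1 := fd_bound γ U hU hγ l P (x + t • v) B (hseg t ht) (hB t ht)
    have h2 := (dl l (iteratedFDeriv ℝ P γ) (x + t • v)).le_opNorm (fun _ => v)
    rw [Real.norm_eq_abs] at h2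
    simp only [Finset.prod_const, Finset.card_univ, Fintype.card_fin] at h2
    exact h2.trans (by gcongr)

theorem hom_bound [FiniteDimensional ℝ E] (γ : E → ℝ)
    (hγ : ContDiffOn ℝ (⊤ : ℕ∞) γ {x : E | x ≠ 0}) (e : ℝ) (κ : ℝ → ℝ)
    (hh : ∀ t : ℝ, 0 < t → ∀ x : E, x ≠ 0 → γ (t • x) = t ^ e * γ x + κ t) (i : ℕ) (hi : 1 ≤ i) :
    ∃ C : ℝ, 0 < C ∧ ∀ x : E, x ≠ 0 → ‖iteratedFDeriv ℝ i γ x‖ ≤ C * ‖x‖ ^ (e - i) := by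
  have hU : IsOpen {x : E | x ≠ 0} := isOpen_ne
  have hcont : ContinuousOn (fun x => ‖iteratedFDeriv ℝ i γ x‖) (Metric.sphere (0 : E) 1) := by
    intro x hx
    apply ContinuousAt.continuousWithinAt
    apply ContinuousAt.norm
    apply (diff_iter γ _ hU hγ i x _).continuousAt
    rintro rfl
    simp at hx
  have : ProperSpace E := FiniteDimensional.proper ℝ E
  obtain ⟨C, hC⟩ := (isCompact_sphere (0 : E) 1).bddAbove_image hcont
  refine ⟨max C 1, by positivity, fun x hx => ?_⟩
  set t := ‖x‖ with ht
  have ht0 : 0 < t := norm_pos_iff.2 hx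
  have hy : t⁻¹ • x ∈ Metric.sphere (0 : E) 1 := by
    simp [norm_smul, ← ht, abs_of_pos ht0, ht0.ne']
  have h1 : γ =ᶠ[𝓝 x] fun z => t ^ e * γ (t⁻¹ • z) + κ t := by
    filter_upwards [hU.mem_nhds hx] with z hz
    have := hh t ht0 (t⁻¹ • z) (smul_ne_zero (by positivity) hz)
    rwa [smul_smul, mul_inv_cancel₀ ht0.ne', one_smul] at this
  let g : E ≃L[ℝ] E := ContinuousLinearEquiv.smulLeft (Units.mk0 t⁻¹ (by positivity))
  have hcd : ContDiffAt ℝ i (fun z => γ (t⁻¹ • z)) x := by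
    have h0 : ContDiffAt ℝ i γ (t⁻¹ • x) :=
      (hγ.contDiffAt (hU.mem_nhds (smul_ne_zero (by positivity) hx))).of_le
        (by exact_mod_cast le_top)
    exact h0.comp x (contDiff_const_smul _).contDiffAt
  have h2 : iteratedFDeriv ℝ i γ x = t ^ e • iteratedFDeriv ℝ i (γ ∘ g) x := by
    rw [(Filter.EventuallyEq.iteratedFDeriv ℝ h1 i).eq_of_nhds]
    rw [fun_iteratedFDeriv_add_apply (contDiffAt_const.mul hcd) contDiffAt_const]
    rw [iteratedFDeriv_const_of_ne (by omega)]
    simp only [Pi.zero_apply, add_zero]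
    exact iteratedFDeriv_const_smul_apply' (a := t ^ e) hcd
  have h3 : iteratedFDeriv ℝ i (γ ∘ g) x =
      (iteratedFDeriv ℝ i γ (g x)).compContinuousLinearMap fun _ => (g : E →L[ℝ] E) := by
    have := g.iteratedFDerivWithin_comp_right γ uniqueDiffOn_univ (x := x) (Set.mem_univ _) i
    simpa [iteratedFDerivWithin_univ] using this
  have h4 : ‖(g : E →L[ℝ] E)‖ ≤ t⁻¹ := by
    apply ContinuousLinearMap.opNorm_le_bound _ (by positivity)
    intro z
    have : (g : E →L[ℝ] E) z = t⁻¹ • z := rfl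
    rw [this, norm_smul, Real.norm_of_nonneg (by positivity)]
  have h5 : ‖iteratedFDeriv ℝ i γ (g x)‖ ≤ C := hC ⟨_, hy, rfl⟩
  rw [h2, h3, norm_smul, Real.norm_of_nonneg (by positivity)]
  calc _ ≤ t ^ e * (‖iteratedFDeriv ℝ i γ (g x)‖ * ∏ _j : Fin i, ‖(g : E →L[ℝ] E)‖) := by
        gcongr; exact ContinuousMultilinearMap.norm_compContinuousLinearMap_le _ _
    _ ≤ t ^ e * (max C 1 * (t⁻¹) ^ i) := by
        have h6 : ∏ _j : Fin i, ‖(g : E →L[ℝ] E)‖ ≤ (t⁻¹) ^ i := by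
          simp only [Finset.prod_const, Finset.card_univ, Fintype.card_fin]
          gcongr
        gcongr
        exact h5.trans (le_max_left _ _)
    _ = max C 1 * t ^ (e - i) := by
        rw [Real.rpow_sub ht0, Real.rpow_natCast, inv_pow]; field_simp

end calculus

/-- the lattice embedding as an additive homomorphism -/
def lat (d : ℕ) (A : Matrix (Fin d) (Fin d) ℝ) : (Fin d → ℤ) →+ Vec d where
  toFun := latticePt d A
  map_zero' := by funext i; simp [latticePt]
  map_add' x y := by
    funext i; simp [latticePt, mul_add, Finset.sum_add_distrib]

theorem lat_apply (d : ℕ) (A : Matrix (Fin d) (Fin d) ℝ) (z : Fin d → ℤ) :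
    lat d A z = latticePt d A z := rfl

/-- sup-norm bracket on the lattice index set -/
def bz (d : ℕ) (A : Matrix (Fin d) (Fin d) ℝ) (z : Fin d → ℤ) : ℝ := ‖lat d A z‖ + 2

theorem coord_le (d : ℕ) (A : Matrix (Fin d) (Fin d) ℝ) (hA : IsUnit A.det) :
    ∃ K : ℝ, 0 < K ∧ ∀ z : Fin d → ℤ, ∀ i, |(z i : ℝ)| ≤ K * ‖lat d A z‖ := by
  refine ⟨∑ i, ∑ j, |A⁻¹ i j| + 1, by positivity, fun z i => ?_⟩
  have h1 : (A⁻¹).mulVec (A.mulVec (fun j => (z j : ℝ))) = fun j => (z j : ℝ) := by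
    rw [Matrix.mulVec_mulVec, Matrix.nonsing_inv_mul _ hA, Matrix.one_mulVec]
  have h2 : A.mulVec (fun j => (z j : ℝ)) = lat d A z := by
    funext i; rfl
  rw [h2] at h1
  have h3 : (z i : ℝ) = ∑ j, A⁻¹ i j * lat d A z j := (congrFun h1 i).symm
  rw [h3]
  calc |∑ j, A⁻¹ i j * lat d A z j| ≤ ∑ j, |A⁻¹ i j| * ‖lat d A z‖ := by
        refine (Finset.abs_sum_le_sum_abs _ _).trans (Finset.sum_le_sum fun j _ => ?_)
        rw [abs_mul]
        gcongr
        exact norm_le_pi_norm (lat d A z) j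
    _ = (∑ j, |A⁻¹ i j|) * ‖lat d A z‖ := by rw [Finset.sum_mul]
    _ ≤ _ := by
        gcongr
        have h5 : ∑ j, |A⁻¹ i j| ≤ ∑ i, ∑ j, |A⁻¹ i j| :=
          Finset.single_le_sum (f := fun i' : Fin d => ∑ j, |A⁻¹ i' j|)
          (fun i _ => by positivity) (Finset.mem_univ i)
        linarith

theorem lat_inj (d : ℕ) (A : Matrix (Fin d) (Fin d) ℝ) (hA : IsUnit A.det) :
    Function.Injective (lat d A) := by
  rw [injective_iff_map_eq_zero]
  intro z hz
  obtain ⟨K, hK, h⟩ := coord_le d A hA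
  funext i
  have := h z i
  rw [hz, norm_zero, mul_zero] at this
  simpa using abs_nonpos_iff.1 this

theorem brk_bz (d : ℕ) (A : Matrix (Fin d) (Fin d) ℝ) (hA : IsUnit A.det) :
    Brk (Fin d → ℤ) d (bz d A) where
  two_le z := by simp [bz]
  neg z := by simp [bz]
  add_le x y := by
    simp only [bz, map_add]
    have := norm_add_le (lat d A x) (lat d A y)
    linarith
  count := by
    obtain ⟨K, hK, h⟩ := coord_le d A hA
    refine ⟨(2 * K + 1) ^ d, by positivity, fun r hr F hF => ?_⟩
    rcases lt_or_ge r 1 with hr1 | hr1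
    · have : F = ∅ := by
        apply Finset.eq_empty_of_forall_notMem
        intro x hx
        have := hF x hx
        have h0 := norm_nonneg (lat d A x)
        simp only [bz] at this
        linarith
      rw [this]; simp; positivity
    · set M : ℕ := ⌊K * r⌋₊ with hM
      have hsub : F ⊆ Fintype.piFinset (fun _ : Fin d => Finset.Icc (-(M : ℤ)) M) := by
        intro x hx
        rw [Fintype.mem_piFinset]
        intro i
        have h1 := h x i
        have h2 := hF x hx
        simp only [bz] at h2
        have h3 : ((x i).natAbs : ℝ) ≤ K * r := by
          rw [Nat.cast_natAbs, Int.cast_abs]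
          exact h1.trans (by gcongr; linarith)
        have h4 : (x i).natAbs ≤ M := Nat.le_floor h3
        rw [Finset.mem_Icc]; omega
      have hc := Finset.card_le_card hsub
      rw [Fintype.card_piFinset] at hc
      simp only [Int.card_Icc, Finset.prod_const, Finset.card_univ, Fintype.card_fin] at hc
      have e : ((M : ℤ) + 1 - -(M : ℤ)).toNat = 2 * M + 1 := by omega
      rw [e] at hc
      have hMr : (M : ℝ) ≤ K * r := Nat.floor_le (by positivity)
      calc (F.card : ℝ) ≤ ((2 * M + 1 : ℕ) : ℝ) ^ d := by exact_mod_cast hc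
        _ ≤ ((2 * K + 1) * r) ^ d := by
          gcongr
          push_cast
          nlinarith
        _ = _ := by rw [mul_pow]

theorem fd_bound0 {E : Type} [NormedAddCommGroup E] [NormedSpace ℝ E] (γ : E → ℝ) (U : Set E)
    (hU : IsOpen U) (hγ : ContDiffOn ℝ (⊤ : ℕ∞) γ U)
    (l : List E) (x : E) (B : ℝ) (h1 : Metric.closedBall x (rad l) ⊆ U)
    (h2 : ∀ y ∈ Metric.closedBall x (rad l), ‖iteratedFDeriv ℝ l.length γ y‖ ≤ B) :
    |dl l γ x| ≤ B * (l.map (fun x => ‖x‖)).prod := by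
  have h3 := fd_bound γ U hU hγ l 0 x B h1 (by rw [zero_add]; exact h2)
  have h4 : dl l γ x = (dl l (iteratedFDeriv ℝ 0 γ) x) (fun _ => 0) := by
    have := dl_map ((ContinuousMultilinearMap.apply ℝ (fun _ : Fin 0 => E) ℝ (fun _ => 0)).toLinearMap.toAddMonoidHom)
      l (iteratedFDeriv ℝ 0 γ) x
    exact this
  rw [h4]
  have h5 := (dl l (iteratedFDeriv ℝ 0 γ) x).le_opNorm (fun _ => 0)
  simp only [Finset.univ_eq_empty, Finset.prod_empty, mul_one] at h5
  exact h5.trans h3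

/-- the reference bump function -/
def bump (d : ℕ) : ContDiffBump (0 : Vec d) := ⟨1 / 8, 1 / 4, by norm_num, by norm_num⟩

/-- rescaled bump on the lattice -/
def cut (d : ℕ) (A : Matrix (Fin d) (Fin d) ℝ) (x₀ : Vec d) (T : ℝ) (z : Fin d → ℤ) : ℝ :=
  bump d (T⁻¹ • (lat d A z - x₀))

theorem cut_bound (d : ℕ) (A : Matrix (Fin d) (Fin d) ℝ) (l : List (Fin d → ℤ)) :
    ∃ C : ℝ, 0 < C ∧ ∀ (x₀ : Vec d) (T : ℝ), 0 < T → ∀ z,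
      |dl l (cut d A x₀ T) z| ≤ C * (T⁻¹) ^ l.length := by
  have hsm : ContDiff ℝ (⊤ : ℕ∞) (bump d) := (bump d).contDiff
  have hcs : HasCompactSupport (bump d) := (bump d).hasCompactSupport
  obtain ⟨B, hB⟩ := (hcs.iteratedFDeriv (𝕜 := ℝ) l.length).exists_bound_of_continuous
    (hsm.continuous_iteratedFDeriv (m := l.length) (by exact_mod_cast le_top))
  have hB0 : 0 ≤ B := (norm_nonneg _).trans (hB 0)
  have hprod : ∀ l : List (Vec d), 0 ≤ (l.map (fun x => ‖x‖)).prod := fun l => by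
    apply List.prod_nonneg; simp
  refine ⟨B * ((l.map (lat d A)).map (fun x => ‖x‖)).prod + 1, by
    have := mul_nonneg hB0 (hprod (l.map (lat d A))); linarith, fun x₀ T hT z => ?_⟩
  have e1 : dl l (cut d A x₀ T) z = dl ((l.map (lat d A)).map (fun x => T⁻¹ • x)) (bump d)
      (T⁻¹ • (lat d A z - x₀)) := by
    have h1 := dl_comp (lat d A) l (fun x => bump d (T⁻¹ • (x - x₀))) z
    have h2 := dl_shift (l.map (lat d A)) (fun x => bump d (T⁻¹ • x)) (-x₀) (lat d A z)
    have h3 := dl_comp (DistribSMul.toAddMonoidHom (Vec d) (T⁻¹)) (l.map (lat d A)) (bump d) (lat d A z - x₀)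
    simp only [DistribSMul.toAddMonoidHom_apply] at h3
    simp only [← sub_eq_add_neg] at h2
    rw [show dl l (cut d A x₀ T) z = _ from h1.symm, h2]
    exact h3.symm
  rw [e1]
  have h4 := fd_bound0 (bump d) Set.univ isOpen_univ hsm.contDiffOn
    ((l.map (lat d A)).map (fun x => T⁻¹ • x)) (T⁻¹ • (lat d A z - x₀)) B (Set.subset_univ _)
    (fun y _ => by rw [List.length_map, List.length_map]; exact hB y)
  refine h4.trans ?_
  have e2 : ∀ l' : List (Vec d), ((l'.map (fun x => T⁻¹ • x)).map (fun x => ‖x‖)).prod =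
      (T⁻¹) ^ l'.length * (l'.map (fun x => ‖x‖)).prod := by
    intro l'
    induction l' with
    | nil => simp
    | cons a l' ih =>
      simp only [List.map_cons, List.prod_cons, List.length_cons, ih, norm_smul]
      rw [Real.norm_of_nonneg (by positivity)]; ring
  rw [e2, List.length_map]
  have : 0 < (T⁻¹) ^ l.length := by positivity
  nlinarith

theorem cut_supp (d : ℕ) (A : Matrix (Fin d) (Fin d) ℝ) (x₀ : Vec d) (T : ℝ) (hT : 0 < T)
    (z : Fin d → ℤ) (h : T / 4 ≤ ‖lat d A z - x₀‖) : cut d A x₀ T z = 0 := by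
  apply (bump d).zero_of_le_dist
  rw [dist_zero_right, norm_smul, Real.norm_of_nonneg (by positivity)]
  show (1 / 4 : ℝ) ≤ _
  rw [inv_mul_eq_div, le_div_iff₀ hT]; linarith

theorem cut_one (d : ℕ) (A : Matrix (Fin d) (Fin d) ℝ) (x₀ : Vec d) (T : ℝ) (hT : 0 < T)
    (z : Fin d → ℤ) (h : ‖lat d A z - x₀‖ ≤ T / 8) : cut d A x₀ T z = 1 := by
  apply (bump d).one_of_mem_closedBall
  rw [Metric.mem_closedBall, dist_zero_right, norm_smul, Real.norm_of_nonneg (by positivity)]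
  show _ ≤ (1 / 8 : ℝ)
  rw [inv_mul_eq_div, div_le_iff₀ hT]; linarith

theorem cut_abs (d : ℕ) (A : Matrix (Fin d) (Fin d) ℝ) (x₀ : Vec d) (T : ℝ)
    (z : Fin d → ℤ) : |cut d A x₀ T z| ≤ 1 := by
  rw [cut, abs_of_nonneg (bump d).nonneg]
  exact (bump d).le_one

theorem growth (d : ℕ) (A : Matrix (Fin d) (Fin d) ℝ) (hA : IsUnit A.det) (w : (Fin d → ℤ) → ℝ)
    (hw : ∀ a, Tendsto (fun m => w (m + a) - w m) cofinite (𝓝 0)) (y : Fin d → ℤ) :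
    Tendsto (fun m => |w (m + y)| / bz d A m) cofinite (𝓝 0) := by
  have hb := brk_bz d A hA
  obtain ⟨K, hK, hcoord⟩ := coord_le d A hA
  have h0 : Tendsto (fun m => |w m| / bz d A m) cofinite (𝓝 0) := by
    have key : ∀ ε > 0, ∃ B : ℝ, ∀ n : ℕ, ∀ m : Fin d → ℤ, (∀ i, |m i| ≤ n) → |w m| ≤ B + ε * n := by
      intro ε hε
      let Sg : Set (Fin d → ℤ) := {a | ∀ i, |a i| ≤ 1}
      have hSg : Sg.Finite := by
        apply ((Fintype.piFinset (fun _ : Fin d => Finset.Icc (-1 : ℤ) 1)).finite_toSet).subset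
        intro a ha
        simp only [Finset.mem_coe, Fintype.mem_piFinset, Finset.mem_Icc]
        intro i; exact abs_le.1 (ha i)
      let Bad : Set (Fin d → ℤ) := ⋃ a ∈ Sg, (fun m => m + a) '' {m | ¬ |w (m + a) - w m| < ε}
      have hBad : Bad.Finite := by
        apply hSg.biUnion
        intro a _
        apply Set.Finite.image
        have := (hw a).abs
        rw [abs_zero] at this
        exact eventually_cofinite.1 (this.eventually_lt_const hε)
      obtain ⟨B0, hB0⟩ := (hBad.image (fun m => |w m|)).bddAbove
      refine ⟨max B0 |w 0|, fun n => ?_⟩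
      induction n with
      | zero =>
        intro m hm
        have : m = 0 := by
          funext i
          have := hm i
          simpa using this
        rw [this]; simp
      | succ n ih =>
        intro m hm
        by_cases hmB : m ∈ Bad
        · have h1 : |w m| ≤ B0 := hB0 ⟨m, hmB, rfl⟩
          have := le_max_left B0 |w 0|
          have : 0 ≤ ε * ((n + 1 : ℕ) : ℝ) := by positivity
          linarith
        · set a : Fin d → ℤ := fun i => (m i).sign with ha
          have haS : a ∈ Sg := by
            intro i
            simp only [ha]
            rcases lt_trichotomy (m i) 0 with h | h | h
            · rw [Int.sign_eq_neg_one_of_neg h]; simp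
            · rw [h]; simp
            · rw [Int.sign_eq_one_of_pos h]; simp
          have hm' : ∀ i, |(m - a) i| ≤ n := by
            intro i
            have h1 := hm i
            simp only [Pi.sub_apply, ha]
            push_cast at h1
            rw [abs_le] at h1 ⊢
            rcases lt_trichotomy (m i) 0 with h | h | h
            · rw [Int.sign_eq_neg_one_of_neg h]; omega
            · rw [h]; simp
            · rw [Int.sign_eq_one_of_pos h]; omega
          have h2 := ih (m - a) hm'
          have h3 : |w m - w (m - a)| < ε := by
            by_contra hcon
            apply hmB
            simp only [Bad, Set.mem_iUnion]
            refine ⟨a, haS, m - a, ?_, by simp⟩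
            simpa using hcon
          have h4 : |w m| ≤ |w m - w (m - a)| + |w (m - a)| := by
            have := abs_add_le (w m - w (m - a)) (w (m - a))
            simpa using this
          push_cast
          linarith
    rw [Metric.tendsto_nhds]
    intro ε hε
    obtain ⟨B, hB⟩ := key (ε / (2 * K)) (by positivity)
    have h1 := (hb.tendsto).eventually_gt_atTop (2 * |B| / ε)
    filter_upwards [h1] with m hm
    have hbm := hb.pos m
    rw [Real.dist_eq, sub_zero, abs_of_nonneg (by positivity), div_lt_iff₀ hbm]
    rw [div_lt_iff₀ hε] at hm
    set n : ℕ := ⌊K * ‖lat d A m‖⌋₊ with hn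
    have h2 := hB n m (fun i => by
      have h3 : ((m i).natAbs : ℝ) ≤ K * ‖lat d A m‖ := by
        rw [Nat.cast_natAbs, Int.cast_abs]; exact hcoord m i
      have h4 : (m i).natAbs ≤ n := Nat.le_floor h3
      rw [abs_le]; omega)
    have h5 : (n : ℝ) ≤ K * ‖lat d A m‖ := Nat.floor_le (by positivity)
    have h6 : ε / (2 * K) * n ≤ ε / 2 * (bz d A m - 2) := by
      calc ε / (2 * K) * n ≤ ε / (2 * K) * (K * ‖lat d A m‖) := by gcongr
        _ = ε / 2 * (bz d A m - 2) := by simp only [bz]; field_simp; ring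
    have := le_abs_self B
    nlinarith
  have h1 : Tendsto (fun m => |w m| / bz d A m + |w (m + y) - w m|) cofinite (𝓝 (0 + 0)) := by
    apply h0.add
    have := (hw y).abs
    rwa [abs_zero] at this
  rw [add_zero] at h1
  refine squeeze_zero (fun m => ?_) (fun m => ?_) h1
  · have := hb.pos m; positivity
  · have hbm := hb.pos m
    have h2 : |w (m + y)| ≤ |w m| + |w (m + y) - w m| := by
      have := abs_add_le (w m) (w (m + y) - w m)
      simpa using this
    have h3 : |w (m + y) - w m| / bz d A m ≤ |w (m + y) - w m| :=
      div_le_self (abs_nonneg _) (by linarith [hb.two_le m])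
    calc _ ≤ (|w m| + |w (m + y) - w m|) / bz d A m := by gcongr
      _ ≤ _ := by rw [add_div]; linarith

/-- lattice operator in index coordinates -/
def Hz {X : Type} [AddCommGroup X] {N : ℕ} (Rz : Finset X) (Cz : X → X → Fin N → Fin N → ℝ)
    (w : X → Fin N → ℝ) (m : X) (i : Fin N) : ℝ :=
  ∑ σ ∈ Rz, ∑ ρ ∈ Rz, ∑ k, Cz σ ρ i k *
    (w (m - σ + ρ) k - w (m - σ) k - (w (m + ρ) k - w m k))

theorem Hz_adj {X : Type} [AddCommGroup X] {N : ℕ} (Rz : Finset X) (Cz : X → X → Fin N → Fin N → ℝ)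
    (hC : ∀ σ ρ i j, Cz σ ρ i j = Cz ρ σ j i) (w v : X → Fin N → ℝ)
    (hs : ∀ i k s, Summable (fun m => w m i * v (m + s) k)) :
    ∃ S, HasSum (fun m => ∑ i, w m i * Hz Rz Cz v m i) S ∧
      HasSum (fun m => ∑ i, Hz Rz Cz w m i * v m i) S := by
  set T : Fin N → Fin N → X → ℝ := fun i k s => ∑' m, w m i * v (m + s) k with hT
  have h1 : ∀ i k s, HasSum (fun m => w m i * v (m + s) k) (T i k s) := fun i k s => (hs i k s).hasSum
  have h2 : ∀ i k s, HasSum (fun m => w (m - s) i * v m k) (T i k s) := by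
    intro i k s
    rw [← (Equiv.addRight s).hasSum_iff]
    convert h1 i k s using 2 with m
    simp
  have h10 : ∀ i k, HasSum (fun m => w m i * v m k) (T i k 0) := fun i k => by simpa using h1 i k 0
  refine ⟨∑ i, ∑ σ ∈ Rz, ∑ ρ ∈ Rz, ∑ k, Cz σ ρ i k *
    (T i k (ρ - σ) - T i k (-σ) - (T i k ρ - T i k 0)), ?_, ?_⟩
  · apply hasSum_sum; intro i _
    have : HasSum (fun m => ∑ σ ∈ Rz, ∑ ρ ∈ Rz, ∑ k, Cz σ ρ i k *
      (w m i * v (m + (ρ - σ)) k - w m i * v (m + -σ) k - (w m i * v (m + ρ) k - w m i * v m k)))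
      (∑ σ ∈ Rz, ∑ ρ ∈ Rz, ∑ k, Cz σ ρ i k *
    (T i k (ρ - σ) - T i k (-σ) - (T i k ρ - T i k 0))) := by
      apply hasSum_sum; intro σ _
      apply hasSum_sum; intro ρ _
      apply hasSum_sum; intro k _
      exact (((h1 i k _).sub (h1 i k _)).sub ((h1 i k _).sub (h10 i k))).mul_left _
    convert this using 2 with m
    simp only [Hz, Finset.mul_sum]
    refine Finset.sum_congr rfl fun σ _ => Finset.sum_congr rfl fun ρ _ => Finset.sum_congr rfl fun k _ => ?_
    rw [show m - σ + ρ = m + (ρ - σ) by abel, sub_eq_add_neg m σ]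
    ring
  · have : HasSum (fun m => ∑ i, ∑ σ ∈ Rz, ∑ ρ ∈ Rz, ∑ k, Cz σ ρ i k *
      (w (m - (ρ - σ)) i * v m k - w (m - -σ) i * v m k - (w (m - ρ) i * v m k - w m i * v m k)))
      (∑ i, ∑ σ ∈ Rz, ∑ ρ ∈ Rz, ∑ k, Cz σ ρ i k *
    (T i k (ρ - σ) - T i k (-σ) - (T i k ρ - T i k 0))) := by
      apply hasSum_sum; intro i _
      apply hasSum_sum; intro σ _
      apply hasSum_sum; intro ρ _
      apply hasSum_sum; intro k _
      exact (((h2 i k _).sub (h2 i k _)).sub ((h2 i k _).sub (h10 i k))).mul_left _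
    convert this using 2 with m
    simp only [Hz, Finset.sum_mul]
    have e1 : ∀ k, ∑ σ ∈ Rz, ∑ ρ ∈ Rz, ∑ i, Cz σ ρ k i *
      (w (m - σ + ρ) i - w (m - σ) i - (w (m + ρ) i - w m i)) * v m k =
      ∑ i, ∑ σ ∈ Rz, ∑ ρ ∈ Rz, Cz σ ρ i k *
      (w (m - (ρ - σ)) i * v m k - w (m - -σ) i * v m k - (w (m - ρ) i * v m k - w m i * v m k)) := by
      intro k
      rw [Finset.sum_comm]
      have : ∀ ρ ∈ Rz, ∑ σ ∈ Rz, ∑ i, Cz σ ρ k i *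
        (w (m - σ + ρ) i - w (m - σ) i - (w (m + ρ) i - w m i)) * v m k =
        ∑ i, ∑ σ ∈ Rz, Cz ρ σ i k * (w (m - (σ - ρ)) i * v m k - w (m - -ρ) i * v m k - (w (m - σ) i * v m k - w m i * v m k)) := by
        intro ρ _
        rw [Finset.sum_comm]
        refine Finset.sum_congr rfl fun i _ => Finset.sum_congr rfl fun σ _ => ?_
        rw [hC σ ρ k i, show m - (σ - ρ) = m - σ + ρ by abel, sub_neg_eq_add]
        ring
      rw [Finset.sum_congr rfl this, Finset.sum_comm]
    rw [Finset.sum_congr rfl (fun k _ => e1 k), Finset.sum_comm]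
    refine Finset.sum_congr rfl fun i _ => ?_
    rw [Finset.sum_comm]
    refine Finset.sum_congr rfl fun σ _ => ?_
    rw [Finset.sum_comm]

theorem Hz_shift {X : Type} [AddCommGroup X] {N : ℕ} (Rz : Finset X) (Cz : X → X → Fin N → Fin N → ℝ)
    (w : X → Fin N → ℝ) (a m : X) (i : Fin N) :
    Hz Rz Cz (fun y => w (y - a)) m i = Hz Rz Cz w (m - a) i := by
  simp only [Hz]
  refine Finset.sum_congr rfl fun σ _ => Finset.sum_congr rfl fun ρ _ => Finset.sum_congr rfl fun k _ => ?_
  rw [show m - σ + ρ - a = m - a - σ + ρ by abel, show m - σ - a = m - a - σ by abel,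
    show m + ρ - a = m - a + ρ by abel]

theorem rep_fin {X : Type} [AddCommGroup X] [DecidableEq X] {N : ℕ} (Rz : Finset X) (Cz : X → X → Fin N → Fin N → ℝ)
    (hC : ∀ σ ρ i j, Cz σ ρ i j = Cz ρ σ j i) (g : X → Fin N → Fin N → ℝ)
    (hg : ∀ k m i, Hz Rz Cz (fun y i => g y i k) m i = if m = 0 then (if i = k then 1 else 0) else 0)
    (v : X → Fin N → ℝ) (hv : {m | v m ≠ 0}.Finite) (ℓ : X) (k : Fin N) :
    HasSum (fun m => ∑ i, g (m - ℓ) i k * Hz Rz Cz v m i) (v ℓ k) := by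
  obtain ⟨S, h1, h2⟩ := Hz_adj Rz Cz hC (fun y i => g (y - ℓ) i k) v (fun i k' s => by
    apply summable_of_hasFiniteSupport
    apply (hv.preimage ((add_left_injective s).injOn)).subset
    intro m hm
    simp only [Function.mem_support] at hm
    intro h
    apply hm
    rw [h]; simp)
  have h3 : HasSum (fun m => ∑ i, Hz Rz Cz (fun y i => g (y - ℓ) i k) m i * v m i) (v ℓ k) := by
    convert hasSum_single ℓ ?_ using 1
    · rw [Finset.sum_eq_single k]
      · rw [Hz_shift Rz Cz (fun y i => g y i k), hg]; simp
      · intro i _ hi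
        rw [Hz_shift Rz Cz (fun y i => g y i k), hg]; simp [hi]
      · simp
    · intro m hm
      apply Finset.sum_eq_zero
      intro i _
      rw [Hz_shift Rz Cz (fun y i => g y i k), hg, if_neg (by rwa [sub_eq_zero]), zero_mul]
  rw [← h2.unique h3]; exact h1

theorem comm_bound (d : ℕ) (A : Matrix (Fin d) (Fin d) ℝ) (hA : IsUnit A.det)
    (w : (Fin d → ℤ) → ℝ)
    (hw : ∀ a, Tendsto (fun m => w (m + a) - w m) cofinite (𝓝 0)) (σ ρ : Fin d → ℤ) :
    ∃ (K : ℝ) (e : (Fin d → ℤ) → ℝ), 0 < K ∧ (∀ m, 0 ≤ e m) ∧ Tendsto e cofinite (𝓝 0) ∧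
      ∀ T : ℝ, 1 ≤ T → ∀ m, 
        |(cut d A 0 T (m - σ + ρ) * w (m - σ + ρ) - cut d A 0 T (m - σ) * w (m - σ) -
          (cut d A 0 T (m + ρ) * w (m + ρ) - cut d A 0 T m * w m)) -
          cut d A 0 T m * (w (m - σ + ρ) - w (m - σ) - (w (m + ρ) - w m))| ≤
          if bz d A m ≤ K * T then e m / T else 0 := by
  have hb := brk_bz d A hA
  obtain ⟨C1, hC1, h1⟩ := cut_bound d A [-σ]
  obtain ⟨C2, hC2, h2⟩ := cut_bound d A [ρ]
  obtain ⟨C3, hC3, h3⟩ := cut_bound d A [-σ, ρ]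
  set K : ℝ := 3 + ‖lat d A σ‖ + ‖lat d A ρ‖ with hK
  have hK0 : 0 < K := by positivity
  refine ⟨K, fun m => C1 * |(w (m + (ρ - σ)) - w m) - (w (m + -σ) - w m)| +
    C2 * |(w (m + (ρ - σ)) - w m) - (w (m + ρ) - w m)| +
    C3 * K * (|w (m + (ρ - σ))| / bz d A m), hK0, fun m => ?_, ?_, fun T hT m => ?_⟩
  · have := hb.pos m; positivity
  · have e1 := (((hw (ρ - σ)).sub (hw (-σ))).abs.const_mul C1).add
      (((hw (ρ - σ)).sub (hw ρ)).abs.const_mul C2)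
    have e2 := e1.add ((growth d A hA w hw (ρ - σ)).const_mul (C3 * K))
    simpa using e2
  · have hT0 : 0 < T := by linarith
    have hbm := hb.pos m
    split_ifs with hm
    · have g1 := h1 0 T hT0 m
      have g2 := h2 0 T hT0 m
      have g3 := h3 0 T hT0 m
      simp only [dl, List.length_cons, List.length_nil, zero_add, pow_one] at g1 g2 g3
      rw [← sub_eq_add_neg] at g1
      simp only [show m + ρ + -σ = m - σ + ρ by abel, ← sub_eq_add_neg] at g3
      set η00 := cut d A 0 T m
      set η10 := cut d A 0 T (m - σ)
      set η01 := cut d A 0 T (m + ρ)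
      set η11 := cut d A 0 T (m - σ + ρ)
      beta_reduce
      rw [show m + (ρ - σ) = m - σ + ρ by abel, ← sub_eq_add_neg]
      set w00 := w m
      set w10 := w (m - σ)
      set w01 := w (m + ρ)
      set w11 := w (m - σ + ρ)
      rw [show η11 * w11 - η10 * w10 - (η01 * w01 - η00 * w00) - η00 * (w11 - w10 - (w01 - w00)) =
        (η10 - η00) * ((w11 - w00) - (w10 - w00)) + (η01 - η00) * ((w11 - w00) - (w01 - w00)) +
          (η11 - η01 - (η10 - η00)) * w11 by ring]
      have t1 : |(η10 - η00) * ((w11 - w00) - (w10 - w00))| ≤ C1 * T⁻¹ * |(w11 - w00) - (w10 - w00)| := by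
        rw [abs_mul]; gcongr
      have t2 : |(η01 - η00) * ((w11 - w00) - (w01 - w00))| ≤ C2 * T⁻¹ * |(w11 - w00) - (w01 - w00)| := by
        rw [abs_mul]; gcongr
      have t3 : |(η11 - η01 - (η10 - η00)) * w11| ≤ C3 * K * (|w11| / bz d A m) * T⁻¹ := by
        rw [abs_mul]
        have hh : 1 ≤ K * T / bz d A m := by rw [le_div_iff₀ hbm]; linarith
        calc _ ≤ C3 * T⁻¹ ^ 2 * |w11| := by gcongr
          _ ≤ C3 * T⁻¹ ^ 2 * |w11| * (K * T / bz d A m) := le_mul_of_one_le_right (by positivity) hh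
          _ = _ := by field_simp
      refine (abs_add_le _ _).trans ?_
      have := abs_add_le ((η10 - η00) * ((w11 - w00) - (w10 - w00))) ((η01 - η00) * ((w11 - w00) - (w01 - w00)))
      rw [div_eq_mul_inv]
      nlinarith
    · push Not at hm
      have hz : ∀ y, ‖lat d A y‖ ≤ ‖lat d A σ‖ + ‖lat d A ρ‖ → cut d A 0 T (m + y) = 0 := by
        intro y hy
        apply cut_supp d A 0 T hT0
        rw [sub_zero, map_add]
        have n1 := norm_sub_le_norm_add (lat d A m) (lat d A y)
        simp only [bz] at hm
        have : ‖lat d A σ‖ + ‖lat d A ρ‖ ≤ (‖lat d A σ‖ + ‖lat d A ρ‖) * T :=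
          le_mul_of_one_le_right (by positivity) hT
        rw [hK] at hm
        nlinarith
      have z0 := hz 0 (by simp; positivity)
      have z1 := hz (-σ) (by simp)
      have z2 := hz ρ (by simp)
      have z3 := hz (ρ - σ) (by rw [map_sub]; exact (norm_sub_le _ _).trans (by linarith))
      rw [add_zero] at z0
      rw [← sub_eq_add_neg] at z1
      rw [show m + (ρ - σ) = m - σ + ρ by abel] at z3
      rw [z0, z1, z2, z3]; simp

theorem cesaro (d : ℕ) (hd : 1 ≤ d) (A : Matrix (Fin d) (Fin d) ℝ) (hA : IsUnit A.det)
    (e κ : (Fin d → ℤ) → ℝ) (he0 : ∀ m, 0 ≤ e m) (he : Tendsto e cofinite (𝓝 0)) (Cκ : ℝ)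
    (hκ : ∀ m, |κ m| ≤ Cκ * bz d A m ^ ((1 : ℝ) - d)) (K : ℝ) (hK : 0 < K)
    (E : ℕ → (Fin d → ℤ) → ℝ)
    (hE : ∀ n m, |E n m| ≤ if bz d A m ≤ K * (n + 1) then e m / (n + 1) else 0) :
    (∀ n, Summable (fun m => κ m * E n m)) ∧ Tendsto (fun n => ∑' m, κ m * E n m) atTop (𝓝 0) := by
  classical
  have hb := brk_bz d A hA
  obtain ⟨C, hC, hlow⟩ := hb.low1 hd
  have hCκ : 0 ≤ Cκ := by
    have := (abs_nonneg _).trans (hκ 0)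
    exact nonneg_of_mul_nonneg_left this (Real.rpow_pos_of_pos (hb.pos 0) _)
  let Fs : ℕ → Finset (Fin d → ℤ) := fun n => (hb.finite (K * (n + 1))).toFinset
  have hFs : ∀ n m, m ∈ Fs n ↔ bz d A m ≤ K * (n + 1) := fun n m => by simp [Fs]
  have hz : ∀ n m, m ∉ Fs n → κ m * E n m = 0 := by
    intro n m hm
    rw [hFs] at hm
    have := hE n m
    rw [if_neg hm] at this
    rw [abs_nonpos_iff.1 this, mul_zero]
  refine ⟨fun n => (hasSum_sum_of_ne_finset_zero (hz n)).summable, ?_⟩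
  rw [Metric.tendsto_atTop]
  intro ε hε
  set ε' := ε / (2 * (Cκ + 1) * C * K) with hε'
  have hε'0 : 0 < ε' := by positivity
  have hbad : {m | ¬ e m < ε'}.Finite := eventually_cofinite.1 (he.eventually_lt_const hε'0)
  set B : ℝ := ∑ m ∈ hbad.toFinset, bz d A m ^ ((1 : ℝ) - d) * e m with hB
  have hB0 : 0 ≤ B := Finset.sum_nonneg fun m _ => mul_nonneg (Real.rpow_nonneg (hb.pos m).le _) (he0 m)
  obtain ⟨n0, hn0⟩ := exists_nat_gt (2 * (Cκ + 1) * B / ε)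
  refine ⟨n0, fun n hn => ?_⟩
  have hn1 : (0 : ℝ) < n + 1 := by positivity
  have hnn : (n0 : ℝ) ≤ n := by exact_mod_cast hn
  rw [dist_zero_right, Real.norm_eq_abs, tsum_eq_sum (hz n)]
  have key : ∑ m ∈ Fs n, bz d A m ^ ((1 : ℝ) - d) * e m ≤ B + ε' * (C * (K * (n + 1))) := by
    calc _ ≤ ∑ m ∈ Fs n, ((if m ∈ hbad.toFinset then bz d A m ^ ((1 : ℝ) - d) * e m else 0) +
            ε' * bz d A m ^ ((1 : ℝ) - d)) := by
          apply Finset.sum_le_sum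
          intro m _
          have hp : 0 < bz d A m ^ ((1 : ℝ) - d) := Real.rpow_pos_of_pos (hb.pos m) _
          split_ifs with h
          · have : 0 < ε' * bz d A m ^ ((1 : ℝ) - d) := by positivity
            linarith
          · simp only [Set.Finite.mem_toFinset, Set.mem_ofPred_eq, not_not] at h
            nlinarith
      _ ≤ _ := by
          rw [Finset.sum_add_distrib, ← Finset.mul_sum]
          gcongr
          · rw [← Finset.sum_filter]
            apply Finset.sum_le_sum_of_subset_of_nonneg
            · intro m hm; exact (Finset.mem_filter.1 hm).2
            · intro m _ _; exact mul_nonneg (Real.rpow_nonneg (hb.pos m).le _) (he0 m)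
          · exact hlow _ (by positivity) _ (fun m hm => (hFs n m).1 hm)
  calc |∑ m ∈ Fs n, κ m * E n m| ≤ ∑ m ∈ Fs n, (Cκ / (n + 1)) * (bz d A m ^ ((1 : ℝ) - d) * e m) := by
        refine (Finset.abs_sum_le_sum_abs _ _).trans (Finset.sum_le_sum fun m hm => ?_)
        have h1 := hE n m
        rw [if_pos ((hFs n m).1 hm)] at h1
        rw [abs_mul]
        calc _ ≤ (Cκ * bz d A m ^ ((1 : ℝ) - d)) * (e m / (n + 1)) :=
              mul_le_mul (hκ m) h1 (abs_nonneg _) ((abs_nonneg _).trans (hκ m))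
          _ = _ := by field_simp
    _ ≤ (Cκ / (n + 1)) * (B + ε' * (C * (K * (n + 1)))) := by rw [← Finset.mul_sum]; gcongr
    _ < ε := by
        rw [div_mul_eq_mul_div, div_lt_iff₀ hn1]
        have e1 : ε' * (C * (K * (n + 1))) = ε * (n + 1) / (2 * (Cκ + 1)) := by rw [hε']; field_simp
        rw [e1]
        rw [div_lt_iff₀ hε] at hn0
        have h4 : Cκ * (ε * (n + 1) / (2 * (Cκ + 1))) ≤ ε * (n + 1) / 2 := by
          rw [mul_div_assoc', div_le_div_iff₀ (by positivity) (by norm_num)]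
          nlinarith [mul_pos hε hn1]
        have h5 : 2 * ((Cκ + 1) * B) < ε * (n + 1) := by nlinarith
        nlinarith

theorem rep (d : ℕ) (hd : 1 ≤ d) (A : Matrix (Fin d) (Fin d) ℝ) (hA : IsUnit A.det) {N : ℕ}
    (Rz : Finset (Fin d → ℤ)) (Cz : (Fin d → ℤ) → (Fin d → ℤ) → Fin N → Fin N → ℝ)
    (hC : ∀ σ ρ i j, Cz σ ρ i j = Cz ρ σ j i) (g : (Fin d → ℤ) → Fin N → Fin N → ℝ)
    (hg : ∀ k m i, Hz Rz Cz (fun y i => g y i k) m i = if m = 0 then (if i = k then 1 else 0) else 0)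
    (w : (Fin d → ℤ) → Fin N → ℝ)
    (hw : ∀ k a, Tendsto (fun m => w (m + a) k - w m k) cofinite (𝓝 0))
    (hs : ∀ i, Summable (fun m => bz d A m ^ ((1 : ℝ) - d) * |Hz Rz Cz w m i|))
    (ℓ ρ : Fin d → ℤ) (k : Fin N) (Cκ : ℝ)
    (hκ : ∀ i m, |g (m - (ℓ + ρ)) i k - g (m - ℓ) i k| ≤ Cκ * bz d A m ^ ((1 : ℝ) - d)) :
    HasSum (fun m => ∑ i, (g (m - (ℓ + ρ)) i k - g (m - ℓ) i k) * Hz Rz Cz w m i)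
      (w (ℓ + ρ) k - w ℓ k) := by
  classical
  have hb := brk_bz d A hA
  set κ : Fin N → (Fin d → ℤ) → ℝ := fun i m => g (m - (ℓ + ρ)) i k - g (m - ℓ) i k with hκd
  set η : ℕ → (Fin d → ℤ) → ℝ := fun n => cut d A 0 ((n : ℝ) + 1) with hη
  have hTn : ∀ n : ℕ, (1 : ℝ) ≤ n + 1 := fun n => by simp
  -- commutator terms
  set cm : Fin N → (Fin d → ℤ) → (Fin d → ℤ) → ℕ → (Fin d → ℤ) → ℝ := fun k' σ ρ' n m =>
    (η n (m - σ + ρ') * w (m - σ + ρ') k' - η n (m - σ) * w (m - σ) k' -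
          (η n (m + ρ') * w (m + ρ') k' - η n m * w m k')) -
          η n m * (w (m - σ + ρ') k' - w (m - σ) k' - (w (m + ρ') k' - w m k')) with hcm
  have hces : ∀ i k' σ ρ', (∀ n, Summable (fun m => κ i m * cm k' σ ρ' n m)) ∧
      Tendsto (fun n => ∑' m, κ i m * cm k' σ ρ' n m) atTop (𝓝 0) := by
    intro i k' σ ρ'
    obtain ⟨K, e, hK, he0, he, h⟩ := comm_bound d A hA (fun m => w m k') (hw k') σ ρ'
    exact cesaro d hd A hA e (κ i) he0 he Cκ (hκ i) K hK (cm k' σ ρ')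
      (fun n m => h (n + 1) (hTn n) m)
  have hHv : ∀ n m i, Hz Rz Cz (fun m k => η n m * w m k) m i = η n m * Hz Rz Cz w m i +
      ∑ σ ∈ Rz, ∑ ρ' ∈ Rz, ∑ k', Cz σ ρ' i k' * cm k' σ ρ' n m := by
    intro n m i
    simp only [Hz, Finset.mul_sum, ← Finset.sum_add_distrib, hcm]
    refine Finset.sum_congr rfl fun σ _ => Finset.sum_congr rfl fun ρ _ => Finset.sum_congr rfl fun k _ => ?_
    ring
  have hfin : ∀ n, {m | (fun m k => η n m * w m k) m ≠ 0}.Finite := by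
    intro n
    apply (hb.finite (((n : ℝ) + 1) / 4 + 2)).subset
    intro m hm
    by_contra hcon
    apply hm
    have hcon' : ¬ (bz d A m ≤ ((n : ℝ) + 1) / 4 + 2) := hcon
    have : η n m = 0 := by
      apply cut_supp d A 0 _ (by linarith [hTn n])
      rw [sub_zero]
      simp only [bz] at hcon'
      linarith
    funext k'
    simp [this]
  have hrep : ∀ n, HasSum (fun m => ∑ i, κ i m * Hz Rz Cz (fun m k => η n m * w m k) m i)
      (η n (ℓ + ρ) * w (ℓ + ρ) k - η n ℓ * w ℓ k) := by
    intro n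
    have h1 := (rep_fin Rz Cz hC g hg _ (hfin n) (ℓ + ρ) k).sub (rep_fin Rz Cz hC g hg _ (hfin n) ℓ k)
    have h2 : (fun m => ∑ i, κ i m * Hz Rz Cz (fun m k => η n m * w m k) m i) = fun m =>
        ∑ i, g (m - (ℓ + ρ)) i k * Hz Rz Cz (fun m k => η n m * w m k) m i -
        ∑ i, g (m - ℓ) i k * Hz Rz Cz (fun m k => η n m * w m k) m i := by
      funext m
      rw [← Finset.sum_sub_distrib]
      exact Finset.sum_congr rfl fun i _ => by simp only [hκd]; ring
    rw [h2]
    exact h1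
  -- domination
  have hdom : ∀ i, Summable (fun m => Cκ * (bz d A m ^ ((1 : ℝ) - d) * |Hz Rz Cz w m i|)) :=
    fun i => (hs i).mul_left _
  have hle : ∀ n i m, |κ i m * (η n m * Hz Rz Cz w m i)| ≤
      Cκ * (bz d A m ^ ((1 : ℝ) - d) * |Hz Rz Cz w m i|) := by
    intro n i m
    rw [abs_mul, abs_mul, ← mul_assoc Cκ]
    have h1 : |η n m| * |Hz Rz Cz w m i| ≤ |Hz Rz Cz w m i| :=
      mul_le_of_le_one_left (abs_nonneg _) (cut_abs _ _ _ _ _)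
    exact mul_le_mul (hκ i m) h1 (by positivity) ((abs_nonneg _).trans (hκ i m))
  have hle' : ∀ i m, |κ i m * Hz Rz Cz w m i| ≤
      Cκ * (bz d A m ^ ((1 : ℝ) - d) * |Hz Rz Cz w m i|) := by
    intro i m
    rw [abs_mul, ← mul_assoc]
    exact mul_le_mul_of_nonneg_right (hκ i m) (abs_nonneg _)
  have hη1 : ∀ m, ∀ᶠ n in atTop, η n m = 1 := by
    intro m
    obtain ⟨n0, hn0⟩ := exists_nat_gt (8 * ‖lat d A m‖)
    filter_upwards [eventually_ge_atTop n0] with n hn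
    apply cut_one d A 0 _ (by linarith [hTn n])
    have : (n0 : ℝ) ≤ n := by exact_mod_cast hn
    rw [sub_zero]; linarith
  have hsum1 : ∀ n i, Summable (fun m => κ i m * (η n m * Hz Rz Cz w m i)) := fun n i =>
    Summable.of_norm_bounded (hdom i) (hle n i)
  have hsum0 : ∀ i, Summable (fun m => κ i m * Hz Rz Cz w m i) := fun i =>
    Summable.of_norm_bounded (hdom i) (hle' i)
  have hlim1 : ∀ i, Tendsto (fun n => ∑' m, κ i m * (η n m * Hz Rz Cz w m i)) atTop
      (𝓝 (∑' m, κ i m * Hz Rz Cz w m i)) := by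
    intro i
    apply tendsto_tsum_of_dominated_convergence (hdom i)
    · intro m
      apply tendsto_const_nhds.congr'
      filter_upwards [hη1 m] with n hn
      rw [hn, one_mul]
    · exact Eventually.of_forall fun n m => hle n i m
  have heq : ∀ n, η n (ℓ + ρ) * w (ℓ + ρ) k - η n ℓ * w ℓ k =
      ∑ i, (∑' m, κ i m * (η n m * Hz Rz Cz w m i) +
        ∑ σ ∈ Rz, ∑ ρ' ∈ Rz, ∑ k', Cz σ ρ' i k' * ∑' m, κ i m * cm k' σ ρ' n m) := by
    intro n
    refine (hrep n).unique ?_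
    apply hasSum_sum; intro i _
    have : HasSum (fun m => κ i m * (η n m * Hz Rz Cz w m i) +
        ∑ σ ∈ Rz, ∑ ρ' ∈ Rz, ∑ k', Cz σ ρ' i k' * (κ i m * cm k' σ ρ' n m))
        (∑' m, κ i m * (η n m * Hz Rz Cz w m i) +
        ∑ σ ∈ Rz, ∑ ρ' ∈ Rz, ∑ k', Cz σ ρ' i k' * ∑' m, κ i m * cm k' σ ρ' n m) := by
      apply (hsum1 n i).hasSum.add
      apply hasSum_sum; intro σ _
      apply hasSum_sum; intro ρ' _
      apply hasSum_sum; intro k' _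
      exact (((hces i k' σ ρ').1 n).hasSum).mul_left _
    convert this using 2 with m
    rw [hHv, mul_add, Finset.mul_sum]
    congr 1
    refine Finset.sum_congr rfl fun σ _ => ?_
    rw [Finset.mul_sum]
    refine Finset.sum_congr rfl fun ρ' _ => ?_
    rw [Finset.mul_sum]
    exact Finset.sum_congr rfl fun k' _ => by ring
  have hlimR : Tendsto (fun n => ∑ i, (∑' m, κ i m * (η n m * Hz Rz Cz w m i) +
        ∑ σ ∈ Rz, ∑ ρ' ∈ Rz, ∑ k', Cz σ ρ' i k' * ∑' m, κ i m * cm k' σ ρ' n m)) atTop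
      (𝓝 (∑ i, (∑' m, κ i m * Hz Rz Cz w m i + ∑ σ ∈ Rz, ∑ ρ' ∈ Rz, ∑ k', Cz σ ρ' i k' * 0))) := by
    apply tendsto_finsetSum; intro i _
    apply (hlim1 i).add
    apply tendsto_finsetSum; intro σ _
    apply tendsto_finsetSum; intro ρ' _
    apply tendsto_finsetSum; intro k' _
    exact ((hces i k' σ ρ').2).const_mul _
  have hlimL : Tendsto (fun n => η n (ℓ + ρ) * w (ℓ + ρ) k - η n ℓ * w ℓ k) atTop
      (𝓝 (w (ℓ + ρ) k - w ℓ k)) := by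
    apply tendsto_const_nhds.congr'
    filter_upwards [hη1 (ℓ + ρ), hη1 ℓ] with n h1 h2
    rw [h1, h2, one_mul, one_mul]
  simp only [heq] at hlimL
  have hfinal := tendsto_nhds_unique hlimL hlimR
  simp only [mul_zero, Finset.sum_const_zero, add_zero] at hfinal
  rw [hfinal]
  exact hasSum_sum fun i _ => (hsum0 i).hasSum

theorem tends_all {X : Type} [AddCommGroup X] (Rz : Finset X)
    (hspan : AddSubgroup.closure (Rz : Set X) = ⊤) (w : X → ℝ)
    (hw : ∀ ρ ∈ Rz, Tendsto (fun m => w (m + ρ) - w m) cofinite (𝓝 0)) (a : X) :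
    Tendsto (fun m => w (m + a) - w m) cofinite (𝓝 0) := by
  have ha : a ∈ AddSubgroup.closure (Rz : Set X) := by rw [hspan]; trivial
  induction ha using AddSubgroup.closure_induction with
  | mem x hx => exact hw x hx
  | zero => simpa using tendsto_const_nhds
  | add x y _ _ hx hy =>
    have h1 := hy.comp ((add_left_injective x).tendsto_cofinite)
    have h2 := h1.add hx
    rw [add_zero] at h2
    refine h2.congr fun m => ?_
    simp only [Function.comp_apply, add_assoc]; ring
  | neg x _ hx =>
    have h1 := (hx.comp ((add_left_injective (-x)).tendsto_cofinite)).neg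
    rw [neg_zero] at h1
    refine h1.congr fun m => ?_
    simp

theorem Brk.cmp {X : Type} [AddCommGroup X] {d : ℕ} {b : X → ℝ} (hb : Brk X d b) (a : ℝ) (α : ℕ) (y : X) :
    ∃ C : ℝ, 0 < C ∧ ∀ m, b (m + y) ^ a * Real.log (b (m + y)) ^ α ≤ C * (b m ^ a * Real.log (b m) ^ α) := by
  obtain ⟨C, hC, h⟩ := comparable (b y) (by linarith [hb.two_le y]) a α
  refine ⟨C, hC, fun m => h _ _ (hb.two_le _) (hb.two_le _) ?_ ?_⟩
  · have := hb.add_le m y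
    nlinarith [hb.two_le m, hb.two_le y]
  · have := hb.add_le (m + y) (-y)
    rw [hb.neg, add_neg_cancel_right] at this
    nlinarith [hb.two_le (m + y), hb.two_le y]

theorem Brk.summ {X : Type} [AddCommGroup X] {d : ℕ} {b : X → ℝ} (hb : Brk X d b) (s : ℝ) (hs : 0 < s) (α : ℕ) :
    Summable (fun m => b m ^ (-(d : ℝ) - s) * Real.log (b m) ^ α) := by
  obtain ⟨C, hC, h⟩ := hb.tail s hs α
  refine summable_of_sum_le (fun m => ?_) (fun F => h 2 le_rfl F (fun x _ => hb.two_le x))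
  have : 0 ≤ Real.log (b m) := Real.log_nonneg (by linarith [hb.two_le m])
  have := Real.rpow_nonneg (hb.pos m).le (-(d : ℝ) - s)
  positivity

/-- Standing assumptions on the lattice Green's function, in index coordinates. -/
structure GSet (d N : ℕ) (A : Matrix (Fin d) (Fin d) ℝ) (Rz : Finset (Fin d → ℤ))
    (Cz : (Fin d → ℤ) → (Fin d → ℤ) → Fin N → Fin N → ℝ)
    (g : (Fin d → ℤ) → Fin N → Fin N → ℝ) : Prop where
  hd : 2 ≤ d
  hA : IsUnit A.det
  neg : ∀ ρ ∈ Rz, -ρ ∈ Rz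
  span : AddSubgroup.closure (Rz : Set (Fin d → ℤ)) = ⊤
  hC : ∀ σ ρ i j, Cz σ ρ i j = Cz ρ σ j i
  hg : ∀ k m i, Hz Rz Cz (fun y i => g y i k) m i = if m = 0 then (if i = k then 1 else 0) else 0
  decay : ∀ l : List (Fin d → ℤ), l ≠ [] → (∀ ρ ∈ l, ρ ∈ Rz) → ∀ i k, ∃ C, 0 < C ∧ ∀ z,
    |dl l (fun y => g y i k) z| ≤ C * bz d A z ^ ((2 : ℝ) - d - l.length)

section
variable {d N : ℕ} {A : Matrix (Fin d) (Fin d) ℝ} {Rz : Finset (Fin d → ℤ)}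
    {Cz : (Fin d → ℤ) → (Fin d → ℤ) → Fin N → Fin N → ℝ}
    {g : (Fin d → ℤ) → Fin N → Fin N → ℝ}

theorem GSet.ker (H : GSet d N A Rz Cz g) (ℓ ρ : Fin d → ℤ) (hρ : ρ ∈ Rz) (k : Fin N) :
    ∃ C, ∀ i m, |g (m - (ℓ + ρ)) i k - g (m - ℓ) i k| ≤ C * bz d A m ^ ((1 : ℝ) - d) := by
  have hb := brk_bz d A H.hA
  obtain ⟨C1, hC1, h1⟩ := hb.cmp ((1 : ℝ) - d) 0 (-ℓ)
  choose C hC h using fun i => H.decay [-ρ] (by simp) (by simpa using H.neg ρ hρ) i k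
  refine ⟨(∑ i, C i) * C1, fun i m => ?_⟩
  have h2 := h i (m - ℓ)
  simp only [dl, List.length_cons, List.length_nil, zero_add, Nat.cast_one] at h2
  rw [show m - ℓ + -ρ = m - (ℓ + ρ) by abel, show (2 : ℝ) - d - 1 = 1 - d by ring] at h2
  refine h2.trans ?_
  have h3 := h1 m
  simp only [pow_zero, mul_one, ← sub_eq_add_neg] at h3
  have h4 : C i ≤ ∑ i, C i := Finset.single_le_sum (fun i _ => (hC i).le) (Finset.mem_univ i)
  have := Real.rpow_nonneg (hb.pos (m - ℓ)).le ((1 : ℝ) - d)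
  calc C i * _ ≤ (∑ i, C i) * (C1 * bz d A m ^ ((1 : ℝ) - d)) :=
        mul_le_mul h4 h3 this ((hC i).le.trans h4)
    _ = _ := by ring

theorem GSet.symm (H : GSet d N A Rz Cz g) (ℓ ρ : Fin d → ℤ) (hρ : ρ ∈ Rz) (k k' : Fin N) :
    g (ℓ + ρ) k k' - g ℓ k k' = g (-(ℓ + ρ)) k' k - g (-ℓ) k' k := by
  have hb := brk_bz d A H.hA
  have hd := H.hd
  obtain ⟨C, hC⟩ := H.ker ℓ ρ hρ k
  have h0 : ∀ m ≠ (0 : Fin d → ℤ), ∀ i, Hz Rz Cz (fun y i => g y i k') m i = 0 := by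
    intro m hm i
    rw [H.hg, if_neg hm]
  have h1 := rep d (by omega) A H.hA Rz Cz H.hC g H.hg (fun y i => g y i k') ?_ ?_ ℓ ρ k C hC
  · have h2 := h1.unique (hasSum_single 0 (fun m hm => by
      apply Finset.sum_eq_zero
      intro i _
      rw [h0 m hm, mul_zero]))
    rw [h2, Finset.sum_eq_single k']
    · rw [H.hg]; simp
    · intro i _ hi
      rw [H.hg]; simp [hi]
    · simp
  · intro i a
    refine tends_all Rz H.span (fun m => g m i k') ?_ a
    intro ρ' hρ'
    obtain ⟨C2, hC2, h2⟩ := H.decay [ρ'] (by simp) (by simpa using hρ') i k'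
    have h3 : Tendsto (fun m => C2 * bz d A m ^ ((2 : ℝ) - d - ([ρ'].length : ℕ))) cofinite (𝓝 (C2 * 0)) := by
      apply Tendsto.const_mul
      have h4 : (2 : ℝ) - d - ([ρ'].length : ℕ) = -((d : ℝ) - 1) := by simp; ring
      rw [h4]
      have h5 : (2 : ℝ) ≤ d := by exact_mod_cast hd
      exact (tendsto_rpow_neg_atTop (by linarith)).comp hb.tendsto
    rw [mul_zero] at h3
    exact squeeze_zero_norm (fun m => h2 m) h3
  · intro i
    apply summable_of_hasFiniteSupport
    apply (Set.finite_singleton (0 : Fin d → ℤ)).subset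
    intro m hm
    by_contra hcon
    apply hm
    simp [h0 m hcon]

theorem dl_hasSum {X ι : Type} [AddCommGroup X] [Fintype ι] (f : X → ι → ℝ) (l : List X) :
    ∀ (K : X → ι → ℝ) (h : X → ℝ), (∀ ℓ, HasSum (fun m => ∑ i, K (ℓ - m) i * f m i) (h ℓ)) →
    ∀ ℓ, HasSum (fun m => ∑ i, dl l (fun y => K y i) (ℓ - m) * f m i) (dl l h ℓ) := by
  induction l with
  | nil => intro K h hh ℓ; exact hh ℓ
  | cons ρ l ih =>
    intro K h hh ℓ
    refine ih (fun y i => K (y + ρ) i - K y i) (fun x => h (x + ρ) - h x) (fun ℓ => ?_) ℓ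
    have h1 := (hh (ℓ + ρ)).sub (hh ℓ)
    have h2 : (fun m => ∑ i, (K (ℓ - m + ρ) i - K (ℓ - m) i) * f m i) = fun m =>
        ∑ i, K (ℓ + ρ - m) i * f m i - ∑ i, K (ℓ - m) i * f m i := by
      funext m
      rw [← Finset.sum_sub_distrib]
      refine Finset.sum_congr rfl fun i _ => ?_
      rw [show ℓ + ρ - m = ℓ - m + ρ by abel]; ring
    rw [h2]; exact h1

theorem GSet.conv (H : GSet d N A Rz Cz g) (u : (Fin d → ℤ) → Fin N → ℝ)
    (hu : ∀ k, ∀ ρ ∈ Rz, Tendsto (fun m => u (m + ρ) k - u m k) cofinite (𝓝 0))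
    (α : ℕ) (c : ℝ) (hf : ∀ m i, |Hz Rz Cz u m i| ≤ c * (bz d A m ^ (-(d : ℝ)) * Real.log (bz d A m) ^ α))
    (l : List (Fin d → ℤ)) (hl : l ≠ []) (hlR : ∀ ρ ∈ l, ρ ∈ Rz) (k : Fin N) (ℓ : Fin d → ℤ) :
    HasSum (fun m => ∑ i, dl l (fun y => g y k i) (ℓ - m) * Hz Rz Cz u m i) (dl l (fun y => u y k) ℓ) := by
  have hb := brk_bz d A H.hA
  have hd := H.hd
  obtain _ | ⟨ρ, l⟩ := l
  · exact absurd rfl hl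
  have hρ : ρ ∈ Rz := hlR ρ (by simp)
  have hd2 : (2 : ℝ) ≤ d := by exact_mod_cast hd
  have hsum : ∀ i, Summable (fun m => bz d A m ^ ((1 : ℝ) - d) * |Hz Rz Cz u m i|) := by
    intro i
    refine Summable.of_nonneg_of_le (fun m => ?_) (fun m => ?_)
      ((hb.summ ((d : ℝ) - 1) (by linarith) α).mul_left c)
    · have := Real.rpow_nonneg (hb.pos m).le ((1 : ℝ) - d)
      exact mul_nonneg this (abs_nonneg _)
    · have h0 := Real.rpow_nonneg (hb.pos m).le ((1 : ℝ) - d)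
      have e : bz d A m ^ (-(d : ℝ) - ((d : ℝ) - 1)) = bz d A m ^ ((1 : ℝ) - d) * bz d A m ^ (-(d : ℝ)) := by
        rw [← Real.rpow_add (hb.pos m)]; congr 1; ring
      rw [e]
      refine (mul_le_mul_of_nonneg_left (hf m i) h0).trans (le_of_eq (by ring))
  have hu' := fun k a => tends_all Rz H.span (fun m => u m k) (hu k) a
  generalize hF : Hz Rz Cz u = F at hsum ⊢
  have hstep : ∀ ℓ, HasSum (fun m => ∑ i, (g (ℓ - m + ρ) k i - g (ℓ - m) k i) * F m i)
      (u (ℓ + ρ) k - u ℓ k) := by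
    intro ℓ
    obtain ⟨C, hC⟩ := H.ker ℓ ρ hρ k
    have h1 := rep d (by omega) A H.hA Rz Cz H.hC g H.hg u hu' (by rw [hF]; exact hsum) ℓ ρ k C hC
    rw [hF] at h1
    have h2 : (fun m => ∑ i, (g (ℓ - m + ρ) k i - g (ℓ - m) k i) * F m i) = fun m =>
        ∑ i, (g (m - (ℓ + ρ)) i k - g (m - ℓ) i k) * F m i := by
      funext m
      refine Finset.sum_congr rfl fun i _ => ?_
      rw [H.symm (ℓ - m) ρ hρ k i, show -(ℓ - m + ρ) = m - (ℓ + ρ) by abel, neg_sub]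
    rw [h2]; exact h1
  simp only [dl_cons']
  exact dl_hasSum F l (fun y i => g (y + ρ) k i - g y k i) (fun y => u (y + ρ) k - u y k) hstep ℓ

end

theorem abs_tsum_le {X : Type} {φ : X → ℝ} {B : ℝ} (h : ∀ F : Finset X, ∑ m ∈ F, |φ m| ≤ B) :
    Summable φ ∧ |∑' m, φ m| ≤ B := by
  have h1 : Summable (fun m => |φ m|) := summable_of_sum_le (fun m => abs_nonneg _) h
  refine ⟨h1.of_abs, ?_⟩
  have h2 : ‖∑' m, φ m‖ ≤ ∑' m, ‖φ m‖ := norm_tsum_le_tsum_norm h1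
  exact h2.trans (h1.tsum_le_of_sum_le h)

theorem unif {ι X : Type} (S : Finset ι) (F W : ι → X → ℝ) (hW : ∀ s x, 0 ≤ W s x)
    (h : ∀ s ∈ S, ∃ C : ℝ, 0 < C ∧ ∀ x, F s x ≤ C * W s x) :
    ∃ C : ℝ, 0 < C ∧ ∀ s ∈ S, ∀ x, F s x ≤ C * W s x := by
  classical
  induction S using Finset.induction_on with
  | empty => exact ⟨1, one_pos, by simp⟩
  | insert a S ha ih =>
    obtain ⟨C1, hC1, h1⟩ := ih (fun s hs => h s (Finset.mem_insert_of_mem hs))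
    obtain ⟨C2, hC2, h2⟩ := h a (Finset.mem_insert_self _ _)
    refine ⟨C1 + C2, by positivity, fun s hs x => ?_⟩
    rcases Finset.mem_insert.1 hs with rfl | hs
    · have := h2 x; have := mul_nonneg hC1.le (hW s x); linarith
    · have := h1 s hs x; have := mul_nonneg hC2.le (hW s x); linarith

section
variable {X : Type} [AddCommGroup X]

theorem zero_mem_st (l : List X) : (0 : X) ∈ st l := by
  induction l with
  | nil => simp [st]
  | cons ρ l ih => exact Or.inl ih

theorem leib (l : List X) : ∀ (χ f : X → ℝ) (m : X) (B Q T : ℝ), 0 ≤ B → 0 ≤ Q → 0 ≤ T →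
    (∀ s, s.Sublist l → ∀ y ∈ st l, |dl s χ (m + y)| ≤ B * T ^ s.length) →
    (∀ s, s.Sublist l → ∀ y ∈ st l, |dl s f (m + y)| ≤ Q * T ^ s.length) →
    |dl l (fun x => χ x * f x) m| ≤ 2 ^ l.length * (B * Q * T ^ l.length) := by
  induction l with
  | nil =>
    intro χ f m B Q T hB hQ hT h1 h2
    have h1 := h1 [] (List.Sublist.refl _) 0 (zero_mem_st _)
    have h2 := h2 [] (List.Sublist.refl _) 0 (zero_mem_st _)
    simp only [dl, List.length_nil, pow_zero, mul_one, one_mul, add_zero] at *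
    rw [abs_mul]; gcongr
  | cons ρ l ih =>
    intro χ f m B Q T hB hQ hT h1 h2
    have e : dl (ρ :: l) (fun x => χ x * f x) m =
        dl l (fun x => (χ (x + ρ) - χ x) * f x) m +
        dl l (fun x => χ (x + ρ) * (f (x + ρ) - f x)) m := by
      rw [dl_cons', ← dl_add]
      congr 1; funext y; ring
    rw [e]
    have i1 := ih (fun x => χ (x + ρ) - χ x) f m (B * T) Q T (by positivity) hQ hT
      (fun s hs y hy => by
        have := h1 (ρ :: s) (hs.cons_cons ρ) y (Or.inl hy)
        rw [dl_cons', List.length_cons, pow_succ] at this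
        exact this.trans (le_of_eq (by ring)))
      (fun s hs y hy => h2 s (hs.cons ρ) y (Or.inl hy))
    have i2 := ih (fun x => χ (x + ρ)) (fun x => f (x + ρ) - f x) m B (Q * T) T hB (by positivity) hT
      (fun s hs y hy => by
        rw [dl_shift, add_assoc]
        exact h1 s (hs.cons ρ) (y + ρ) (Or.inr ⟨y, hy, rfl⟩))
      (fun s hs y hy => by
        have := h2 (ρ :: s) (hs.cons_cons ρ) y (Or.inl hy)
        rw [dl_cons', List.length_cons, pow_succ] at this
        exact this.trans (le_of_eq (by ring)))
    refine (abs_add_le _ _).trans ((add_le_add i1 i2).trans (le_of_eq ?_))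
    rw [List.length_cons]; ring

theorem dl_finsupp (l : List X) : ∀ (h : X → ℝ), {m | h m ≠ 0}.Finite → {m | dl l h m ≠ 0}.Finite := by
  induction l with
  | nil => intro h hh; exact hh
  | cons ρ l ih =>
    intro h hh
    apply ih
    apply (hh.union (hh.preimage ((add_left_injective ρ).injOn))).subset
    intro m hm
    by_contra hcon
    apply hm
    simp only [Set.mem_union, not_or, Set.mem_preimage] at hcon
    have h1 : h m = 0 := by by_contra h; exact hcon.1 h
    have h2 : h (m + ρ) = 0 := by by_contra h; exact hcon.2 h
    rw [h1, h2, sub_zero]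

theorem conv_move (l : List X) : ∀ (G h : X → ℝ), {m | h m ≠ 0}.Finite → ∀ ℓ,
    ∑' m, dl l G (ℓ - m) * h m = ∑' m, G (ℓ - m) * dl l h m := by
  induction l with
  | nil => intro G h _ ℓ; rfl
  | cons ρ l ih =>
    intro G h hh ℓ
    rw [dl_cons', ih _ _ hh]
    have hs : ∀ (G' : X → ℝ), Summable (fun m => G' m * dl l h m) := by
      intro G'
      apply summable_of_hasFiniteSupport
      apply (dl_finsupp l h hh).subset
      intro m hm h0
      apply hm
      simp only [h0, mul_zero]
    have hs' : Summable (fun m => G (ℓ - m) * dl l h (m + ρ)) := by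
      have := (Equiv.addRight ρ).summable_iff.2 (hs (fun m => G (ℓ - m + ρ)))
      refine this.congr fun m => ?_
      simp only [Function.comp_apply, Equiv.coe_addRight]
      rw [show ℓ - (m + ρ) + ρ = ℓ - m by abel]
    calc _ = ∑' m, (G (ℓ - m + ρ) * dl l h m - G (ℓ - m) * dl l h m) := by
          congr 1; funext m; ring
      _ = ∑' m, G (ℓ - m + ρ) * dl l h m - ∑' m, G (ℓ - m) * dl l h m :=
          (hs (fun m => G (ℓ - m + ρ))).tsum_sub (hs (fun m => G (ℓ - m)))
      _ = ∑' m, G (ℓ - m) * dl l h (m + ρ) - ∑' m, G (ℓ - m) * dl l h m := by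
          rw [← (Equiv.addRight ρ).tsum_eq]
          congr 2; funext m
          simp only [Equiv.coe_addRight]
          rw [show ℓ - (m + ρ) + ρ = ℓ - m by abel]
      _ = ∑' m, (G (ℓ - m) * dl l h (m + ρ) - G (ℓ - m) * dl l h m) :=
          (hs'.tsum_sub (hs (fun m => G (ℓ - m)))).symm
      _ = _ := by
          congr 1; funext m; rw [dl_cons]; ring

end

theorem near (d : ℕ) (hd : 2 ≤ d) (A : Matrix (Fin d) (Fin d) ℝ) (hA : IsUnit A.det)
    (g f : (Fin d → ℤ) → ℝ) (p α : ℕ) (l1 l2 : List (Fin d → ℤ))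
    (hl1 : l1.length = 1 ∨ l1.length = 2)
    (hg : ∃ C : ℝ, 0 < C ∧ ∀ z, |dl l1 g z| ≤ C * bz d A z ^ ((2 : ℝ) - d - l1.length))
    (hf : ∀ s, s.Sublist l2 → ∃ C : ℝ, 0 < C ∧ ∀ z, |dl s f z| ≤
      C * (bz d A z ^ (-(d : ℝ) - p - s.length) * Real.log (bz d A z) ^ α)) :
    ∃ C L : ℝ, 0 < C ∧ ∀ ℓ, L ≤ bz d A ℓ →
      Summable (fun m => dl (l1 ++ l2) g (ℓ - m) * (cut d A (lat d A ℓ) (bz d A ℓ) m * f m)) ∧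
      |∑' m, dl (l1 ++ l2) g (ℓ - m) * (cut d A (lat d A ℓ) (bz d A ℓ) m * f m)| ≤
        C * (bz d A ℓ ^ ((2 : ℝ) - d - p - (l1 ++ l2).length) * Real.log (bz d A ℓ) ^ (α + 1)) := by
  classical
  have hb := brk_bz d A hA
  obtain ⟨Cg, hCg, hg⟩ := hg
  have hlog : ∀ z, 0 < Real.log (bz d A z) := fun z => Real.log_pos (by linarith [hb.two_le z])
  have hl2 : 0 < Real.log 2 := Real.log_pos (by norm_num)
  -- uniform constants
  obtain ⟨Cf, hCf, hf'⟩ := unif l2.sublists.toFinset (fun s z => |dl s f z|)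
    (fun s z => bz d A z ^ (-(d : ℝ) - p - s.length) * Real.log (bz d A z) ^ α)
    (fun s z => mul_nonneg (Real.rpow_nonneg (hb.pos z).le _) (pow_nonneg (hlog z).le _))
    (fun s hs => hf s (by simpa using hs))
  obtain ⟨Cc, hCc, hc'⟩ := unif l2.sublists.toFinset
    (fun s (x : {T : ℝ // 0 < T} × Vec d × (Fin d → ℤ)) => |dl s (cut d A x.2.1 x.1.1) x.2.2|)
    (fun s x => (x.1.1⁻¹) ^ s.length)
    (fun s x => by have := x.1.2; positivity)
    (fun s _ => by
      obtain ⟨C, hC, h⟩ := cut_bound d A s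
      exact ⟨C, hC, fun x => h x.2.1 x.1.1 x.1.2 x.2.2⟩)
  obtain ⟨Ck, hCk, hk⟩ := unif l2.sublists.toFinset
    (fun s (x : {x : ℝ × ℝ // 2 ≤ x.1 ∧ 2 ≤ x.2 ∧ x.1 ≤ 2 * x.2 ∧ x.2 ≤ 2 * x.1}) =>
      x.1.1 ^ (-(d : ℝ) - p - s.length) * Real.log x.1.1 ^ α)
    (fun s x => x.1.2 ^ (-(d : ℝ) - p - s.length) * Real.log x.1.2 ^ α)
    (fun s x => mul_nonneg (Real.rpow_nonneg (by linarith [x.2.2.1]) _)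
      (pow_nonneg (Real.log_nonneg (by linarith [x.2.2.1])) _))
    (fun s _ => by
      obtain ⟨C, hC, h⟩ := comparable 2 (by norm_num) (-(d : ℝ) - p - s.length) α
      exact ⟨C, hC, fun x => h _ _ x.2.1 x.2.2.1 x.2.2.2.1 x.2.2.2.2⟩)
  set r : ℝ := (l2.map (fun z => ‖lat d A z‖)).sum with hr
  have hr0 : 0 ≤ r := List.sum_nonneg (by simp)
  have hst : ∀ y ∈ st l2, ‖lat d A y‖ ≤ r := st_norm (fun z => ‖lat d A z‖) (by simp)
    (fun _ => norm_nonneg _) (fun x y => by rw [map_add]; exact norm_add_le _ _) l2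
  -- the sum of the kernel
  have hker : ∃ C0 : ℝ, 0 < C0 ∧ ∀ R : ℝ, 2 ≤ R → ∀ F : Finset (Fin d → ℤ), (∀ x ∈ F, bz d A x ≤ R) →
      ∑ x ∈ F, bz d A x ^ ((2 : ℝ) - d - l1.length) ≤ C0 * (R ^ ((2 : ℝ) - l1.length) * Real.log R) := by
    rcases hl1 with h | h
    · obtain ⟨C0, hC0, h0⟩ := hb.low1 (by omega)
      refine ⟨C0 / Real.log 2, by positivity, fun R hR F hF => ?_⟩
      have h1 := h0 R (by linarith) F hF
      rw [h, Nat.cast_one, show (2 : ℝ) - d - 1 = 1 - d by ring, show (2 : ℝ) - 1 = 1 by norm_num,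
        Real.rpow_one]
      refine h1.trans ?_
      have : Real.log 2 ≤ Real.log R := Real.log_le_log (by norm_num) hR
      calc C0 * R = C0 / Real.log 2 * (R * Real.log 2) := by field_simp
        _ ≤ _ := by gcongr
    · obtain ⟨C0, hC0, h0⟩ := hb.low0
      refine ⟨C0, hC0, fun R hR F hF => ?_⟩
      have h1 := h0 R hR F hF
      rw [h, Nat.cast_two, show (2 : ℝ) - d - 2 = -d by ring, show (2 : ℝ) - 2 = 0 by norm_num,
        Real.rpow_zero, one_mul]
      exact h1
  obtain ⟨C0, hC0, hker⟩ := hker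
  refine ⟨C0 * Cg * (2 ^ l2.length * (Cc * (Cf * Ck))), 16 * r + 32, by positivity, fun ℓ hℓ => ?_⟩
  have hbℓ := hb.pos ℓ
  set b := bz d A ℓ with hbdef
  set χ := cut d A (lat d A ℓ) b with hχ
  have hsupp : ∀ m, χ m ≠ 0 → ‖lat d A m - lat d A ℓ‖ < b / 4 := by
    intro m hm
    by_contra hcon
    exact hm (cut_supp d A _ _ hbℓ m (not_lt.1 hcon))
  have hfin : {m | χ m * f m ≠ 0}.Finite := by
    apply (hb.finite (2 * b)).subset
    intro m hm
    have h1 : χ m ≠ 0 := by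
      intro h0; apply hm; rw [h0, zero_mul]
    have h2 := hsupp m h1
    have h3 := norm_sub_norm_le (lat d A m) (lat d A ℓ)
    show bz d A m ≤ 2 * b
    simp only [bz] at hbdef ⊢
    linarith
  set Q : ℝ := b ^ (-(d : ℝ) - p) * Real.log b ^ α with hQ
  have hQ0 : 0 < Q := mul_pos (Real.rpow_pos_of_pos hbℓ _) (pow_pos (hlog ℓ) _)
  -- pointwise bound
  have hpt : ∀ m, |dl l2 (fun x => χ x * f x) m| ≤ if bz d A (ℓ - m) ≤ b then
      2 ^ l2.length * (Cc * (Cf * Ck * Q) * (b⁻¹) ^ l2.length) else 0 := by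
    intro m
    by_cases hex : ∃ y ∈ st l2, χ (m + y) ≠ 0
    · obtain ⟨y0, hy0, hne⟩ := hex
      have h1 := hsupp _ hne
      have h2 := hst y0 hy0
      have h3 : ‖lat d A m - lat d A ℓ‖ ≤ 5 / 16 * b := by
        have : lat d A m - lat d A ℓ = (lat d A (m + y0) - lat d A ℓ) - lat d A y0 := by
          rw [map_add]; abel
        rw [this]
        refine (norm_sub_le _ _).trans ?_
        linarith
      have hnear : bz d A (ℓ - m) ≤ b := by
        have : bz d A (ℓ - m) = ‖lat d A m - lat d A ℓ‖ + 2 := by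
          rw [bz, map_sub, norm_sub_rev]
        rw [this]; linarith
      rw [if_pos hnear]
      apply leib l2 χ f m Cc (Cf * Ck * Q) b⁻¹ hCc.le (by positivity) (by positivity)
      · intro s hs y _
        exact hc' s (by simpa using hs) (⟨b, hbℓ⟩, lat d A ℓ, m + y)
      · intro s hs y hy
        have h4 := hst y hy
        have h5 : ‖lat d A (m + y) - lat d A ℓ‖ ≤ 6 / 16 * b := by
          have : lat d A (m + y) - lat d A ℓ = (lat d A m - lat d A ℓ) + lat d A y := by
            rw [map_add]; abel
          rw [this]
          refine (norm_add_le _ _).trans ?_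
          linarith
        have h6 := norm_sub_norm_le (lat d A (m + y)) (lat d A ℓ)
        have h7 := norm_sub_norm_le (lat d A ℓ) (lat d A (m + y))
        rw [norm_sub_rev] at h7
        have h8 : bz d A (m + y) ≤ 2 * b := by simp only [bz] at hbdef ⊢; linarith
        have h9 : b ≤ 2 * bz d A (m + y) := by simp only [bz] at hbdef ⊢; linarith
        have h10 := hf' s (by simpa using hs) (m + y)
        have h11 := hk s (by simpa using hs) ⟨(bz d A (m + y), b), hb.two_le _, hb.two_le _, h8, h9⟩
        simp only at h10 h11
        refine h10.trans ((mul_le_mul_of_nonneg_left h11 hCf.le).trans (le_of_eq ?_))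
        have h12 : b ^ (-(d : ℝ) - p - s.length) = b ^ (-(d : ℝ) - p) * (b⁻¹) ^ s.length := by
          rw [Real.rpow_sub hbℓ, Real.rpow_natCast, inv_pow]; rfl
        rw [h12, hQ]; ring
    · push Not at hex
      have : dl l2 (fun x => χ x * f x) m = 0 := by
        rw [dl_congr l2 _ (fun _ => 0) m (fun y hy => by rw [hex y hy, zero_mul]), dl_zero]
      rw [this, abs_zero]
      split_ifs
      · positivity
      · exact le_rfl
  constructor
  · apply summable_of_hasFiniteSupport
    apply hfin.subset
    intro m hm h0
    apply hm
    simp only [h0, mul_zero]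
  rw [dl_append, conv_move l2 _ _ hfin]
  refine (abs_tsum_le (fun F => ?_)).2
  set Z : ℝ := 2 ^ l2.length * (Cc * (Cf * Ck * Q) * (b⁻¹) ^ l2.length) with hZ
  have hZ0 : 0 ≤ Z := by positivity
  calc ∑ m ∈ F, |dl l1 g (ℓ - m) * dl l2 (fun x => χ x * f x) m|
      ≤ ∑ m ∈ F, (if bz d A (ℓ - m) ≤ b then Cg * Z * bz d A (ℓ - m) ^ ((2 : ℝ) - d - l1.length) else 0) := by
        apply Finset.sum_le_sum
        intro m _
        rw [abs_mul]
        have h1 := hpt m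
        have h2 := hg (ℓ - m)
        split_ifs at h1 ⊢ with h
        · calc _ ≤ (Cg * bz d A (ℓ - m) ^ ((2 : ℝ) - d - l1.length)) * Z :=
                mul_le_mul h2 h1 (abs_nonneg _) ((abs_nonneg _).trans h2)
            _ = _ := by ring
        · have : |dl l2 (fun x => χ x * f x) m| = 0 := le_antisymm h1 (abs_nonneg _)
          rw [this, mul_zero]
    _ = Cg * Z * ∑ x ∈ (F.filter (fun m => bz d A (ℓ - m) ≤ b)).image (fun m => ℓ - m),
          bz d A x ^ ((2 : ℝ) - d - l1.length) := by
        rw [← Finset.sum_filter, Finset.sum_image (fun x _ y _ h => sub_right_injective h), Finset.mul_sum]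
    _ ≤ Cg * Z * (C0 * (b ^ ((2 : ℝ) - l1.length) * Real.log b)) := by
        gcongr
        apply hker b (hb.two_le _)
        intro x hx
        rw [Finset.mem_image] at hx
        obtain ⟨m, hm, rfl⟩ := hx
        exact (Finset.mem_filter.1 hm).2
    _ = _ := by
        have h12 : b ^ ((2 : ℝ) - d - p - (l1 ++ l2).length) =
            b ^ ((2 : ℝ) - l1.length) * b ^ (-(d : ℝ) - p) * (b⁻¹) ^ l2.length := by
          rw [← Real.rpow_add hbℓ, inv_pow, ← Real.rpow_natCast b l2.length, ← div_eq_mul_inv, ← Real.rpow_sub hbℓ]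
          congr 1
          rw [List.length_append]; push_cast; ring
        rw [h12, hZ, hQ]; ring

/-- Taylor term of the differenced kernel. -/
def tay (d : ℕ) (A : Matrix (Fin d) (Fin d) ℝ) (l : List (Fin d → ℤ)) (γ : Vec d → ℝ) (i : ℕ)
    (ℓ m : Fin d → ℤ) : ℝ :=
  dl (l.map (lat d A)) (fun y => iteratedFDeriv ℝ i γ y (fun _ => -lat d A m)) (lat d A ℓ) /
    (i.factorial : ℝ)

/-- threshold radius -/
def thr (d : ℕ) (A : Matrix (Fin d) (Fin d) ℝ) (l : List (Fin d → ℤ)) : ℝ :=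
  16 * rad (l.map (lat d A)) + 64

theorem decay_half {d : ℕ} (γ : Vec d → ℝ) (e : ℝ) (k : ℕ) (he : e - k ≤ 0) (C : ℝ) (hC : 0 < C)
    (h : ∀ x : Vec d, x ≠ 0 → ‖iteratedFDeriv ℝ k γ x‖ ≤ C * ‖x‖ ^ (e - k)) (T : ℝ) (hT : 0 < T)
    (y : Vec d) (hy : T / 2 ≤ ‖y‖) :
    ‖iteratedFDeriv ℝ k γ y‖ ≤ C * (2⁻¹ : ℝ) ^ (e - k) * T ^ (e - k) := by
  have hy0 : y ≠ 0 := by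
    rintro rfl
    rw [norm_zero] at hy; linarith
  refine (h y hy0).trans ?_
  rw [mul_assoc, ← Real.mul_rpow (by norm_num) hT.le]
  apply mul_le_mul_of_nonneg_left _ hC.le
  exact Real.rpow_le_rpow_of_nonpos (by positivity) (by linarith) he

theorem prod_nn {d : ℕ} (l : List (Vec d)) : 0 ≤ (l.map (fun x => ‖x‖)).prod := by
  apply List.prod_nonneg; simp

theorem tay_bound (d : ℕ) (A : Matrix (Fin d) (Fin d) ℝ) (l : List (Fin d → ℤ)) (γ : Vec d → ℝ)
    (hγ : ContDiffOn ℝ (⊤ : ℕ∞) γ {x : Vec d | x ≠ 0}) (e : ℝ) (he : e ≤ 0) (hl : l ≠ [])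
    (h : ∀ k : ℕ, 1 ≤ k → ∃ C : ℝ, 0 < C ∧ ∀ x : Vec d, x ≠ 0 →
      ‖iteratedFDeriv ℝ k γ x‖ ≤ C * ‖x‖ ^ (e - k)) (i : ℕ) :
    ∃ C : ℝ, 0 < C ∧ ∀ ℓ, thr d A l ≤ bz d A ℓ → ∀ m,
      |tay d A l γ i ℓ m| ≤ C * (bz d A ℓ ^ (e - i - l.length) * ‖lat d A m‖ ^ i) := by
  have hlen : 1 ≤ l.length := by
    have := List.length_pos_iff.2 hl; omega
  obtain ⟨C, hC, hk⟩ := h (i + l.length) (by omega)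
  set pr := ((l.map (lat d A)).map (fun x => ‖x‖)).prod with hpr
  have hpr0 : 0 ≤ pr := prod_nn _
  set C1 := C * (2⁻¹ : ℝ) ^ (e - (i + l.length : ℕ)) with hC1
  have hC10 : 0 < C1 := by positivity
  refine ⟨C1 * (pr + 1), by positivity, fun ℓ hℓ m => ?_⟩
  have hr0 := rad_nonneg (l.map (lat d A))
  have hT : 0 < bz d A ℓ := by unfold thr at hℓ; linarith
  have hexp : e - ((i + l.length : ℕ) : ℝ) ≤ 0 := by
    have : (0 : ℝ) ≤ ((i + l.length : ℕ) : ℝ) := Nat.cast_nonneg _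
    linarith
  have hball : ∀ y ∈ Metric.closedBall (lat d A ℓ) (rad (l.map (lat d A))), bz d A ℓ / 2 ≤ ‖y‖ := by
    intro y hy
    rw [mem_closedBall_iff_norm'] at hy
    have := norm_sub_norm_le (lat d A ℓ) y
    unfold thr bz at *
    linarith
  have h1 := fd_bound γ {x : Vec d | x ≠ 0} isOpen_ne hγ (l.map (lat d A)) i (lat d A ℓ)
    (C1 * bz d A ℓ ^ (e - (i + l.length : ℕ))) (by
      intro y hy
      have := hball y hy
      rintro rfl
      rw [norm_zero] at this; linarith) (by
      intro y hy
      rw [List.length_map]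
      exact decay_half γ e (i + l.length) hexp C hC hk _ hT y (hball y hy))
  have hev : dl (l.map (lat d A)) (fun y => iteratedFDeriv ℝ i γ y (fun _ => -lat d A m)) (lat d A ℓ)
      = (dl (l.map (lat d A)) (iteratedFDeriv ℝ i γ) (lat d A ℓ)) (fun _ => -lat d A m) :=
    dl_map ((ContinuousMultilinearMap.apply ℝ (fun _ : Fin i => Vec d) ℝ
      (fun _ => -lat d A m)).toLinearMap.toAddMonoidHom) _ (iteratedFDeriv ℝ i γ) _
  have h2 := (dl (l.map (lat d A)) (iteratedFDeriv ℝ i γ) (lat d A ℓ)).le_opNorm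
    (fun _ => -lat d A m)
  simp only [norm_neg, Finset.prod_const, Finset.card_univ, Fintype.card_fin] at h2
  unfold tay
  rw [hev, abs_div, abs_of_pos (a := (i.factorial : ℝ)) (by positivity)]
  have h3 : (1 : ℝ) ≤ (i.factorial : ℝ) := by exact_mod_cast Nat.one_le_iff_ne_zero.2 i.factorial_ne_zero
  refine (div_le_self (abs_nonneg _) h3).trans (h2.trans ?_)
  have e1 : e - ((i + l.length : ℕ) : ℝ) = e - i - l.length := by push_cast; ring
  rw [e1] at h1
  calc _ ≤ (C1 * bz d A ℓ ^ (e - i - l.length) * pr) * ‖lat d A m‖ ^ i := by gcongr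
    _ ≤ (C1 * bz d A ℓ ^ (e - i - l.length) * (pr + 1)) * ‖lat d A m‖ ^ i := by gcongr; linarith
    _ = _ := by ring

theorem tay_rem (d : ℕ) (A : Matrix (Fin d) (Fin d) ℝ) (l : List (Fin d → ℤ)) (γ : Vec d → ℝ)
    (hγ : ContDiffOn ℝ (⊤ : ℕ∞) γ {x : Vec d | x ≠ 0}) (e : ℝ) (he : e ≤ 0) (hl : l ≠ [])
    (h : ∀ k : ℕ, 1 ≤ k → ∃ C : ℝ, 0 < C ∧ ∀ x : Vec d, x ≠ 0 →
      ‖iteratedFDeriv ℝ k γ x‖ ≤ C * ‖x‖ ^ (e - k)) (P : ℕ) :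
    ∃ C : ℝ, 0 < C ∧ ∀ ℓ, thr d A l ≤ bz d A ℓ → ∀ m, bz d A m ≤ bz d A ℓ / 8 →
      |dl l (fun z => γ (lat d A z)) (ℓ - m) - ∑ i ∈ Finset.range P, tay d A l γ i ℓ m| ≤
        C * (bz d A ℓ ^ (e - P - l.length) * ‖lat d A m‖ ^ P) := by
  have hlen : 1 ≤ l.length := by
    have := List.length_pos_iff.2 hl; omega
  obtain ⟨C, hC, hk⟩ := h (P + l.length) (by omega)
  set pr := ((l.map (lat d A)).map (fun x => ‖x‖)).prod with hpr
  have hpr0 : 0 ≤ pr := prod_nn _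
  set C1 := C * (2⁻¹ : ℝ) ^ (e - (P + l.length : ℕ)) with hC1
  have hC10 : 0 < C1 := by positivity
  refine ⟨C1 * (pr + 1), by positivity, fun ℓ hℓ m hm => ?_⟩
  have hr0 := rad_nonneg (l.map (lat d A))
  have hT : 0 < bz d A ℓ := by unfold thr at hℓ; linarith
  have hexp : e - ((P + l.length : ℕ) : ℝ) ≤ 0 := by
    have : (0 : ℝ) ≤ ((P + l.length : ℕ) : ℝ) := Nat.cast_nonneg _
    linarith
  have hball : ∀ t ∈ Set.Icc (0 : ℝ) 1, ∀ y ∈ Metric.closedBall (lat d A ℓ + t • (-lat d A m))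
      (rad (l.map (lat d A))), bz d A ℓ / 2 ≤ ‖y‖ := by
    intro t ht y hy
    rw [mem_closedBall_iff_norm'] at hy
    have h1 := norm_sub_norm_le (lat d A ℓ + t • (-lat d A m)) y
    have h2 := norm_sub_norm_le (lat d A ℓ) (-(t • (-lat d A m)))
    rw [sub_neg_eq_add, norm_neg, norm_smul, norm_neg, Real.norm_of_nonneg ht.1] at h2
    have h3 : t * ‖lat d A m‖ ≤ 1 * ‖lat d A m‖ := by gcongr; exact ht.2
    unfold thr bz at *
    linarith
  have h1 := dl_taylor γ {x : Vec d | x ≠ 0} isOpen_ne hγ (l.map (lat d A)) P (lat d A ℓ)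
    (-lat d A m)
    (C1 * bz d A ℓ ^ (e - (P + l.length : ℕ))) (by
      intro t ht y hy
      have := hball t ht y hy
      rintro rfl
      rw [norm_zero] at this; linarith) (by
      intro t ht y hy
      rw [List.length_map]
      exact decay_half γ e (P + l.length) hexp C hC hk _ hT y (hball t ht y hy))
  have e2 : dl l (fun z => γ (lat d A z)) (ℓ - m) = dl (l.map (lat d A)) γ (lat d A ℓ + -lat d A m) := by
    rw [← dl_comp, map_sub, sub_eq_add_neg]
  have e1 : e - ((P + l.length : ℕ) : ℝ) = e - P - l.length := by push_cast; ring
  rw [e1, norm_neg] at h1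
  rw [e2]
  refine h1.trans ?_
  calc _ ≤ (C1 * bz d A ℓ ^ (e - P - l.length) * (pr + 1)) * ‖lat d A m‖ ^ P := by gcongr; linarith
    _ = _ := by ring

theorem Brk.tail8 {X : Type} [AddCommGroup X] {d : ℕ} {b : X → ℝ} (hb : Brk X d b) (s : ℝ) (hs : 0 < s)
    (α : ℕ) : ∃ C : ℝ, 0 < C ∧ ∀ r : ℝ, 16 ≤ r → ∀ F : Finset X, (∀ x ∈ F, r / 8 ≤ b x) →
      ∑ x ∈ F, b x ^ (-(d : ℝ) - s) * Real.log (b x) ^ α ≤ C * (r ^ (-s) * Real.log r ^ (α + 1)) := by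
  obtain ⟨C, hC, h⟩ := hb.tail s hs α
  have hl2 : 0 < Real.log 2 := Real.log_pos (by norm_num)
  refine ⟨C * ((8⁻¹ : ℝ) ^ (-s) * (Real.log 2)⁻¹), by positivity, fun r hr F hF => ?_⟩
  refine (h (r / 8) (by linarith) F hF).trans ?_
  rw [mul_assoc]
  apply mul_le_mul_of_nonneg_left _ hC.le
  rw [div_eq_inv_mul, Real.mul_rpow (by norm_num) (by linarith)]
  have h1 : Real.log (8⁻¹ * r) ≤ Real.log r := Real.log_le_log (by linarith) (by linarith)
  have h0 : 0 ≤ Real.log (8⁻¹ * r) := Real.log_nonneg (by linarith)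
  have h2 : Real.log 2 ≤ Real.log r := Real.log_le_log (by norm_num) (by linarith)
  have h3 : Real.log (8⁻¹ * r) ^ α ≤ (Real.log 2)⁻¹ * Real.log r ^ (α + 1) := by
    rw [pow_succ, ← mul_assoc, mul_comm _ (Real.log r), ← mul_assoc]
    have : 1 ≤ Real.log r * (Real.log 2)⁻¹ := by
      rw [← div_eq_mul_inv, le_div_iff₀ hl2]; linarith
    have h5 : Real.log (8⁻¹ * r) ^ α ≤ Real.log r ^ α := by gcongr
    have h6 : 0 ≤ Real.log r ^ α := pow_nonneg (by linarith) _
    calc _ ≤ 1 * Real.log r ^ α := by linarith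
      _ ≤ _ := by gcongr
  have hr1 : 0 ≤ r ^ (-s) := Real.rpow_nonneg (by linarith) _
  calc _ ≤ (8⁻¹ : ℝ) ^ (-s) * r ^ (-s) * ((Real.log 2)⁻¹ * Real.log r ^ (α + 1)) := by gcongr
    _ = _ := by ring

theorem far_inner (d : ℕ) (hd : 2 ≤ d) (A : Matrix (Fin d) (Fin d) ℝ) (hA : IsUnit A.det)
    (l : List (Fin d → ℤ)) (hl : l ≠ []) (g : (Fin d → ℤ) → ℝ) (γ : ℕ → Vec d → ℝ) (p : ℕ)
    (hγ : ∀ n, ContDiffOn ℝ (⊤ : ℕ∞) (γ n) {x : Vec d | x ≠ 0})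
    (hdec : ∀ n, ∀ k : ℕ, 1 ≤ k → ∃ C : ℝ, 0 < C ∧ ∀ x : Vec d, x ≠ 0 →
      ‖iteratedFDeriv ℝ k (γ n) x‖ ≤ C * ‖x‖ ^ ((2 : ℝ) - 2 * n - d - k))
    (happ : ∃ C L : ℝ, 0 < C ∧ ∀ z, L ≤ bz d A z →
      |dl l (fun z => g z - ∑ n ∈ Finset.range ((p + 1) / 2), γ n (lat d A z)) z| ≤
        C * bz d A z ^ ((2 : ℝ) - d - p - l.length)) :
    ∃ C L : ℝ, 0 < C ∧ ∀ ℓ, L ≤ bz d A ℓ → ∀ m, bz d A m ≤ bz d A ℓ / 8 →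
      |dl l g (ℓ - m) - ∑ n ∈ Finset.range ((p + 1) / 2), ∑ i ∈ Finset.range (p - 2 * n),
        tay d A l (γ n) i ℓ m| ≤
        C * (bz d A ℓ ^ ((2 : ℝ) - d - p - l.length) * bz d A m ^ p) := by
  have hb := brk_bz d A hA
  obtain ⟨C0, L0, hC0, happ⟩ := happ
  have hd' : (2 : ℝ) ≤ d := by exact_mod_cast hd
  have hrem := fun n : ℕ => tay_rem d A l (γ n) (hγ n) ((2 : ℝ) - 2 * n - d) (by
    have : (0 : ℝ) ≤ n := Nat.cast_nonneg _
    linarith) hl (hdec n) (p - 2 * n)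
  choose Cn hCn hrem using hrem
  obtain ⟨K, hK, hcmp⟩ := comparable 2 (by norm_num) ((2 : ℝ) - d - p - l.length) 0
  refine ⟨C0 * K + ∑ n ∈ Finset.range ((p + 1) / 2), Cn n, max (2 * L0) (thr d A l), ?_, ?_⟩
  · have : 0 ≤ ∑ n ∈ Finset.range ((p + 1) / 2), Cn n := Finset.sum_nonneg fun n _ => (hCn n).le
    positivity
  intro ℓ hℓ m hm
  have hℓ1 := (le_max_left _ _).trans hℓ
  have hℓ2 := (le_max_right _ _).trans hℓ
  have hbm := hb.two_le m
  have hbℓ := hb.two_le ℓ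
  have h64 : 64 ≤ bz d A ℓ := by
    have := rad_nonneg (l.map (lat d A)); unfold thr at hℓ2; linarith
  set Q := bz d A ℓ ^ ((2 : ℝ) - d - p - l.length) with hQ
  have hQ0 : 0 < Q := Real.rpow_pos_of_pos (by linarith) _
  have hz1 : bz d A ℓ ≤ 2 * bz d A (ℓ - m) := by
    have := norm_sub_norm_le (lat d A ℓ) (lat d A m)
    simp only [bz, map_sub] at *
    linarith
  have hz2 : bz d A (ℓ - m) ≤ 2 * bz d A ℓ := by
    have := norm_sub_le (lat d A ℓ) (lat d A m)
    simp only [bz, map_sub] at *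
    linarith
  have h1 := happ (ℓ - m) (by linarith)
  have h2 := hcmp _ _ (hb.two_le (ℓ - m)) hbℓ hz2 hz1
  simp only [pow_zero, mul_one] at h2
  have h3 : 1 ≤ bz d A m ^ p := one_le_pow₀ (by linarith)
  have e1 : dl l g (ℓ - m) - ∑ n ∈ Finset.range ((p + 1) / 2), ∑ i ∈ Finset.range (p - 2 * n),
        tay d A l (γ n) i ℓ m =
      dl l (fun z => g z - ∑ n ∈ Finset.range ((p + 1) / 2), γ n (lat d A z)) (ℓ - m) +
      ∑ n ∈ Finset.range ((p + 1) / 2), (dl l (fun z => γ n (lat d A z)) (ℓ - m) -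
        ∑ i ∈ Finset.range (p - 2 * n), tay d A l (γ n) i ℓ m) := by
    rw [dl_sub, dl_sum, Finset.sum_sub_distrib]; ring
  rw [e1]
  refine (abs_add_le _ _).trans ?_
  rw [add_mul]
  apply add_le_add
  · refine h1.trans ?_
    calc C0 * bz d A (ℓ - m) ^ ((2 : ℝ) - d - p - l.length) ≤ C0 * (K * Q) := by gcongr
      _ = C0 * K * (Q * 1) := by ring
      _ ≤ _ := by gcongr
  · rw [Finset.sum_mul]
    refine (Finset.abs_sum_le_sum_abs _ _).trans (Finset.sum_le_sum fun n hn => ?_)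
    refine (hrem n ℓ hℓ2 m hm).trans ?_
    rw [Finset.mem_range] at hn
    have hn2 : 2 * n ≤ p := by omega
    have e2 : (2 : ℝ) - 2 * n - d - ((p - 2 * n : ℕ) : ℝ) - l.length = (2 : ℝ) - d - p - l.length := by
      push_cast [Nat.cast_sub hn2]; ring
    rw [e2]
    have h5 : ‖lat d A m‖ ^ (p - 2 * n) ≤ bz d A m ^ p := by
      calc ‖lat d A m‖ ^ (p - 2 * n) ≤ bz d A m ^ (p - 2 * n) := by
            gcongr; simp [bz]
        _ ≤ _ := pow_le_pow_right₀ (by linarith) (by omega)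
    have := (hCn n).le
    gcongr

theorem tay_f_bound (d : ℕ) (A : Matrix (Fin d) (Fin d) ℝ) (hA : IsUnit A.det)
    (f : (Fin d → ℤ) → ℝ) (p α : ℕ) (Cf : ℝ) (hCf : 0 < Cf)
    (hf : ∀ z, |f z| ≤ Cf * (bz d A z ^ (-(d : ℝ) - p) * Real.log (bz d A z) ^ α))
    (t : ℝ) (B : ℝ) (hB : 0 ≤ B) (i : ℕ) (m : Fin d → ℤ) (h : |t| ≤ B * ‖lat d A m‖ ^ i) :
    |t * f m| ≤ B * Cf * (bz d A m ^ (-(d : ℝ) - ((p : ℝ) - i)) * Real.log (bz d A m) ^ α) := by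
  have hb := brk_bz d A hA
  have hbm := hb.pos m
  have hlog : 0 < Real.log (bz d A m) := Real.log_pos (by linarith [hb.two_le m])
  rw [abs_mul]
  have h5 : ‖lat d A m‖ ^ i ≤ bz d A m ^ i := by gcongr; simp [bz]
  calc |t| * |f m| ≤ (B * bz d A m ^ i) * (Cf * (bz d A m ^ (-(d : ℝ) - p) * Real.log (bz d A m) ^ α)) := by
        gcongr
        · exact h.trans (by gcongr)
        · exact hf m
    _ = _ := by
        rw [show (-(d : ℝ) - ((p : ℝ) - i)) = (i : ℝ) + (-(d : ℝ) - p) by ring, Real.rpow_add hbm,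
          Real.rpow_natCast]
        ring

theorem far (d : ℕ) (hd : 2 ≤ d) (A : Matrix (Fin d) (Fin d) ℝ) (hA : IsUnit A.det)
    (l : List (Fin d → ℤ)) (hl : l ≠ []) (g f : (Fin d → ℤ) → ℝ) (γ : ℕ → Vec d → ℝ) (p α : ℕ)
    (hγ : ∀ n, ContDiffOn ℝ (⊤ : ℕ∞) (γ n) {x : Vec d | x ≠ 0})
    (hdec : ∀ n, ∀ k : ℕ, 1 ≤ k → ∃ C : ℝ, 0 < C ∧ ∀ x : Vec d, x ≠ 0 →
      ‖iteratedFDeriv ℝ k (γ n) x‖ ≤ C * ‖x‖ ^ ((2 : ℝ) - 2 * n - d - k))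
    (happ : ∃ C L : ℝ, 0 < C ∧ ∀ z, L ≤ bz d A z →
      |dl l (fun z => g z - ∑ n ∈ Finset.range ((p + 1) / 2), γ n (lat d A z)) z| ≤
        C * bz d A z ^ ((2 : ℝ) - d - p - l.length))
    (hg : ∃ C : ℝ, 0 < C ∧ ∀ z, |dl l g z| ≤ C * bz d A z ^ ((2 : ℝ) - d - l.length))
    (hf : ∃ C : ℝ, 0 < C ∧ ∀ z, |f z| ≤
      C * (bz d A z ^ (-(d : ℝ) - p) * Real.log (bz d A z) ^ α)) :
    ∃ C L : ℝ, 0 < C ∧ ∀ ℓ, L ≤ bz d A ℓ → ∀ F : Finset (Fin d → ℤ),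
      ∑ m ∈ F, |dl l g (ℓ - m) * ((1 - cut d A (lat d A ℓ) (bz d A ℓ) m) * f m) -
        (∑ n ∈ Finset.range ((p + 1) / 2), ∑ i ∈ Finset.range (p - 2 * n),
          tay d A l (γ n) i ℓ m) * f m| ≤
        C * (bz d A ℓ ^ ((2 : ℝ) - d - p - l.length) * Real.log (bz d A ℓ) ^ (α + 1)) := by
  classical
  have hb := brk_bz d A hA
  have hd' : (2 : ℝ) ≤ d := by exact_mod_cast hd
  have hlen : 1 ≤ l.length := by
    have := List.length_pos_iff.2 hl; omega
  have hlen' : (1 : ℝ) ≤ l.length := by exact_mod_cast hlen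
  have hp0 : (0 : ℝ) ≤ p := Nat.cast_nonneg _
  obtain ⟨C1, L1, hC1, hin⟩ := far_inner d hd A hA l hl g γ p hγ hdec happ
  obtain ⟨Cg, hCg, hg⟩ := hg
  obtain ⟨Cf, hCf, hf⟩ := hf
  obtain ⟨C2, hC2, hlow⟩ := hb.low α
  obtain ⟨C3, hC3, htail⟩ := hb.tail8 ((d : ℝ) + p + l.length - 2) (by linarith) α
  have hT : ∀ n i : ℕ, ∃ C : ℝ, 0 < C ∧ (i < p - 2 * n → ∀ ℓ, thr d A l ≤ bz d A ℓ →
      ∀ F : Finset (Fin d → ℤ), (∀ m ∈ F, bz d A ℓ / 8 ≤ bz d A m) →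
      ∑ m ∈ F, |tay d A l (γ n) i ℓ m * f m| ≤
        C * (bz d A ℓ ^ ((2 : ℝ) - d - p - l.length) * Real.log (bz d A ℓ) ^ (α + 1))) := by
    intro n i
    by_cases hi : i < p - 2 * n
    swap
    · exact ⟨1, one_pos, fun h => absurd h hi⟩
    have hn0 : (0 : ℝ) ≤ n := Nat.cast_nonneg _
    have hip : (0 : ℝ) < (p : ℝ) - i := by
      have : i < p := by omega
      have : (i : ℝ) < p := by exact_mod_cast this
      linarith
    obtain ⟨C4, hC4, hta⟩ := tay_bound d A l (γ n) (hγ n) ((2 : ℝ) - 2 * n - d) (by linarith) hl (hdec n) i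
    obtain ⟨C5, hC5, ht5⟩ := hb.tail8 ((p : ℝ) - i) hip α
    refine ⟨C4 * Cf * C5, by positivity, fun _ ℓ hℓ F hF => ?_⟩
    have h64 : 64 ≤ bz d A ℓ := by
      have := rad_nonneg (l.map (lat d A)); unfold thr at hℓ; linarith
    have hlog : 0 < Real.log (bz d A ℓ) := Real.log_pos (by linarith)
    set B := C4 * bz d A ℓ ^ ((2 : ℝ) - 2 * n - d - i - l.length) with hB
    have hbp : 0 < bz d A ℓ := by linarith
    have hB0 : 0 ≤ B := by positivity
    calc ∑ m ∈ F, |tay d A l (γ n) i ℓ m * f m| ≤ ∑ m ∈ F, B * Cf *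
          (bz d A m ^ (-(d : ℝ) - ((p : ℝ) - i)) * Real.log (bz d A m) ^ α) := by
          apply Finset.sum_le_sum
          intro m _
          apply tay_f_bound d A hA f p α Cf hCf hf _ B hB0 i m
          rw [hB, mul_assoc]; exact hta ℓ hℓ m
      _ = B * Cf * ∑ m ∈ F, (bz d A m ^ (-(d : ℝ) - ((p : ℝ) - i)) * Real.log (bz d A m) ^ α) := by
          rw [Finset.mul_sum]
      _ ≤ B * Cf * (C5 * (bz d A ℓ ^ (-((p : ℝ) - i)) * Real.log (bz d A ℓ) ^ (α + 1))) := by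
          gcongr
          exact ht5 _ (by linarith) F hF
      _ = C4 * Cf * C5 * (bz d A ℓ ^ ((2 : ℝ) - 2 * n - d - p - l.length) *
            Real.log (bz d A ℓ) ^ (α + 1)) := by
          rw [show (2 : ℝ) - 2 * n - d - p - l.length = ((2 : ℝ) - 2 * n - d - i - l.length) +
            (-((p : ℝ) - i)) by ring, Real.rpow_add hbp, hB]
          ring
      _ ≤ _ := by
          gcongr
          · linarith
          · linarith
  choose CT hCT hT using hT
  obtain ⟨K, hK, hcmp9⟩ : ∃ K : ℝ, 0 < K ∧ ∀ x y : ℝ, 0 < x → 0 < y → x ≤ 9 * y →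
      y ^ ((2 : ℝ) - d - l.length) ≤ K * x ^ ((2 : ℝ) - d - l.length) := by
    refine ⟨(9⁻¹ : ℝ) ^ ((2 : ℝ) - d - l.length), by positivity, fun x y hx hy hxy => ?_⟩
    rw [← Real.mul_rpow (by norm_num) hx.le]
    exact Real.rpow_le_rpow_of_nonpos (by positivity) (by linarith) (by linarith)
  set CS := ∑ n ∈ Finset.range ((p + 1) / 2), ∑ i ∈ Finset.range (p - 2 * n), CT n i with hCS
  have hCS0 : 0 ≤ CS := Finset.sum_nonneg fun n _ => Finset.sum_nonneg fun i _ => (hCT n i).le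
  refine ⟨C1 * Cf * C2 + (2 * Cg * K * Cf * C3 + CS), max L1 (thr d A l), by positivity, ?_⟩
  intro ℓ hℓ F
  have hℓ1 := (le_max_left _ _).trans hℓ
  have hℓ2 := (le_max_right _ _).trans hℓ
  have h64 : 64 ≤ bz d A ℓ := by
    have := rad_nonneg (l.map (lat d A)); unfold thr at hℓ2; linarith
  have hlogm : ∀ m, 0 < Real.log (bz d A m) := fun m => Real.log_pos (by linarith [hb.two_le m])
  have hlog : 0 < Real.log (bz d A ℓ) := hlogm ℓ
  have hbp : 0 < bz d A ℓ := by linarith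
  set Q := bz d A ℓ ^ ((2 : ℝ) - d - p - l.length) with hQ
  have hQ0 : 0 < Q := Real.rpow_pos_of_pos (by linarith) _
  rw [← Finset.sum_filter_add_sum_filter_not F (fun m => bz d A m ≤ bz d A ℓ / 8), add_mul]
  apply add_le_add
  · set F1 := F.filter (fun m => bz d A m ≤ bz d A ℓ / 8) with hF1
    calc _ ≤ ∑ m ∈ F1, C1 * Q * Cf * (bz d A m ^ (-(d : ℝ)) * Real.log (bz d A m) ^ α) := by
          apply Finset.sum_le_sum
          intro m hm
          have hm' : bz d A m ≤ bz d A ℓ / 8 := (Finset.mem_filter.1 hm).2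
          have hcut : cut d A (lat d A ℓ) (bz d A ℓ) m = 0 := by
            apply cut_supp _ _ _ _ hbp
            have := norm_sub_norm_le (lat d A ℓ) (lat d A m)
            rw [norm_sub_rev] at this
            simp only [bz] at *
            linarith
          rw [hcut, sub_zero, one_mul, ← sub_mul, abs_mul]
          have h1 := hin ℓ hℓ1 m hm'
          have h2 := hf m
          have hbm := hb.pos m
          have hlm := hlogm m
          calc _ ≤ (C1 * (Q * bz d A m ^ p)) *
                (Cf * (bz d A m ^ (-(d : ℝ) - p) * Real.log (bz d A m) ^ α)) := by gcongr
            _ = _ := by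
                rw [show -(d : ℝ) = (p : ℝ) + (-(d : ℝ) - p) by ring, Real.rpow_add hbm,
                  Real.rpow_natCast, show (p : ℝ) + (-(d : ℝ) - p) - p = -(d : ℝ) - p by ring]
                ring
      _ = C1 * Q * Cf * ∑ m ∈ F1, (bz d A m ^ (-(d : ℝ)) * Real.log (bz d A m) ^ α) := by
          rw [Finset.mul_sum]
      _ ≤ C1 * Q * Cf * (C2 * Real.log (bz d A ℓ) ^ (α + 1)) := by
          gcongr
          apply hlow _ (by linarith)
          intro m hm
          have hm' : bz d A m ≤ bz d A ℓ / 8 := (Finset.mem_filter.1 hm).2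
          linarith
      _ = _ := by ring
  · set F2 := F.filter (fun m => ¬ bz d A m ≤ bz d A ℓ / 8) with hF2
    have hF2' : ∀ m ∈ F2, bz d A ℓ / 8 ≤ bz d A m := fun m hm =>
      (not_le.1 (Finset.mem_filter.1 hm).2).le
    have hsplit : ∀ m ∈ F2, |dl l g (ℓ - m) * ((1 - cut d A (lat d A ℓ) (bz d A ℓ) m) * f m) -
        (∑ n ∈ Finset.range ((p + 1) / 2), ∑ i ∈ Finset.range (p - 2 * n),
          tay d A l (γ n) i ℓ m) * f m| ≤
        2 * Cg * K * Cf * (bz d A m ^ (-(d : ℝ) - ((d : ℝ) + p + l.length - 2)) *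
          Real.log (bz d A m) ^ α) +
        ∑ n ∈ Finset.range ((p + 1) / 2), ∑ i ∈ Finset.range (p - 2 * n),
          |tay d A l (γ n) i ℓ m * f m| := by
      intro m hm
      refine (abs_sub _ _).trans (add_le_add ?_ ?_)
      · have hbm := hb.pos m
        have hlm := hlogm m
        by_cases hnear : ‖lat d A m - lat d A ℓ‖ ≤ bz d A ℓ / 8
        · rw [cut_one _ _ _ _ hbp _ hnear]
          simp only [sub_self, zero_mul, mul_zero, abs_zero]
          positivity
        · push Not at hnear
          have h9 : bz d A m ≤ 9 * bz d A (ℓ - m) := by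
            have h1 := norm_sub_norm_le (lat d A m) (lat d A ℓ)
            have h2 : bz d A (ℓ - m) = ‖lat d A m - lat d A ℓ‖ + 2 := by
              rw [bz, map_sub, norm_sub_rev]
            rw [h2]
            simp only [bz] at *
            linarith
          have h1 := hcmp9 _ _ hbm (hb.pos (ℓ - m)) h9
          have h2 := hg (ℓ - m)
          have h3 := hf m
          have h4 := cut_abs d A (lat d A ℓ) (bz d A ℓ) m
          have h5 : |1 - cut d A (lat d A ℓ) (bz d A ℓ) m| ≤ 2 := by
            refine (abs_sub _ _).trans ?_
            rw [abs_one]; linarith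
          rw [abs_mul, abs_mul]
          calc _ ≤ (Cg * (K * bz d A m ^ ((2 : ℝ) - d - l.length))) * (2 *
                (Cf * (bz d A m ^ (-(d : ℝ) - p) * Real.log (bz d A m) ^ α))) := by
                gcongr
                exact h2.trans (by gcongr)
            _ = _ := by
                rw [show -(d : ℝ) - ((d : ℝ) + p + l.length - 2) = ((2 : ℝ) - d - l.length) +
                  (-(d : ℝ) - p) by ring, Real.rpow_add hbm]
                ring
      · rw [Finset.sum_mul]
        refine (Finset.abs_sum_le_sum_abs _ _).trans (Finset.sum_le_sum fun n _ => ?_)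
        rw [Finset.sum_mul]
        exact Finset.abs_sum_le_sum_abs _ _
    refine (Finset.sum_le_sum hsplit).trans ?_
    rw [Finset.sum_add_distrib, add_mul]
    apply add_le_add
    · rw [← Finset.mul_sum]
      calc _ ≤ 2 * Cg * K * Cf * (C3 * (bz d A ℓ ^ (-((d : ℝ) + p + l.length - 2)) *
            Real.log (bz d A ℓ) ^ (α + 1))) := by
            gcongr
            exact htail _ (by linarith) F2 hF2'
        _ = _ := by
            rw [show -((d : ℝ) + p + l.length - 2) = (2 : ℝ) - d - p - l.length by ring, ← hQ]
            ring
    · rw [Finset.sum_comm, hCS, Finset.sum_mul]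
      apply Finset.sum_le_sum
      intro n _
      rw [Finset.sum_comm, Finset.sum_mul]
      apply Finset.sum_le_sum
      intro i hi
      exact hT n i (Finset.mem_range.1 hi) ℓ hℓ2 F2 hF2'

/-- moment tensors -/
def mom (d : ℕ) (A : Matrix (Fin d) (Fin d) ℝ) (f : (Fin d → ℤ) → ℝ) (i : ℕ) (js : Fin i → Fin d) : ℝ :=
  (-1) ^ i / (i.factorial : ℝ) * ∑' m, (∏ r, lat d A m (js r)) * f m

theorem mom_sym (d : ℕ) (A : Matrix (Fin d) (Fin d) ℝ) (f : (Fin d → ℤ) → ℝ) (i : ℕ) :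
    SymArr (mom d A f i) := by
  intro π js
  unfold mom
  congr 2
  funext m
  congr 1
  exact Equiv.prod_comp π (fun r => lat d A m (js r))

theorem multi_expand {d i : ℕ} (T : ContinuousMultilinearMap ℝ (fun _ : Fin i => Vec d) ℝ) (v : Vec d) :
    T (fun _ => v) = ∑ js : Fin i → Fin d, (∏ r, v (js r)) * T (fun r => Pi.single (js r) (1 : ℝ)) := by
  have h1 : v = ∑ j, v j • (Pi.single j (1 : ℝ) : Vec d) := by
    funext k
    simp [Finset.sum_apply, Pi.single_apply]
  conv_lhs => rw [h1]
  rw [T.map_sum]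
  apply Finset.sum_congr rfl
  intro js _
  rw [T.map_smul_univ]; rfl

theorem tay_expand (d : ℕ) (A : Matrix (Fin d) (Fin d) ℝ) (l : List (Fin d → ℤ)) (γ : Vec d → ℝ) (i : ℕ)
    (ℓ m : Fin d → ℤ) : tay d A l γ i ℓ m = ∑ js : Fin i → Fin d,
      ((-1) ^ i / (i.factorial : ℝ) * dl (l.map (lat d A)) (pderivMulti i js γ) (lat d A ℓ)) *
        ∏ r, lat d A m (js r) := by
  unfold tay
  have h : (fun y => iteratedFDeriv ℝ i γ y (fun _ => -lat d A m)) = fun y =>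
      ∑ js : Fin i → Fin d, ((-1) ^ i * ∏ r, lat d A m (js r)) * pderivMulti i js γ y := by
    funext y
    rw [multi_expand]
    apply Finset.sum_congr rfl
    intro js _
    unfold pderivMulti
    congr 1
    simp [Finset.prod_neg]
  rw [h, dl_sum, Finset.sum_div]
  apply Finset.sum_congr rfl
  intro js _
  have := dl_map (AddMonoidHom.mulLeft ((-1) ^ i * ∏ r, lat d A m (js r))) (l.map (lat d A))
    (pderivMulti i js γ) (lat d A ℓ)
  simp only [AddMonoidHom.coe_mulLeft] at this
  rw [this]; ring

theorem mom_summable (d : ℕ) (A : Matrix (Fin d) (Fin d) ℝ) (hA : IsUnit A.det)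
    (f : (Fin d → ℤ) → ℝ) (p α : ℕ) 
    (hf : ∃ C : ℝ, 0 < C ∧ ∀ z, |f z| ≤
      C * (bz d A z ^ (-(d : ℝ) - p) * Real.log (bz d A z) ^ α))
    (i : ℕ) (hi : i < p) (js : Fin i → Fin d) :
    Summable (fun m => (∏ r, lat d A m (js r)) * f m) := by
  have hb := brk_bz d A hA
  obtain ⟨Cf, hCf, hf⟩ := hf
  have hip : (0 : ℝ) < (p : ℝ) - i := by
    have : (i : ℝ) < p := by exact_mod_cast hi
    linarith
  refine Summable.of_norm_bounded ((hb.summ ((p : ℝ) - i) hip α).mul_left (1 * Cf)) (fun m => ?_)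
  apply tay_f_bound d A hA f p α Cf hCf hf _ 1 zero_le_one i m
  rw [one_mul, Finset.abs_prod]
  calc _ ≤ ∏ r : Fin i, ‖lat d A m‖ := Finset.prod_le_prod (fun _ _ => abs_nonneg _)
        (fun r _ => norm_le_pi_norm (lat d A m) (js r))
    _ = _ := by simp

theorem tay_tsum (d : ℕ) (A : Matrix (Fin d) (Fin d) ℝ) (hA : IsUnit A.det)
    (f : (Fin d → ℤ) → ℝ) (p α : ℕ) 
    (hf : ∃ C : ℝ, 0 < C ∧ ∀ z, |f z| ≤
      C * (bz d A z ^ (-(d : ℝ) - p) * Real.log (bz d A z) ^ α))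
    (i : ℕ) (hi : i < p) (l : List (Fin d → ℤ)) (γ : Vec d → ℝ) (ℓ : Fin d → ℤ) :
    HasSum (fun m => tay d A l γ i ℓ m * f m)
      (dl (l.map (lat d A)) (aContract i (mom d A f i) γ) (lat d A ℓ)) := by
  have h1 : ∀ js ∈ (Finset.univ : Finset (Fin i → Fin d)), HasSum (fun m =>
      ((-1) ^ i / (i.factorial : ℝ) * dl (l.map (lat d A)) (pderivMulti i js γ) (lat d A ℓ)) *
        ((∏ r, lat d A m (js r)) * f m))
      (((-1) ^ i / (i.factorial : ℝ) * dl (l.map (lat d A)) (pderivMulti i js γ) (lat d A ℓ)) *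
        ∑' m, (∏ r, lat d A m (js r)) * f m) := fun js _ =>
    ((mom_summable d A hA f p α hf i hi js).hasSum).mul_left _
  have h2 := hasSum_sum h1
  convert h2 using 1
  · funext m
    rw [tay_expand, Finset.sum_mul]
    apply Finset.sum_congr rfl
    intro js _; ring
  · have : aContract i (mom d A f i) γ = fun y => ∑ js : Fin i → Fin d, mom d A f i js * pderivMulti i js γ y := rfl
    rw [this, dl_sum]
    apply Finset.sum_congr rfl
    intro js _
    have := dl_map (AddMonoidHom.mulLeft (mom d A f i js)) (l.map (lat d A))
      (pderivMulti i js γ) (lat d A ℓ)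
    simp only [AddMonoidHom.coe_mulLeft] at this
    rw [this]; unfold mom; ring

theorem scalar_main (d : ℕ) (hd : 2 ≤ d) (A : Matrix (Fin d) (Fin d) ℝ) (hA : IsUnit A.det)
    (l1 l2 : List (Fin d → ℤ)) (hl1 : l1.length = 1 ∨ l1.length = 2)
    (g f : (Fin d → ℤ) → ℝ) (γ : ℕ → Vec d → ℝ) (p α : ℕ)
    (hγ : ∀ n, ContDiffOn ℝ (⊤ : ℕ∞) (γ n) {x : Vec d | x ≠ 0})
    (hdec : ∀ n, ∀ k : ℕ, 1 ≤ k → ∃ C : ℝ, 0 < C ∧ ∀ x : Vec d, x ≠ 0 →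
      ‖iteratedFDeriv ℝ k (γ n) x‖ ≤ C * ‖x‖ ^ ((2 : ℝ) - 2 * n - d - k))
    (happ : ∃ C L : ℝ, 0 < C ∧ ∀ z, L ≤ bz d A z →
      |dl (l1 ++ l2) (fun z => g z - ∑ n ∈ Finset.range ((p + 1) / 2), γ n (lat d A z)) z| ≤
        C * bz d A z ^ ((2 : ℝ) - d - p - (l1 ++ l2).length))
    (hg1 : ∃ C : ℝ, 0 < C ∧ ∀ z, |dl l1 g z| ≤ C * bz d A z ^ ((2 : ℝ) - d - l1.length))
    (hg : ∃ C : ℝ, 0 < C ∧ ∀ z, |dl (l1 ++ l2) g z| ≤ C * bz d A z ^ ((2 : ℝ) - d - (l1 ++ l2).length))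
    (hf : ∀ s, s.Sublist l2 → ∃ C : ℝ, 0 < C ∧ ∀ z, |dl s f z| ≤
      C * (bz d A z ^ (-(d : ℝ) - p - s.length) * Real.log (bz d A z) ^ α)) :
    ∃ C L : ℝ, 0 < C ∧ ∀ ℓ, L ≤ bz d A ℓ → ∃ S : ℝ,
      HasSum (fun m => dl (l1 ++ l2) g (ℓ - m) * f m) S ∧
      |S - ∑ n ∈ Finset.range ((p + 1) / 2), ∑ i ∈ Finset.range (p - 2 * n),
        dl ((l1 ++ l2).map (lat d A)) (aContract i (mom d A f i) (γ n)) (lat d A ℓ)| ≤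
        C * (bz d A ℓ ^ ((2 : ℝ) - d - p - (l1 ++ l2).length) * Real.log (bz d A ℓ) ^ (α + 1)) := by
  have hf0 : ∃ C : ℝ, 0 < C ∧ ∀ z, |f z| ≤
      C * (bz d A z ^ (-(d : ℝ) - p) * Real.log (bz d A z) ^ α) := by
    simpa [dl_nil] using hf [] (List.nil_sublist _)
  have hl : l1 ++ l2 ≠ [] := by
    intro h
    have := congrArg List.length h
    simp only [List.length_append, List.length_nil] at this
    omega
  obtain ⟨C1, L1, hC1, hn⟩ := near d hd A hA g f p α l1 l2 hl1 hg1 hf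
  obtain ⟨C2, L2, hC2, hfar⟩ := far d hd A hA (l1 ++ l2) hl g f γ p α hγ hdec happ hg hf0
  refine ⟨C1 + C2, max L1 L2, by positivity, fun ℓ hℓ => ?_⟩
  obtain ⟨hn1, hn2⟩ := hn ℓ ((le_max_left _ _).trans hℓ)
  obtain ⟨hf1, hf2⟩ := abs_tsum_le (hfar ℓ ((le_max_right _ _).trans hℓ))
  have h3 : HasSum (fun m => ∑ n ∈ Finset.range ((p + 1) / 2), ∑ i ∈ Finset.range (p - 2 * n),
      tay d A (l1 ++ l2) (γ n) i ℓ m * f m) (∑ n ∈ Finset.range ((p + 1) / 2),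
      ∑ i ∈ Finset.range (p - 2 * n),
        dl ((l1 ++ l2).map (lat d A)) (aContract i (mom d A f i) (γ n)) (lat d A ℓ)) := by
    apply hasSum_sum
    intro n _
    apply hasSum_sum
    intro i hi
    exact tay_tsum d A hA f p α hf0 i (by have := Finset.mem_range.1 hi; omega) _ _ _
  have h4 := (hn1.hasSum.add hf1.hasSum).add h3
  refine ⟨_, (by
    convert h4 using 1
    funext m
    simp only [Finset.sum_mul]
    ring), ?_⟩
  · rw [add_sub_cancel_right, add_mul]
    exact (abs_add_le _ _).trans (add_le_add hn2 hf2)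

theorem abs_le_enorm {n : ℕ} (v : Vec n) (i : Fin n) : |v i| ≤ enorm v := by
  unfold enorm
  apply Real.abs_le_sqrt
  exact Finset.single_le_sum (f := fun i => v i ^ 2) (fun i _ => sq_nonneg _) (Finset.mem_univ i)

theorem sqrt_sum_sq_le {ι : Type} [Fintype ι] (v : ι → ℝ) (hv : ∀ i, 0 ≤ v i) :
    Real.sqrt (∑ i, v i ^ 2) ≤ ∑ i, v i := by
  rw [Real.sqrt_le_iff]
  exact ⟨Finset.sum_nonneg fun i _ => hv i, Finset.sum_sq_le_sq_sum_of_nonneg fun i _ => hv i⟩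

theorem enorm_le_sum {n : ℕ} (v : Vec n) : enorm v ≤ ∑ i, |v i| := by
  have := sqrt_sum_sq_le (fun i => |v i|) (fun i => abs_nonneg _)
  simp only [sq_abs] at this
  exact this

theorem enorm_nn {n : ℕ} (v : Vec n) : 0 ≤ enorm v := Real.sqrt_nonneg _

theorem norm_le_enorm {n : ℕ} (v : Vec n) : ‖v‖ ≤ enorm v :=
  (pi_norm_le_iff_of_nonneg (enorm_nn v)).2 fun i => abs_le_enorm v i

theorem enorm_le {n : ℕ} (v : Vec n) : enorm v ≤ n * ‖v‖ := by
  refine (enorm_le_sum v).trans ?_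
  calc _ ≤ ∑ _i : Fin n, ‖v‖ := Finset.sum_le_sum fun i _ => norm_le_pi_norm v i
    _ = _ := by simp

theorem ang_cmp (d : ℕ) (A : Matrix (Fin d) (Fin d) ℝ) (a : ℝ) (α : ℕ) :
    ∃ C : ℝ, 0 < C ∧ ∀ z, ang (lat d A z) ^ a * Real.log (ang (lat d A z)) ^ α ≤
      C * (bz d A z ^ a * Real.log (bz d A z) ^ α) ∧
      bz d A z ^ a * Real.log (bz d A z) ^ α ≤
      C * (ang (lat d A z) ^ a * Real.log (ang (lat d A z)) ^ α) := by
  have hd0 : (0 : ℝ) ≤ d := Nat.cast_nonneg _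
  obtain ⟨C, hC, h⟩ := comparable (d + 1) (by linarith) a α
  refine ⟨C, hC, fun z => ?_⟩
  have h1 := norm_le_enorm (lat d A z)
  have h2 := enorm_le (lat d A z)
  have h0 := norm_nonneg (lat d A z)
  have a1 : bz d A z ≤ ang (lat d A z) := by unfold bz ang; linarith
  have a2 : ang (lat d A z) ≤ (d + 1) * bz d A z := by unfold bz ang; nlinarith
  have a3 : 2 ≤ bz d A z := by unfold bz; linarith
  have a4 : bz d A z ≤ (d + 1) * ang (lat d A z) := by nlinarith
  exact ⟨h _ _ (by linarith) a3 a2 a4, h _ _ a3 (by linarith) a4 a2⟩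

theorem dl_lat_comp (d N : ℕ) (A : Matrix (Fin d) (Fin d) ℝ) (l : List (Fin d → ℤ))
    (v : Vec d → Vec N) (z : Fin d → ℤ) (i : Fin N) :
    dl l (fun y => v (lat d A y) i) z = (dl (l.map (lat d A)) v (lat d A z)) i := by
  rw [dl_comp]
  exact dl_map (Pi.evalAddMonoidHom (fun _ : Fin N => ℝ) i) l (fun y => v (lat d A y)) z

theorem ofFn_lat (d : ℕ) (A : Matrix (Fin d) (Fin d) ℝ) (l : List (Fin d → ℤ)) :
    List.ofFn (fun i : Fin l.length => lat d A (l.get i)) = l.map (lat d A) := by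
  conv_rhs => rw [← List.ofFn_get l, List.map_ofFn]
  rfl

theorem comp_le (d N : ℕ) (A : Matrix (Fin d) (Fin d) ℝ) (R : Finset (Vec d))
    (l : List (Fin d → ℤ)) (hl : ∀ ρ ∈ l, lat d A ρ ∈ R) (v : Vec d → Vec N) (z : Fin d → ℤ)
    (i : Fin N) : |dl l (fun y => v (lat d A y) i) z| ≤ DnormJ R l.length v (lat d A z) := by
  rw [dl_lat_comp, ← ofFn_lat, ← Dmulti_eq_dl]
  refine (abs_le_enorm _ i).trans ?_
  have key : ∀ ρs : Fin l.length → {x // x ∈ R},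
      enorm (Dmulti (fun i => (ρs i : Vec d)) v (lat d A z)) ≤ DnormJ R l.length v (lat d A z) := by
    intro ρs
    unfold DnormJ
    apply Real.le_sqrt_of_sq_le
    exact Finset.single_le_sum (f := fun ρs : Fin l.length → {x // x ∈ R} =>
      (enorm (Dmulti (fun i => (ρs i : Vec d)) v (lat d A z))) ^ 2) (fun _ _ => sq_nonneg _)
      (Finset.mem_univ ρs)
  exact key (fun i : Fin l.length => (⟨lat d A (l.get i), hl _ (l.get_mem i)⟩ : {x // x ∈ R}))

theorem DnormJ_bound (d N : ℕ) (A : Matrix (Fin d) (Fin d) ℝ) (R : Finset (Vec d))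
    (hR : ∀ ρ ∈ R, ρ ∈ Lattice d A) (v : Vec d → Vec N) (j : ℕ) (W : (Fin d → ℤ) → ℝ)
    (h : ∀ l : List (Fin d → ℤ), l.length = j → (∀ ρ ∈ l, lat d A ρ ∈ R) → ∀ i, ∃ C : ℝ, ∀ z,
      |dl l (fun y => v (lat d A y) i) z| ≤ C * W z) :
    ∃ C : ℝ, ∀ z, DnormJ R j v (lat d A z) ≤ C * W z := by
  have h1 : ∀ (ρs : Fin j → {x // x ∈ R}) (i : Fin N), ∃ C : ℝ, ∀ z,
      |Dmulti (fun i => (ρs i : Vec d)) v (lat d A z) i| ≤ C * W z := by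
    intro ρs i
    choose zs hzs using fun r => hR (ρs r : Vec d) (ρs r).2
    obtain ⟨C, hC⟩ := h (List.ofFn zs) (by simp) (by
      intro ρ hρ
      rw [List.mem_ofFn] at hρ
      obtain ⟨r, rfl⟩ := hρ
      rw [lat_apply, hzs]; exact (ρs r).2) i
    refine ⟨C, fun z => ?_⟩
    have := hC z
    rw [dl_lat_comp, List.map_ofFn] at this
    rw [Dmulti_eq_dl]
    have e : (fun i => (ρs i : Vec d)) = (lat d A) ∘ zs := funext fun r => (hzs r).symm
    rw [e]
    exact this
  choose Cc hCc using h1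
  refine ⟨∑ ρs, ∑ i, Cc ρs i, fun z => ?_⟩
  unfold DnormJ
  refine (sqrt_sum_sq_le _ (fun _ => enorm_nn _)).trans ?_
  rw [Finset.sum_mul]
  apply Finset.sum_le_sum
  intro ρs _
  refine (enorm_le_sum _).trans ?_
  rw [Finset.sum_mul]
  exact Finset.sum_le_sum fun i _ => hCc ρs i z

/-- interaction range in index coordinates -/
def Rzs (d : ℕ) (A : Matrix (Fin d) (Fin d) ℝ) (hA : IsUnit A.det) (R : Finset (Vec d)) :
    Finset (Fin d → ℤ) := R.preimage (lat d A) ((lat_inj d A hA).injOn)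

theorem mem_Rzs (d : ℕ) (A : Matrix (Fin d) (Fin d) ℝ) (hA : IsUnit A.det) (R : Finset (Vec d))
    (z : Fin d → ℤ) : z ∈ Rzs d A hA R ↔ lat d A z ∈ R := by
  unfold Rzs; rw [Finset.mem_preimage]

theorem sum_Rzs {M : Type} [AddCommMonoid M] (d : ℕ) (A : Matrix (Fin d) (Fin d) ℝ) (hA : IsUnit A.det)
    (R : Finset (Vec d)) (hR : ∀ ρ ∈ R, ρ ∈ Lattice d A) (F : Vec d → M) :
    ∑ ρ ∈ R, F ρ = ∑ z ∈ Rzs d A hA R, F (lat d A z) := by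
  unfold Rzs
  rw [Finset.sum_preimage]
  intro x hx hx2
  exact absurd (hR x hx) hx2

theorem Hop_eq (d N : ℕ) (A : Matrix (Fin d) (Fin d) ℝ) (hA : IsUnit A.det)
    (R : Finset (Vec d)) (hR : ∀ ρ ∈ R, ρ ∈ Lattice d A) (C : Vec d → Vec d → Fin N → Fin N → ℝ)
    (u : Vec d → Vec N) (m : Fin d → ℤ) (i : Fin N) :
    Hop d N R C u (lat d A m) i = Hz (Rzs d A hA R) (fun σ ρ => C (lat d A σ) (lat d A ρ))
      (fun y => u (lat d A y)) m i := by
  unfold Hop Hz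
  rw [sum_Rzs d A hA R hR, Finset.sum_apply]
  apply Finset.sum_congr rfl
  intro σ _
  rw [sum_Rzs d A hA R hR, Finset.sum_apply]
  apply Finset.sum_congr rfl
  intro ρ _
  simp only [Pi.sub_apply, mulV, D1, map_add, map_sub]
  rw [← Finset.sum_sub_distrib]
  apply Finset.sum_congr rfl
  intro k _
  ring

theorem span_Rzs (d : ℕ) (A : Matrix (Fin d) (Fin d) ℝ) (hA : IsUnit A.det)
    (R : Finset (Vec d)) (hR : ∀ ρ ∈ R, ρ ∈ Lattice d A)
    (hRspan : ∀ x ∈ Lattice d A, ∃ c : Vec d → ℤ, x = ∑ ρ ∈ R, (c ρ : ℝ) • ρ) :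
    AddSubgroup.closure (Rzs d A hA R : Set (Fin d → ℤ)) = ⊤ := by
  rw [eq_top_iff]
  intro z _
  obtain ⟨c, hc⟩ := hRspan (lat d A z) ⟨z, rfl⟩
  have h1 : z = ∑ ρ ∈ Rzs d A hA R, c (lat d A ρ) • ρ := by
    apply lat_inj d A hA
    rw [hc, sum_Rzs d A hA R hR, map_sum]
    apply Finset.sum_congr rfl
    intro ρ _
    rw [map_zsmul, Int.cast_smul_eq_zsmul]
  rw [h1]
  apply AddSubgroup.sum_mem
  intro ρ hρ
  exact AddSubgroup.zsmul_mem _ (AddSubgroup.subset_closure hρ) _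

theorem DnormJ_le_mat (d N : ℕ) (R : Finset (Vec d)) (j : ℕ) (G : Vec d → Fin N → Fin N → ℝ) (k : Fin N)
    (x : Vec d) : DnormJ R j (col G k) x ≤ DnormJmat R j G x := by
  unfold DnormJmat
  apply Real.le_sqrt_of_sq_le
  exact Finset.single_le_sum (f := fun k => (DnormJ R j (col G k) x) ^ 2) (fun _ _ => sq_nonneg _)
    (Finset.mem_univ k)

theorem mk_GSet (d N : ℕ) (hd : 2 ≤ d) (A : Matrix (Fin d) (Fin d) ℝ) (hA : IsUnit A.det)
    (R : Finset (Vec d)) (hR : ∀ ρ ∈ R, ρ ∈ Lattice d A) (hRsym : ∀ ρ ∈ R, -ρ ∈ R)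
    (hRspan : ∀ x ∈ Lattice d A, ∃ c : Vec d → ℤ, x = ∑ ρ ∈ R, (c ρ : ℝ) • ρ)
    (C : Vec d → Vec d → Fin N → Fin N → ℝ) (hCsym : ∀ σ ρ i j, C σ ρ i j = C ρ σ j i)
    (G : Vec d → Fin N → Fin N → ℝ) (hG : IsLatticeGreen d N A R C G) :
    GSet d N A (Rzs d A hA R) (fun σ ρ => C (lat d A σ) (lat d A ρ)) (fun z => G (lat d A z)) where
  hd := hd
  hA := hA
  neg ρ hρ := by
    rw [mem_Rzs] at *
    rw [map_neg]; exact hRsym _ hρ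
  span := span_Rzs d A hA R hR hRspan
  hC σ ρ i j := hCsym _ _ _ _
  hg k m i := by
    have h1 := congrFun (hG.1 k m) i
    rw [← lat_apply, Hop_eq d N A hA R hR] at h1
    rw [show (fun y i => G (lat d A y) i k) = fun y => col G k (lat d A y) from rfl, h1]
    by_cases hm : m = 0
    · subst hm
      simp [Pi.single_apply]
    · have : lat d A m ≠ 0 := fun h => hm (lat_inj d A hA (by rw [h, map_zero]))
      simp [hm, this]
  decay l hl hlR i k := by
    obtain ⟨c, hc⟩ := hG.2 l.length (List.length_pos_iff.2 hl)
    obtain ⟨K, hK, hcmp⟩ := ang_cmp d A ((2 : ℝ) - d - l.length) 0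
    have hb := brk_bz d A hA
    refine ⟨(|c| + 1) * K, by positivity, fun z => ?_⟩
    have h1 := comp_le d N A R l (fun ρ hρ => (mem_Rzs d A hA R ρ).1 (hlR ρ hρ)) (col G k) z i
    have h2 := DnormJ_le_mat d N R l.length G k (lat d A z)
    have h3 := hc z
    rw [← lat_apply] at h3
    have h4 := (hcmp z).1
    simp only [pow_zero, mul_one] at h4
    have h5 : 0 ≤ ang (lat d A z) ^ ((2 : ℝ) - d - l.length) :=
      Real.rpow_nonneg (by have := enorm_nn (lat d A z); unfold ang; linarith) _
    calc _ ≤ c * ang (lat d A z) ^ ((2 : ℝ) - d - l.length) := h1.trans (h2.trans h3)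
      _ ≤ (|c| + 1) * ang (lat d A z) ^ ((2 : ℝ) - d - l.length) := by
          gcongr; have := le_abs_self c; linarith
      _ ≤ (|c| + 1) * (K * bz d A z ^ ((2 : ℝ) - d - l.length)) := by gcongr
      _ = _ := by ring

theorem H1_tendsto (d N : ℕ) (A : Matrix (Fin d) (Fin d) ℝ) (hA : IsUnit A.det)
    (R : Finset (Vec d)) (u : Vec d → Vec N) (hu : InH1 A R u) (k : Fin N) (ρ : Fin d → ℤ)
    (hρ : ρ ∈ Rzs d A hA R) :
    Tendsto (fun m => u (lat d A (m + ρ)) k - u (lat d A m) k) cofinite (𝓝 0) := by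
  have h1 : Tendsto (fun z => Real.sqrt (Dnorm1Sq R u (latticePt d A z))) cofinite (𝓝 0) := by
    have := (Real.continuous_sqrt.tendsto 0).comp hu.tendsto_cofinite_zero
    rwa [Real.sqrt_zero] at this
  refine squeeze_zero_norm (fun m => ?_) h1
  have h2 : u (lat d A (m + ρ)) k - u (lat d A m) k = D1 (lat d A ρ) u (lat d A m) k := by
    rw [map_add]; rfl
  rw [h2]
  refine (abs_le_enorm _ k).trans ?_
  apply Real.le_sqrt_of_sq_le
  exact Finset.single_le_sum (f := fun ρ => (enorm (D1 ρ u (lat d A m))) ^ 2) (fun _ _ => sq_nonneg _)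
    ((mem_Rzs d A hA R ρ).1 hρ)

theorem enorm_smul {n : ℕ} (t : ℝ) (ht : 0 < t) (v : Vec n) : enorm (t • v) = t * enorm v := by
  unfold enorm
  have : ∑ i, (t • v) i ^ 2 = t ^ 2 * ∑ i, v i ^ 2 := by
    rw [Finset.mul_sum]
    apply Finset.sum_congr rfl
    intro i _
    simp only [Pi.smul_apply, smul_eq_mul]; ring
  rw [this, Real.sqrt_mul (sq_nonneg t), Real.sqrt_sq ht.le]

theorem kernel_smooth (d N : ℕ) (A : Matrix (Fin d) (Fin d) ℝ) (R : Finset (Vec d))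
    (G : Vec d → Fin N → Fin N → ℝ) (Gn : ℕ → Vec d → Fin N → Fin N → ℝ)
    (hGn : KernelFamily d N A R G Gn) (i0 k : Fin N) (n : ℕ) :
    ContDiffOn ℝ (⊤ : ℕ∞) (fun x => Gn n x i0 k) {x : Vec d | x ≠ 0} := by
  have h1 := hGn.1 n
  rw [contDiffOn_pi] at h1
  have h2 := h1 i0
  rw [contDiffOn_pi] at h2
  exact h2 k

theorem kernel_decay (d N : ℕ) (hd : 2 ≤ d) (A : Matrix (Fin d) (Fin d) ℝ) (R : Finset (Vec d))
    (G : Vec d → Fin N → Fin N → ℝ) (Gn : ℕ → Vec d → Fin N → Fin N → ℝ)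
    (hGn : KernelFamily d N A R G Gn) (i0 k : Fin N) (n : ℕ) (r : ℕ) (hr : 1 ≤ r) :
    ∃ C : ℝ, 0 < C ∧ ∀ x : Vec d, x ≠ 0 →
      ‖iteratedFDeriv ℝ r (fun x => Gn n x i0 k) x‖ ≤ C * ‖x‖ ^ ((2 : ℝ) - 2 * n - d - r) := by
  have hs := kernel_smooth d N A R G Gn hGn i0 k n
  by_cases hc : 1 ≤ n ∨ 3 ≤ d
  · have hh := hGn.2.1 n hc
    exact hom_bound _ hs ((2 : ℝ) - 2 * n - d) (fun _ => 0) (fun t ht x hx => by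
      rw [add_zero]; exact hh t ht x hx i0 k) r hr
  · have hn : n = 0 := by omega
    have hd2 : d = 2 := by omega
    obtain ⟨M, φ, hφ, hφ0, hφe⟩ := hGn.2.2.1 hd2
    have he : (2 : ℝ) - 2 * n - d = 0 := by rw [hn, hd2]; norm_num
    rw [he]
    refine hom_bound _ hs 0 (fun t => M i0 k * Real.log t) (fun t ht x hx => ?_) r hr
    subst hn
    have htx : t • x ≠ 0 := smul_ne_zero ht.ne' hx
    have hex : enorm x ≠ 0 := by
      have := norm_le_enorm x
      have := norm_pos_iff.2 hx
      linarith
    rw [hφe _ htx, hφe _ hx, enorm_smul t ht, Real.log_mul ht.ne' hex, hφ0 t ht x hx, Real.rpow_zero]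
    ring

theorem abs_le_mnorm {N : ℕ} (M : Fin N → Fin N → ℝ) (i k : Fin N) : |M i k| ≤ mnorm M := by
  unfold mnorm
  apply Real.abs_le_sqrt
  calc M i k ^ 2 ≤ ∑ j, M i j ^ 2 :=
        Finset.single_le_sum (f := fun j => M i j ^ 2) (fun _ _ => sq_nonneg _) (Finset.mem_univ k)
    _ ≤ _ := Finset.single_le_sum (f := fun i => ∑ j, M i j ^ 2)
        (fun _ _ => Finset.sum_nonneg fun _ _ => sq_nonneg _) (Finset.mem_univ i)

theorem kernel_app0 (d N : ℕ) (A : Matrix (Fin d) (Fin d) ℝ) (hA : IsUnit A.det) (R : Finset (Vec d))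
    (G : Vec d → Fin N → Fin N → ℝ) (Gn : ℕ → Vec d → Fin N → Fin N → ℝ)
    (hGn : KernelFamily d N A R G Gn) (i0 k : Fin N) (q : ℕ)
    (l : List (Fin d → ℤ)) (hlR : ∀ ρ ∈ l, ρ ∈ Rzs d A hA R) :
    ∃ C L : ℝ, 0 < C ∧ ∀ z, L ≤ bz d A z →
      |dl l (fun z => G (lat d A z) i0 k - ∑ n ∈ Finset.range (q + 1), Gn n (lat d A z) i0 k) z| ≤
        C * bz d A z ^ (-(2 : ℝ) * q - d - l.length) := by
  obtain ⟨c, hc⟩ := hGn.2.2.2 l.length q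
  obtain ⟨K, hK, hcmp⟩ := ang_cmp d A (-(2 : ℝ) * q - d - l.length) 0
  refine ⟨(|c| + 1) * K, rad (l.map (lat d A)) + 3, by positivity, fun z hz => ?_⟩
  set T : Vec d → Fin N → Fin N → ℝ := fun x i k => G x i k - ∑ n ∈ Finset.range (q + 1), Gn n x i k with hT
  have h1 : dl l (fun z => T (lat d A z) i0 k) z = (dl (l.map (lat d A)) T (lat d A z)) i0 k := by
    rw [dl_comp]
    exact dl_map ((Pi.evalAddMonoidHom (fun _ : Fin N => ℝ) k).comp
      (Pi.evalAddMonoidHom (fun _ : Fin N => Fin N → ℝ) i0)) l (fun y => T (lat d A y)) z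
  have h2 := hc (fun i : Fin l.length => (⟨lat d A (l.get i),
    (mem_Rzs d A hA R _).1 (hlR _ (l.get_mem i))⟩ : {x // x ∈ R})) z (by
      intro S hS
      have h3 : ‖lat d A z‖ ≤ rad (l.map (lat d A)) := by
        have h4 : lat d A z = -∑ i ∈ S, lat d A (l.get i) := eq_neg_of_add_eq_zero_left hS
        rw [h4, norm_neg, rad, ← ofFn_lat, List.map_ofFn, List.sum_ofFn]
        refine (norm_sum_le _ _).trans ?_
        exact Finset.sum_le_sum_of_subset_of_nonneg (Finset.subset_univ S) (fun _ _ _ => norm_nonneg _)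
      unfold bz at hz
      linarith)
  rw [Dmulti_eq_dl] at h2
  have e : List.ofFn (fun i : Fin l.length => lat d A (l.get i)) = l.map (lat d A) := ofFn_lat d A l
  have h3 : |dl l (fun z => T (lat d A z) i0 k) z| ≤ c * ang (lat d A z) ^ (-(2 : ℝ) * q - d - l.length) := by
    rw [h1, ← e]
    exact (abs_le_mnorm _ i0 k).trans h2
  have h4 := (hcmp z).1
  simp only [pow_zero, mul_one] at h4
  have h5 : 0 ≤ ang (lat d A z) ^ (-(2 : ℝ) * q - d - l.length) :=
    Real.rpow_nonneg (by have := enorm_nn (lat d A z); unfold ang; linarith) _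
  calc _ ≤ c * ang (lat d A z) ^ (-(2 : ℝ) * q - d - l.length) := h3
    _ ≤ (|c| + 1) * ang (lat d A z) ^ (-(2 : ℝ) * q - d - l.length) := by
        gcongr; have := le_abs_self c; linarith
    _ ≤ (|c| + 1) * (K * bz d A z ^ (-(2 : ℝ) * q - d - l.length)) := by gcongr
    _ = _ := by ring

theorem kernel_app (d N : ℕ) (A : Matrix (Fin d) (Fin d) ℝ) (hA : IsUnit A.det) (R : Finset (Vec d))
    (G : Vec d → Fin N → Fin N → ℝ) (Gn : ℕ → Vec d → Fin N → Fin N → ℝ)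
    (hGn : KernelFamily d N A R G Gn) (i0 k : Fin N) (p : ℕ)
    (l : List (Fin d → ℤ)) (hlR : ∀ ρ ∈ l, ρ ∈ Rzs d A hA R)
    (hg : ∃ C : ℝ, 0 < C ∧ ∀ z, |dl l (fun z => G (lat d A z) i0 k) z| ≤
      C * bz d A z ^ ((2 : ℝ) - d - l.length)) :
    ∃ C L : ℝ, 0 < C ∧ ∀ z, L ≤ bz d A z →
      |dl l (fun z => G (lat d A z) i0 k - ∑ n ∈ Finset.range ((p + 1) / 2), Gn n (lat d A z) i0 k) z| ≤
        C * bz d A z ^ ((2 : ℝ) - d - p - l.length) := by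
  rcases Nat.eq_zero_or_pos p with rfl | hp
  · obtain ⟨C, hC, h⟩ := hg
    refine ⟨C, 0, hC, fun z _ => ?_⟩
    simpa using h z
  · obtain ⟨C, L, hC, h⟩ := kernel_app0 d N A hA R G Gn hGn i0 k ((p - 1) / 2) l hlR
    refine ⟨C, L, hC, fun z hz => ?_⟩
    have h1 := h z hz
    rw [show (p - 1) / 2 + 1 = (p + 1) / 2 by omega] at h1
    refine h1.trans ?_
    have hb := (brk_bz d A hA).two_le z
    apply mul_le_mul_of_nonneg_left _ hC.le
    apply Real.rpow_le_rpow_of_exponent_le (by linarith)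
    have h2 : p ≤ 2 * ((p - 1) / 2) + 2 := by omega
    have h3 : (p : ℝ) ≤ 2 * (((p - 1) / 2 : ℕ) : ℝ) + 2 := by exact_mod_cast h2
    linarith

theorem vector_main
    (d N : ℕ) (hd : 2 ≤ d)
    (A : Matrix (Fin d) (Fin d) ℝ) (hA : IsUnit A.det)
    (R : Finset (Vec d))
    (hRlat : ∀ ρ ∈ R, ρ ∈ Lattice d A)
    (hRsym : ∀ ρ ∈ R, -ρ ∈ R)
    (hRspan : ∀ x ∈ Lattice d A, ∃ c : Vec d → ℤ, x = ∑ ρ ∈ R, (c ρ : ℝ) • ρ)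
    (C : Vec d → Vec d → Fin N → Fin N → ℝ)
    (hCsym : ∀ σ ρ i j, C σ ρ i j = C ρ σ j i)
    (G : Vec d → Fin N → Fin N → ℝ) (hG : IsLatticeGreen d N A R C G)
    (Gn : ℕ → Vec d → Fin N → Fin N → ℝ) (hGn : KernelFamily d N A R G Gn)
    (u : Vec d → Vec N) (hu : InH1 A R u) (p α : ℕ)
    (l1 l2 : List (Fin d → ℤ)) (hl1 : l1.length = 1 ∨ l1.length = 2)
    (hlR : ∀ ρ ∈ l1 ++ l2, lat d A ρ ∈ R)
    (hf : ∀ k, ∀ s, s.Sublist l2 → ∃ c : ℝ, 0 < c ∧ ∀ z,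
      |dl s (fun y => Hop d N R C u (lat d A y) k) z| ≤
        c * (bz d A z ^ (-(d : ℝ) - p - s.length) * Real.log (bz d A z) ^ α)) (i0 : Fin N) :
    ∃ c : ℝ, ∀ z, |dl (l1 ++ l2) (fun y => u (lat d A y) i0 -
        if lat d A y = 0 then 0 else
          ∑ k : Fin N, ∑ n ∈ Finset.range ((p + 1) / 2), ∑ i ∈ Finset.range (p - 2 * n),
            aContract i (mom d A (fun y => Hop d N R C u (lat d A y) k) i)
              (fun x => Gn n x i0 k) (lat d A y)) z| ≤
      c * (bz d A z ^ ((2 : ℝ) - d - p - (l1 ++ l2).length) * Real.log (bz d A z) ^ (α + 1)) := by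
  have hb := brk_bz d A hA
  have HG := mk_GSet d N hd A hA R hRlat hRsym hRspan C hCsym G hG
  have hl : l1 ++ l2 ≠ [] := by
    intro h
    have := congrArg List.length h
    simp only [List.length_append, List.length_nil] at this
    omega
  have hl1' : l1 ≠ [] := by
    rintro rfl
    simp at hl1
  have hlR' : ∀ ρ ∈ l1 ++ l2, ρ ∈ Rzs d A hA R := fun ρ hρ => (mem_Rzs d A hA R ρ).2 (hlR ρ hρ)
  have hlR1 : ∀ ρ ∈ l1, ρ ∈ Rzs d A hA R := fun ρ hρ => hlR' ρ (List.mem_append_left _ hρ)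
  -- scalar estimates
  have hsc := fun k : Fin N => scalar_main d hd A hA l1 l2 hl1 (fun z => G (lat d A z) i0 k)
    (fun y => Hop d N R C u (lat d A y) k) (fun n x => Gn n x i0 k) p α
    (fun n => kernel_smooth d N A R G Gn hGn i0 k n)
    (fun n r hr => kernel_decay d N hd A R G Gn hGn i0 k n r hr)
    (kernel_app d N A hA R G Gn hGn i0 k p (l1 ++ l2) hlR' (HG.decay _ hl hlR' i0 k))
    (HG.decay _ hl1' hlR1 i0 k) (HG.decay _ hl hlR' i0 k) (hf k)
  choose Cs Ls hCs hsc using hsc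
  -- convolution representation
  have hf0 : ∃ c : ℝ, ∀ m i, |Hz (Rzs d A hA R) (fun σ ρ => C (lat d A σ) (lat d A ρ))
      (fun y => u (lat d A y)) m i| ≤ c * (bz d A m ^ (-(d : ℝ)) * Real.log (bz d A m) ^ α) := by
    choose c hc h using fun k => hf k [] (List.nil_sublist _)
    refine ⟨∑ k, c k, fun m i => ?_⟩
    rw [← Hop_eq d N A hA R hRlat]
    have h1 := h i m
    simp only [dl_nil, List.length_nil, Nat.cast_zero, sub_zero] at h1
    have hlog : 0 < Real.log (bz d A m) := Real.log_pos (by linarith [hb.two_le m])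
    have hbm := hb.pos m
    refine h1.trans ?_
    have h2 : c i ≤ ∑ k, c k := Finset.single_le_sum (fun k _ => (hc k).le) (Finset.mem_univ i)
    have h3 : bz d A m ^ (-(d : ℝ) - p) ≤ bz d A m ^ (-(d : ℝ)) := by
      apply Real.rpow_le_rpow_of_exponent_le (by linarith [hb.two_le m])
      have : (0 : ℝ) ≤ p := Nat.cast_nonneg _
      linarith
    have h4 := (hc i).le
    gcongr
    exact h4.trans h2
  obtain ⟨c0, hf0⟩ := hf0
  have hconv := HG.conv (fun y => u (lat d A y))
    (fun k ρ hρ => H1_tendsto d N A hA R u hu k ρ hρ) α c0 hf0 (l1 ++ l2) hl hlR' i0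
  have hlogz : ∀ z, 0 < Real.log (bz d A z) := fun z => Real.log_pos (by linarith [hb.two_le z])
  have hW : ∀ z, 0 < bz d A z ^ ((2 : ℝ) - d - p - (l1 ++ l2).length) * Real.log (bz d A z) ^ (α + 1) :=
    fun z => mul_pos (Real.rpow_pos_of_pos (hb.pos z) _) (pow_pos (hlogz z) _)
  refine hb.extend _ _ hW (max (∑ k, |Ls k|) (rad ((l1 ++ l2).map (lat d A)) + 3)) (∑ k, Cs k) ?_
  intro z hz
  have hz1 := (le_max_left _ _).trans hz
  have hz2 := (le_max_right _ _).trans hz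
  have hLs : ∀ k, Ls k ≤ bz d A z := fun k =>
    (le_abs_self _).trans ((Finset.single_le_sum (f := fun k => |Ls k|) (fun k _ => abs_nonneg _)
      (Finset.mem_univ k)).trans hz1)
  choose S hS hSb using fun k => hsc k z (hLs k)
  have hSeq : dl (l1 ++ l2) (fun y => u (lat d A y) i0) z = ∑ k, S k := by
    have h1 := hconv z
    have h2 := hasSum_sum (s := Finset.univ) (fun k _ => hS k)
    refine h1.unique ?_
    convert h2 using 3
    rw [Hop_eq d N A hA R hRlat]
  have hdl : dl (l1 ++ l2) (fun y => u (lat d A y) i0 -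
        if lat d A y = 0 then 0 else
          ∑ k : Fin N, ∑ n ∈ Finset.range ((p + 1) / 2), ∑ i ∈ Finset.range (p - 2 * n),
            aContract i (mom d A (fun y => Hop d N R C u (lat d A y) k) i)
              (fun x => Gn n x i0 k) (lat d A y)) z =
      ∑ k, (S k - ∑ n ∈ Finset.range ((p + 1) / 2), ∑ i ∈ Finset.range (p - 2 * n),
        dl ((l1 ++ l2).map (lat d A)) (aContract i (mom d A (fun y => Hop d N R C u (lat d A y) k) i)
          (fun x => Gn n x i0 k)) (lat d A z)) := by
    rw [dl_congr (l1 ++ l2) _ (fun y => u (lat d A y) i0 -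
          ∑ k : Fin N, ∑ n ∈ Finset.range ((p + 1) / 2), ∑ i ∈ Finset.range (p - 2 * n),
            aContract i (mom d A (fun y => Hop d N R C u (lat d A y) k) i)
              (fun x => Gn n x i0 k) (lat d A y)) z ?_]
    · rw [dl_sub, hSeq, Finset.sum_sub_distrib, dl_sum]
      congr 1
      apply Finset.sum_congr rfl
      intro k _
      rw [dl_sum]
      apply Finset.sum_congr rfl
      intro n _
      rw [dl_sum]
      apply Finset.sum_congr rfl
      intro i _
      rw [dl_comp]
    · intro y hy
      have h1 := st_norm (fun y => ‖lat d A y‖) (by simp) (fun _ => norm_nonneg _)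
        (fun x y => by simp only [map_add]; exact norm_add_le _ _) (l1 ++ l2) y hy
      have h2 : rad ((l1 ++ l2).map (lat d A)) = ((l1 ++ l2).map (fun y => ‖lat d A y‖)).sum := by
        rw [rad, List.map_map]; rfl
      have h3 : lat d A (z + y) ≠ 0 := by
        intro h0
        rw [map_add] at h0
        have h4 := eq_neg_of_add_eq_zero_left h0
        have h5 : ‖lat d A z‖ = ‖lat d A y‖ := by rw [h4, norm_neg]
        simp only [bz] at hz2
        linarith
      rw [if_neg h3]
  rw [hdl, Finset.sum_mul]
  exact (Finset.abs_sum_le_sum_abs _ _).trans (Finset.sum_le_sum fun k _ => hSb k)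

theorem final_j
    (d N : ℕ) (hd : 2 ≤ d)
    (A : Matrix (Fin d) (Fin d) ℝ) (hA : IsUnit A.det)
    (R : Finset (Vec d))
    (hRlat : ∀ ρ ∈ R, ρ ∈ Lattice d A)
    (hRsym : ∀ ρ ∈ R, -ρ ∈ R)
    (hRspan : ∀ x ∈ Lattice d A, ∃ c : Vec d → ℤ, x = ∑ ρ ∈ R, (c ρ : ℝ) • ρ)
    (C : Vec d → Vec d → Fin N → Fin N → ℝ)
    (hCsym : ∀ σ ρ i j, C σ ρ i j = C ρ σ j i)
    (G : Vec d → Fin N → Fin N → ℝ) (hG : IsLatticeGreen d N A R C G)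
    (Gn : ℕ → Vec d → Fin N → Fin N → ℝ) (hGn : KernelFamily d N A R G Gn)
    (u : Vec d → Vec N) (hu : InH1 A R u) (p α : ℕ) (c : ℝ) (hc : 0 < c)
    (hbound : ∀ z : Fin d → ℤ,
      enorm (Hop d N R C u (latticePt d A z)) ≤
        c * ang (latticePt d A z) ^ (-(d : ℝ) - p) *
          Real.log (ang (latticePt d A z)) ^ α) (j : ℕ) (hj : 1 ≤ j)
    (hm : ∀ m : ℕ, 1 ≤ m → m ≤ j - 2 → ∀ z : Fin d → ℤ,
            DnormJ R m (Hop d N R C u) (latticePt d A z) ≤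
              c * ang (latticePt d A z) ^ (-(d : ℝ) - p - m) *
                Real.log (ang (latticePt d A z)) ^ α) :
    ∃ Cj : ℝ, ∀ z : Fin d → ℤ,
          DnormJ R j
            (fun ℓ i0 => u ℓ i0 -
              if ℓ = 0 then 0 else
                ∑ k : Fin N, ∑ n ∈ Finset.range ((p + 1) / 2),
                  ∑ i ∈ Finset.range (p - 2 * n),
                    aContract i (mom d A (fun y => Hop d N R C u (lat d A y) k) i)
                      (fun x => Gn n x i0 k) ℓ)
            (lat d A z) ≤
            Cj * (ang (lat d A z) ^ ((2 : ℝ) - d - p - j) *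
              Real.log (ang (lat d A z)) ^ (α + 1)) := by
  apply DnormJ_bound d N A R hRlat
  intro l hlen hlR i0
  have hsplit := List.take_append_drop 2 l
  have hl1 : (l.take 2).length = 1 ∨ (l.take 2).length = 2 := by
    rw [List.length_take]; omega
  obtain ⟨c1, h1⟩ := vector_main d N hd A hA R hRlat hRsym hRspan C hCsym G hG Gn hGn u hu p α
    (l.take 2) (l.drop 2) hl1 (by rw [hsplit]; exact hlR) (by
      intro k s hs
      obtain ⟨C', hC', hcmp⟩ := ang_cmp d A (-(d : ℝ) - p - s.length) α
      refine ⟨c * C', mul_pos hc hC', fun z => ?_⟩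
      have hsl := hs.length_le
      rw [List.length_drop] at hsl
      have key : |dl s (fun y => Hop d N R C u (lat d A y) k) z| ≤
          c * (ang (lat d A z) ^ (-(d : ℝ) - p - s.length) * Real.log (ang (lat d A z)) ^ α) := by
        rcases Nat.eq_zero_or_pos s.length with h0 | h0
        · have : s = [] := List.length_eq_zero_iff.1 h0
          subst this
          simp only [dl_nil, List.length_nil, Nat.cast_zero, sub_zero]
          refine (abs_le_enorm _ k).trans ?_
          rw [← mul_assoc]
          exact hbound z
        · refine (comp_le d N A R s (fun ρ hρ => hlR ρ (List.mem_of_mem_drop (hs.subset hρ)))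
            (Hop d N R C u) z k).trans ?_
          rw [← mul_assoc]
          exact hm s.length h0 (by omega) z
      refine key.trans ?_
      rw [mul_assoc]
      exact mul_le_mul_of_nonneg_left (hcmp z).1 hc.le) i0
  rw [hsplit, hlen] at h1
  obtain ⟨C', hC', hcmp⟩ := ang_cmp d A ((2 : ℝ) - d - p - j) (α + 1)
  refine ⟨|c1| * C', fun z => (h1 z).trans ?_⟩
  have hb : 2 ≤ bz d A z := (brk_bz d A hA).two_le z
  have hW : 0 ≤ bz d A z ^ ((2 : ℝ) - d - p - j) * Real.log (bz d A z) ^ (α + 1) :=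
    mul_nonneg (Real.rpow_nonneg (by linarith) _) (pow_nonneg (Real.log_nonneg (by linarith)) _)
  refine (mul_le_mul_of_nonneg_right (le_abs_self c1) hW).trans ?_
  rw [mul_assoc]
  exact mul_le_mul_of_nonneg_left (hcmp z).2 (abs_nonneg _)

/-- Theorem: continuum multipole expansion with localized
remainder. -/
theorem continuum_multipole_expansion_remainder
    (d N : ℕ) (hd : 2 ≤ d)
    (A : Matrix (Fin d) (Fin d) ℝ) (hA : IsUnit A.det)
    (R : Finset (Vec d)) (hR0 : (0 : Vec d) ∉ R)
    (hRlat : ∀ ρ ∈ R, ρ ∈ Lattice d A)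
    (hRsym : ∀ ρ ∈ R, -ρ ∈ R)
    (hRspan : ∀ x ∈ Lattice d A, ∃ c : Vec d → ℤ, x = ∑ ρ ∈ R, (c ρ : ℝ) • ρ)
    (C : Vec d → Vec d → Fin N → Fin N → ℝ)
    (hCsym : ∀ σ ρ i j, C σ ρ i j = C ρ σ j i)
    (hCpt : ∀ σ ρ, C σ ρ = C (-σ) (-ρ))
    (hstab : IsStable d N A R C)
    (G : Vec d → Fin N → Fin N → ℝ) (hG : IsLatticeGreen d N A R C G)
    (Gn : ℕ → Vec d → Fin N → Fin N → ℝ) (hGn : KernelFamily d N A R G Gn)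
    (u : Vec d → Vec N) (hu : InH1 A R u)
    (p α : ℕ) (c : ℝ) (hc : 0 < c)
    (hbound : ∀ z : Fin d → ℤ,
      enorm (Hop d N R C u (latticePt d A z)) ≤
        c * ang (latticePt d A z) ^ (-(d : ℝ) - p) *
          Real.log (ang (latticePt d A z)) ^ α) :
    ∃ a : (i : ℕ) → ℕ → Fin N → (Fin i → Fin d) → ℝ,
      (∀ (i n : ℕ) (k : Fin N), SymArr (a i n k)) ∧
      (∀ j : ℕ, j = 1 ∨ j = 2 → ∃ Cj : ℝ, ∀ z : Fin d → ℤ,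
          DnormJ R j
            (fun ℓ i0 => u ℓ i0 -
              if ℓ = 0 then 0 else
                ∑ k : Fin N, ∑ n ∈ Finset.range ((p + 1) / 2),
                  ∑ i ∈ Finset.range (p - 2 * n),
                    aContract i (a i n k) (fun x => Gn n x i0 k) ℓ)
            (latticePt d A z) ≤
            Cj * ang (latticePt d A z) ^ ((2 : ℝ) - d - p - j) *
              Real.log (ang (latticePt d A z)) ^ (α + 1)) ∧
      (∀ j : ℕ, 3 ≤ j →
        (∀ m : ℕ, 1 ≤ m → m ≤ j - 2 → ∀ z : Fin d → ℤ,
            DnormJ R m (Hop d N R C u) (latticePt d A z) ≤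
              c * ang (latticePt d A z) ^ (-(d : ℝ) - p - m) *
                Real.log (ang (latticePt d A z)) ^ α) →
        ∃ Cj : ℝ, ∀ z : Fin d → ℤ,
          DnormJ R j
            (fun ℓ i0 => u ℓ i0 -
              if ℓ = 0 then 0 else
                ∑ k : Fin N, ∑ n ∈ Finset.range ((p + 1) / 2),
                  ∑ i ∈ Finset.range (p - 2 * n),
                    aContract i (a i n k) (fun x => Gn n x i0 k) ℓ)
            (latticePt d A z) ≤
            Cj * ang (latticePt d A z) ^ ((2 : ℝ) - d - p - j) *
              Real.log (ang (latticePt d A z)) ^ (α + 1)) := by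
  refine ⟨fun i _ k => mom d A (fun y => Hop d N R C u (lat d A y) k) i,
    fun i n k => mom_sym d A _ i, ?_, ?_⟩
  · intro j hj
    obtain ⟨Cj, hCj⟩ := final_j d N hd A hA R hRlat hRsym hRspan C hCsym G hG Gn hGn u hu p α c hc
      hbound j (by omega) (fun m h1 h2 => by omega)
    refine ⟨Cj, fun z => ?_⟩
    rw [mul_assoc]
    exact hCj z
  · intro j hj hm
    obtain ⟨Cj, hCj⟩ := final_j d N hd A hA R hRlat hRsym hRspan C hCsym G hG Gn hGn u hu p α c hc
      hbound j (by omega) hm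
    refine ⟨Cj, fun z => ?_⟩
    rw [mul_assoc]
    exact hCj z

end Defect
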